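/- arXiv:2411.07275 — 2 statements merged into one kernel-verified Lean document; each statement's English description precedes it below -/
import Mathlib

section
/- The inclusion problem for erasing pattern languages with regular constraints is undecidable: for every finite alphabet Σ with |Σ| ≥ 2 there is no algorithm that, given two patterns with regular constraints (α, r_α) and (β, r_β) over Σ, decides whether L_E(α, r_α) ⊆ L_E(β, r_β). Formally, the predicate 'L_E(α, r_α) ⊆ L_E(β, r_β)' on encoded input pairs is not a computable predicate; moreover this remains true when α and β are required to be terminal-free. -/
/-- Patterns over `Σ ∪ X` with variable set `X = ℕ`. -/
abbrev Pattern (σ : Type) := List (σ ⊕ ℕ)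

/-- Terminal-free patterns: finite words over the variable set `ℕ` alone. -/
abbrev TFPattern := List ℕ

/-- Applying a substitution (determined by its action on variables, and fixing every
terminal) to a pattern. -/
def applySub {σ : Type} (s : ℕ → List σ) : Pattern σ → List σ
  | [] => []
  | c :: p => Sum.elim (fun a => [a]) s c ++ applySub s p

/-- The set of variables occurring in a pattern. -/
def varsOf {σ : Type} (p : Pattern σ) : Set ℕ := {x | Sum.inr x ∈ p}

/-- A substitution is `r`-valid on `p` if every variable occurring in `p` is mapped into
its constraint language. -/
def Valid {σ : Type} (r : ℕ → Set (List σ)) (p : Pattern σ) (s : ℕ → List σ) : Prop :=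
  ∀ x ∈ varsOf p, s x ∈ r x

/-- The erasing constrained pattern language `L_E(p, r)`. -/
def LangE {σ : Type} (p : Pattern σ) (r : ℕ → Set (List σ)) : Set (List σ) :=
  {w | ∃ s, Valid r p s ∧ applySub s p = w}

/-- A regular constraint, given as a finite association list assigning regular
expressions to finitely many variables. -/
abbrev RegConstraint (σ : Type) := List (ℕ × RegularExpression σ)

/-- The constraint described by an association list: unlisted variables are
constrained to `Σ*`. -/
def constraintOf {σ : Type} (l : RegConstraint σ) : ℕ → Set (List σ) := fun x =>
  match l.lookup x with
  | some e => (e.matches' : Set (List σ))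
  | none => Set.univ

/-- A standard injective encoding of regular expressions into `ℕ`. -/
def encRE {σ : Type} [Encodable σ] : RegularExpression σ → ℕ
  | .zero => Nat.pair 0 0
  | .epsilon => Nat.pair 1 0
  | .char a => Nat.pair 2 (Encodable.encode a)
  | .plus r s => Nat.pair 3 (Nat.pair (encRE r) (encRE s))
  | .comp r s => Nat.pair 4 (Nat.pair (encRE r) (encRE s))
  | .star r => Nat.pair 5 (encRE r)

/-- A standard encoding of an input pair `((α, r_α), (β, r_β))` into `ℕ`. -/
def encodeInput {σ : Type} [Encodable σ]
    (inp : (Pattern σ × RegConstraint σ) × (Pattern σ × RegConstraint σ)) : ℕ :=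
  Encodable.encode ((inp.1.1, inp.1.2.map fun q => (q.1, encRE q.2)),
                    (inp.2.1, inp.2.2.map fun q => (q.1, encRE q.2)))

/-- A standard encoding of a terminal-free input pair into `ℕ`. -/
def encodeTFInput {σ : Type} [Encodable σ]
    (inp : (TFPattern × RegConstraint σ) × (TFPattern × RegConstraint σ)) : ℕ :=
  Encodable.encode ((inp.1.1, inp.1.2.map fun q => (q.1, encRE q.2)),
                    (inp.2.1, inp.2.2.map fun q => (q.1, encRE q.2)))

namespace EPat

abbrev Act := ℕ × ℕ × ℕ × Bool
abbrev St := ℕ → ℕ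

def step (a : Act) (s s' : St) : Prop :=
  (∀ l, l ≠ a.1 → s' l = s l) ∧ s' a.2.2.1 = s a.2.1 + a.2.2.2.toNat

def Exec : List Act → St → St → Prop
  | [], s, s' => s = s'
  | a :: l, s, s'' => ∃ s', step a s s' ∧ Exec l s' s''

theorem exec_append (l₁ l₂ : List Act) (s s'' : St) :
    Exec (l₁ ++ l₂) s s'' ↔ ∃ s', Exec l₁ s s' ∧ Exec l₂ s' s'' := by
  induction l₁ generalizing s with
  | nil => simp [Exec]
  | cons a l ih =>
    simp only [List.cons_append, Exec, ih]
    constructor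
    · rintro ⟨x, hx, y, hy, hz⟩
      exact ⟨y, ⟨x, hx, hy⟩, hz⟩
    · rintro ⟨y, ⟨x, hx, hy⟩, hz⟩
      exact ⟨x, hx, y, hy, hz⟩

def Run (e : RegularExpression Act) (s s' : St) : Prop :=
  ∃ l ∈ e.matches', Exec l s s'

theorem run_char (a : Act) (s s' : St) : Run (.char a) s s' ↔ step a s s' := by
  constructor
  · rintro ⟨l, hl, h⟩
    have : l = [a] := hl
    subst this
    obtain ⟨x, hx, hy⟩ := h
    have : x = s' := hy
    exact this ▸ hx
  · intro h
    exact ⟨[a], rfl, s', h, rfl⟩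

theorem run_mul (e f : RegularExpression Act) (s s'' : St) :
    Run (e * f) s s'' ↔ ∃ s', Run e s s' ∧ Run f s' s'' := by
  simp only [Run, RegularExpression.matches'_mul, Language.mem_mul]
  constructor
  · rintro ⟨l, ⟨l₁, h₁, l₂, h₂, rfl⟩, h⟩
    obtain ⟨x, hx, hy⟩ := (exec_append _ _ _ _).1 h
    exact ⟨x, ⟨l₁, h₁, hx⟩, l₂, h₂, hy⟩
  · rintro ⟨x, ⟨l₁, h₁, hx⟩, l₂, h₂, hy⟩
    exact ⟨_, ⟨l₁, h₁, l₂, h₂, rfl⟩, (exec_append _ _ _ _).2 ⟨x, hx, hy⟩⟩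

theorem run_add (e f : RegularExpression Act) (s s' : St) :
    Run (e + f) s s' ↔ Run e s s' ∨ Run f s s' := by
  simp only [Run, RegularExpression.matches'_add, Language.mem_add]
  constructor
  · rintro ⟨l, h | h, h'⟩
    · exact .inl ⟨l, h, h'⟩
    · exact .inr ⟨l, h, h'⟩
  · rintro (⟨l, h, h'⟩ | ⟨l, h, h'⟩)
    · exact ⟨l, .inl h, h'⟩
    · exact ⟨l, .inr h, h'⟩

theorem run_star (e : RegularExpression Act) (s s' : St) :
    Run (.star e) s s' ↔ Relation.ReflTransGen (Run e) s s' := by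
  constructor
  · rintro ⟨l, hl, h⟩
    rw [RegularExpression.matches'_star, Language.mem_kstar] at hl
    obtain ⟨L, rfl, hL⟩ := hl
    induction L generalizing s with
    | nil =>
      have : s = s' := h
      subst this
      exact .refl
    | cons y L ih =>
      rw [List.flatten_cons, exec_append] at h
      obtain ⟨x, hx, hy⟩ := h
      exact .head ⟨y, hL y (by simp), hx⟩ (ih x (fun z hz => hL z (by simp [hz])) hy)
  · intro h
    induction h using Relation.ReflTransGen.head_induction_on with
    | refl =>
      refine ⟨[], ?_, rfl⟩
      rw [RegularExpression.matches'_star, Language.mem_kstar]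
      exact ⟨[], rfl, by simp⟩
    | head h1 _ ih =>
      obtain ⟨l₁, h₁, hx⟩ := h1
      obtain ⟨l₂, h₂, hy⟩ := ih
      refine ⟨l₁ ++ l₂, ?_, (exec_append _ _ _ _).2 ⟨_, hx, hy⟩⟩
      rw [RegularExpression.matches'_star, Language.mem_kstar] at h₂ ⊢
      obtain ⟨L, rfl, hL⟩ := h₂
      refine ⟨l₁ :: L, rfl, ?_⟩
      intro y hy
      rcases List.mem_cons.1 hy with rfl | hy
      · exact h₁
      · exact hL y hy

/-- Agreement of states below `m`. -/
def Agree (m : ℕ) (s s' : St) : Prop := ∀ i < m, s' i = s i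

def Good (m : ℕ) (φ : St → Prop) : Prop :=
  (∀ s s', Agree m s s' → (φ s → φ s')) ∧
  ∃ e : RegularExpression Act,
    (∀ s, s 1 = 0 → (φ s ↔ ∃ s', Run e s s')) ∧ ∀ s s', Run e s s' → Agree m s s'

theorem Agree.symm {m : ℕ} {s s' : St} (h : Agree m s s') : Agree m s' s :=
  fun i hi => (h i hi).symm

theorem Agree.trans {m : ℕ} {s s' s'' : St} (h : Agree m s s') (h' : Agree m s' s'') :
    Agree m s s'' := fun i hi => (h' i hi).trans (h i hi)

theorem Good.congr {m : ℕ} {φ ψ : St → Prop} (h : Good m φ)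
    (hh : ∀ s, s 1 = 0 → (ψ s ↔ φ s)) (hl : ∀ s s', Agree m s s' → (ψ s → ψ s')) : Good m ψ := by
  obtain ⟨_, e, he, hp⟩ := h
  exact ⟨hl, e, fun s hs => (hh s hs).trans (he s hs), hp⟩

theorem good_test {m i j : ℕ} (hi : i < m) (hj : j < m) (d : Bool) :
    Good m (fun s => s j = s i + d.toNat) := by
  refine ⟨fun s s' h => by simp only [h i hi, h j hj]; exact id, .char (m, i, j, d), ?_, ?_⟩
  · intro s _
    simp only [run_char, step]
    constructor
    · intro h
      exact ⟨s, fun _ _ => rfl, h⟩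
    · rintro ⟨s', h1, h2⟩
      rw [← h2, h1 j hj.ne]
  · intro s s' h l hl
    exact ((run_char _ _ _).1 h).1 l hl.ne

theorem good_eq {m i j : ℕ} (hi : i < m) (hj : j < m) : Good m (fun s => s j = s i) :=
  good_test hi hj false

theorem good_succ {m i j : ℕ} (hi : i < m) (hj : j < m) : Good m (fun s => s j = s i + 1) :=
  good_test hi hj true

theorem good_zero {m i : ℕ} (hm : 1 < m) (hi : i < m) : Good m (fun s => s i = 0) :=
  (good_eq hm hi).congr (fun s hs => by simp [hs]) (fun s s' h => by simp only [h i hi]; exact id)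

theorem good_and {m : ℕ} (hm : 1 < m) {φ ψ : St → Prop} (h : Good m φ) (h' : Good m ψ) :
    Good m (fun s => φ s ∧ ψ s) := by
  obtain ⟨l, e, he, hp⟩ := h
  obtain ⟨l', e', he', hp'⟩ := h'
  refine ⟨fun s s' a h => ⟨l s s' a h.1, l' s s' a h.2⟩, e * e', ?_, ?_⟩
  · intro s hs
    simp only [run_mul]
    constructor
    · rintro ⟨h1, h2⟩
      obtain ⟨x, hx⟩ := (he s hs).1 h1
      have hsx := hp _ _ hx
      obtain ⟨y, hy⟩ := (he' x (by rw [hsx 1 hm, hs])).1 (l' _ _ hsx h2)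
      exact ⟨y, x, hx, hy⟩
    · rintro ⟨y, x, hx, hy⟩
      have hsx := hp _ _ hx
      exact ⟨(he s hs).2 ⟨x, hx⟩,
        l' _ _ hsx.symm ((he' x (by rw [hsx 1 hm, hs])).2 ⟨y, hy⟩)⟩
  · intro s s' h
    obtain ⟨x, hx, hy⟩ := (run_mul _ _ _ _).1 h
    exact (hp _ _ hx).trans (hp' _ _ hy)

theorem good_or {m : ℕ} {φ ψ : St → Prop} (h : Good m φ) (h' : Good m ψ) :
    Good m (fun s => φ s ∨ ψ s) := by
  obtain ⟨l, e, he, hp⟩ := h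
  obtain ⟨l', e', he', hp'⟩ := h'
  refine ⟨fun s s' a h => h.imp (l s s' a) (l' s s' a), e + e', ?_, ?_⟩
  · intro s hs
    simp only [run_add, exists_or, he s hs, he' s hs]
  · intro s s' h
    rcases (run_add _ _ _ _).1 h with h | h
    exacts [hp _ _ h, hp' _ _ h]

theorem step_guess {m : ℕ} (hm : 1 < m) (s s' : St) :
    step (m, 0, 0, false) s s' ↔ ∃ x, s' = Function.update s m x := by
  simp only [step]
  constructor
  · rintro ⟨h, _⟩
    refine ⟨s' m, ?_⟩
    ext l
    by_cases hl : l = m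
    · subst hl; simp
    · simp [hl, h l hl]
  · rintro ⟨x, rfl⟩
    refine ⟨fun l hl => by simp [hl], ?_⟩
    have : (0 : ℕ) ≠ m := by omega
    simp [this]

theorem good_ex {m : ℕ} (hm : 1 < m) {φ ψ : St → Prop} (h : Good (m + 1) φ)
    (hh : ∀ s, ψ s ↔ ∃ x, φ (Function.update s m x)) : Good m ψ := by
  obtain ⟨l, e, he, hp⟩ := h
  have hm1 : (1 : ℕ) ≠ m := by omega
  refine ⟨?_, .char (m, 0, 0, false) * e, ?_, ?_⟩
  · intro s s' a
    rw [hh, hh]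
    rintro ⟨x, hx⟩
    refine ⟨x, l _ _ ?_ hx⟩
    intro i hi
    by_cases him : i = m
    · subst him; simp
    · simp [him, a i (by omega)]
  · intro s hs
    rw [hh]
    simp only [run_mul, run_char, step_guess hm]
    constructor
    · rintro ⟨x, hx⟩
      obtain ⟨y, hy⟩ := (he _ (by simp [hm1, hs])).1 hx
      exact ⟨y, _, ⟨x, rfl⟩, hy⟩
    · rintro ⟨y, _, ⟨x, rfl⟩, hy⟩
      exact ⟨x, (he _ (by simp [hm1, hs])).2 ⟨y, hy⟩⟩
  · intro s s' h
    obtain ⟨x, hx, hy⟩ := (run_mul _ _ _ _).1 h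
    rw [run_char] at hx
    intro i hi
    rw [hp _ _ hy i (by omega), hx.1 i (by simp; omega)]

def D2 (R : ℕ → ℕ → Prop) : Prop :=
  ∀ m i j, 1 < m → i < m → j < m → Good m (fun s => R (s i) (s j))

def D3 (R : ℕ → ℕ → ℕ → Prop) : Prop :=
  ∀ m i j k, 1 < m → i < m → j < m → k < m → Good m (fun s => R (s i) (s j) (s k))

def D5 (R : ℕ → ℕ × ℕ → ℕ × ℕ → Prop) : Prop :=
  ∀ m p x₁ x₂ y₁ y₂, 1 < m → p < m → x₁ < m → x₂ < m → y₁ < m → y₂ < m →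
    Good m (fun s => R (s p) (s x₁, s x₂) (s y₁, s y₂))

theorem step_copy (i j : ℕ) (s s' : St) :
    step (j, i, j, false) s s' ↔ s' = Function.update s j (s i) := by
  simp only [step]
  constructor
  · rintro ⟨h, h'⟩
    ext l
    by_cases hl : l = j
    · subst hl; simpa using h'
    · simp [hl, h l hl]
  · rintro rfl
    exact ⟨fun l hl => by simp [hl], by simp⟩

/-- Transitive closure from registers `m, m+1`. -/
theorem good_tc_aux {R : ℕ → ℕ × ℕ → ℕ × ℕ → Prop} (hR : D5 R) {m p y₁ y₂ : ℕ} (hm : 1 < m)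
    (hp : p < m) (hy₁ : y₁ < m) (hy₂ : y₂ < m) :
    ∃ e : RegularExpression Act,
      (∀ s, s 1 = 0 → (Relation.ReflTransGen (R (s p)) (s m, s (m+1)) (s y₁, s y₂) ↔
        ∃ s', Run e s s')) ∧ ∀ s s', Run e s s' → Agree m s s' := by
  obtain ⟨l, e, he, hpr⟩ := hR (m+4) p m (m+1) (m+2) (m+3) (by omega) (by omega) (by omega)
    (by omega) (by omega) (by omega)
  obtain ⟨b, hb⟩ : ∃ b : RegularExpression Act, b = .char (m+2, 0, 0, false) *
      (.char (m+3, 0, 0, false) * (e * (.char (m, m+2, m, false) *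
      .char (m+1, m+3, m+1, false)))) := ⟨_, rfl⟩
  have hb1 : ∀ s s', s 1 = 0 → Run b s s' →
      Agree m s s' ∧ R (s p) (s m, s (m+1)) (s' m, s' (m+1)) := by
    intro s s' hs h
    rw [hb] at h
    simp only [run_mul, run_char, step_copy, step_guess (show 1 < m + 2 by omega),
      step_guess (show 1 < m + 3 by omega)] at h
    obtain ⟨_, ⟨x, rfl⟩, _, ⟨y, rfl⟩, s₃, h₃, s₄, rfl, rfl⟩ := h
    have ag := hpr _ _ h₃
    have hr := (he _ (by
      rw [Function.update_of_ne (by omega), Function.update_of_ne (by omega), hs])).2 ⟨_, h₃⟩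
    have agm : Agree m s s₃ := by
      intro i hi
      rw [ag i (by omega), Function.update_of_ne (by omega), Function.update_of_ne (by omega)]
    refine ⟨?_, ?_⟩
    · intro i hi
      rw [Function.update_of_ne (by omega), Function.update_of_ne (by omega), agm i hi]
    · have e2 := ag (m+2) (by omega)
      have e3 := ag (m+3) (by omega)
      have hpm : p ≠ m + 2 := by omega
      have hpm3 : p ≠ m + 3 := by omega
      simp [hpm, hpm3] at hr e2 e3
      simpa [e2, e3] using hr
  have hb2 : ∀ s q, s 1 = 0 → R (s p) (s m, s (m+1)) q → ∃ s', Run b s s' ∧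
      (s' m, s' (m+1)) = q := by
    intro s q hs h
    have hpm : p ≠ m + 2 := by omega
    have hpm3 : p ≠ m + 3 := by omega
    have hr : R ((Function.update (Function.update s (m+2) q.1) (m+3) q.2) p)
      ((Function.update (Function.update s (m+2) q.1) (m+3) q.2) m,
      (Function.update (Function.update s (m+2) q.1) (m+3) q.2) (m+1))
      ((Function.update (Function.update s (m+2) q.1) (m+3) q.2) (m+2),
      (Function.update (Function.update s (m+2) q.1) (m+3) q.2) (m+3)) := by
      simpa [hpm, hpm3] using h
    obtain ⟨s₃, h₃⟩ := (he _ (by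
      rw [Function.update_of_ne (by omega), Function.update_of_ne (by omega), hs])).1 hr
    have ag := hpr _ _ h₃
    have e2 := ag (m+2) (by omega)
    have e3 := ag (m+3) (by omega)
    simp at e2 e3
    refine ⟨Function.update (Function.update s₃ m (s₃ (m+2))) (m+1)
      ((Function.update s₃ m (s₃ (m+2))) (m+3)), ?_, ?_⟩
    · rw [hb]
      simp only [run_mul, run_char, step_copy, step_guess (show 1 < m + 2 by omega),
        step_guess (show 1 < m + 3 by omega)]
      exact ⟨_, ⟨q.1, rfl⟩, _, ⟨q.2, rfl⟩, s₃, h₃, _, rfl, rfl⟩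
    · simp [e2, e3]
  have star1 : ∀ s s', Relation.ReflTransGen (Run b) s s' → s 1 = 0 →
      Agree m s s' ∧ Relation.ReflTransGen (R (s p)) (s m, s (m+1)) (s' m, s' (m+1)) := by
    intro s s' h hs
    induction h with
    | refl => exact ⟨fun _ _ => rfl, .refl⟩
    | @tail u v _ huv ih =>
      have h1 := ih.1 1 hm
      obtain ⟨h2, h3⟩ := hb1 _ _ (h1.trans hs) huv
      rw [ih.1 p hp] at h3
      exact ⟨ih.1.trans h2, ih.2.tail h3⟩
  have starA : ∀ s s', Relation.ReflTransGen (Run b) s s' → Agree m s s' := by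
    have hbA : ∀ s s', Run b s s' → Agree m s s' := by
      intro s s' h i hi
      rw [hb] at h
      simp only [run_mul, run_char, step_copy, step_guess (show 1 < m + 2 by omega),
        step_guess (show 1 < m + 3 by omega)] at h
      obtain ⟨_, ⟨x, rfl⟩, _, ⟨y, rfl⟩, s₃, h₃, s₄, rfl, rfl⟩ := h
      rw [Function.update_of_ne (by omega), Function.update_of_ne (by omega),
        hpr _ _ h₃ i (by omega), Function.update_of_ne (by omega),
        Function.update_of_ne (by omega)]
    intro s s' h
    induction h with
    | refl => exact fun _ _ => rfl
    | tail _ h ih => exact ih.trans (hbA _ _ h)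
  have star2 : ∀ s q, s 1 = 0 → Relation.ReflTransGen (R (s p)) (s m, s (m+1)) q →
      ∃ s', Relation.ReflTransGen (Run b) s s' ∧ (s' m, s' (m+1)) = q := by
    intro s q hs h
    induction h with
    | refl => exact ⟨s, .refl, rfl⟩
    | @tail u v _ huv ih =>
      obtain ⟨s₁, h₁, rfl⟩ := ih
      have ag := starA _ _ h₁
      rw [← ag p hp] at huv
      obtain ⟨s₂, h₂, rfl⟩ := hb2 s₁ v ((ag 1 hm).trans hs) huv
      exact ⟨s₂, h₁.tail h₂, rfl⟩
  obtain ⟨_, e', he', hpr'⟩ := good_and (show 1 < m + 2 by omega)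
    (good_eq (m := m+2) (i := m) (j := y₁) (by omega) (by omega))
    (good_eq (m := m+2) (i := m+1) (j := y₂) (by omega) (by omega))
  beta_reduce at he'
  refine ⟨.star b * e', ?_, ?_⟩
  · intro s hs
    simp only [run_mul, run_star]
    constructor
    · intro h
      obtain ⟨s', h', hq⟩ := star2 s _ hs h
      have ag := starA _ _ h'
      obtain ⟨t, ht⟩ := (he' s' ((ag 1 hm).trans hs)).1 (by
        rw [ag y₁ hy₁, ag y₂ hy₂]
        simp only [Prod.mk.injEq] at hq
        exact ⟨hq.1.symm, hq.2.symm⟩)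
      exact ⟨t, s', h', ht⟩
    · rintro ⟨t, s', h', ht⟩
      have ag := starA _ _ h'
      have := (he' s' ((ag 1 hm).trans hs)).2 ⟨t, ht⟩
      rw [ag y₁ hy₁, ag y₂ hy₂] at this
      rw [this.1, this.2]
      exact (star1 _ _ h' hs).2
  · intro s s' h
    simp only [run_mul, run_star] at h
    obtain ⟨t, h1, h2⟩ := h
    exact (starA _ _ h1).trans (fun i hi => hpr' _ _ h2 i (by omega))

theorem D5.tc {R : ℕ → ℕ × ℕ → ℕ × ℕ → Prop} (hR : D5 R) :
    D5 (fun p => Relation.ReflTransGen (R p)) := by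
  intro m p x₁ x₂ y₁ y₂ hm hp hx₁ hx₂ hy₁ hy₂
  obtain ⟨e, he, hpr⟩ := good_tc_aux hR hm hp hy₁ hy₂
  refine ⟨?_, .char (m, x₁, m, false) * (.char (m+1, x₂, m+1, false) * e), ?_, ?_⟩
  · intro s s' a
    simp only [a p hp, a x₁ hx₁, a x₂ hx₂, a y₁ hy₁, a y₂ hy₂]
    exact id
  · intro s hs
    simp only [run_mul, run_char, step_copy]
    have key : ∀ t : St, t = Function.update (Function.update s m (s x₁)) (m+1)
        ((Function.update s m (s x₁)) x₂) → Agree m s t ∧ t m = s x₁ ∧ t (m+1) = s x₂ := by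
      rintro t rfl
      refine ⟨fun i hi => ?_, by simp, ?_⟩
      · rw [Function.update_of_ne (by omega), Function.update_of_ne (by omega)]
      · rw [Function.update_self, Function.update_of_ne (by omega)]
    obtain ⟨t, ht⟩ : ∃ t, t = Function.update (Function.update s m (s x₁)) (m+1)
        ((Function.update s m (s x₁)) x₂) := ⟨_, rfl⟩
    obtain ⟨ag, h1, h2⟩ := key t ht
    have hh := he t ((ag 1 hm).trans hs)
    rw [ag p hp, ag y₁ hy₁, ag y₂ hy₂, h1, h2] at hh
    rw [hh]
    constructor
    · rintro ⟨s', h⟩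
      exact ⟨s', _, rfl, t, ht, h⟩
    · rintro ⟨s', _, rfl, t', ht', h⟩
      exact ⟨s', by rw [ht, ← ht']; exact h⟩
  · intro s s' h
    simp only [run_mul, run_char, step_copy] at h
    obtain ⟨_, rfl, _, rfl, h⟩ := h
    intro i hi
    rw [hpr _ _ h i hi, Function.update_of_ne (by omega), Function.update_of_ne (by omega)]

end EPat

namespace EPat

theorem tc_rec (S : ℕ → Prop) (G : ℕ → ℕ → ℕ → Prop) (P : ℕ → ℕ → Prop)
    (h0 : ∀ y, P 0 y ↔ S y) (hs : ∀ n y, P (n+1) y ↔ ∃ i, P n i ∧ G n i y) (n y : ℕ) :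
    (∃ v, S v ∧ Relation.ReflTransGen
      (fun q q' : ℕ × ℕ => q'.1 = q.1 + 1 ∧ G q.1 q.2 q'.2) (0, v) (n, y)) ↔ P n y := by
  constructor
  · rintro ⟨v, hv, h⟩
    have : ∀ q : ℕ × ℕ, Relation.ReflTransGen
      (fun q q' : ℕ × ℕ => q'.1 = q.1 + 1 ∧ G q.1 q.2 q'.2) (0, v) q → P q.1 q.2 := by
      intro q h
      induction h with
      | refl => exact (h0 v).2 hv
      | @tail u w _ h ih =>
        rw [h.1, hs]
        exact ⟨_, ih, h.2⟩
    exact this _ h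
  · intro h
    induction n generalizing y with
    | zero => exact ⟨y, (h0 y).1 h, .refl⟩
    | succ n ih =>
      obtain ⟨i, hi, hg⟩ := (hs n y).1 h
      obtain ⟨v, hv, ht⟩ := ih i hi
      exact ⟨v, hv, ht.tail ⟨rfl, hg⟩⟩

theorem D3.add : D3 (fun a b c => c = a + b) := by
  have h1 : D5 (fun _ q q' => q'.1 = q.1 + 1 ∧ q'.2 = q.2 + 1) := by
    intro m p x₁ x₂ y₁ y₂ hm hp hx₁ hx₂ hy₁ hy₂
    exact good_and hm (good_succ hx₁ hy₁) (good_succ hx₂ hy₂)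
  intro m i j k hm hi hj hk
  refine good_ex hm (good_and (by omega) (good_zero (m := m+1) (i := m) (by omega) (by omega))
    (h1.tc (m+1) m m i j k (by omega) (by omega) (by omega) (by omega) (by omega) (by omega))) ?_
  intro s
  have := tc_rec (fun y => y = s i) (fun _ acc acc' => acc' = acc + 1) (fun n y => y = s i + n)
    (by simp) (by intro n y; simp; omega) (s j) (s k)
  beta_reduce
  rw [← this]
  simp [hi.ne, hj.ne, hk.ne]

theorem D3.mul : D3 (fun a b c => c = a * b) := by
  have h1 : D5 (fun p q q' => q'.1 = q.1 + 1 ∧ q'.2 = q.2 + p) := by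
    intro m p x₁ x₂ y₁ y₂ hm hp hx₁ hx₂ hy₁ hy₂
    exact good_and hm (good_succ hx₁ hy₁) (D3.add m x₂ p y₂ hm hx₂ hp hy₂)
  intro m i j k hm hi hj hk
  refine good_ex hm (good_and (by omega) (good_zero (m := m+1) (i := m) (by omega) (by omega))
    (h1.tc (m+1) i m m j k (by omega) (by omega) (by omega) (by omega) (by omega) (by omega))) ?_
  intro s
  have := tc_rec (fun y => y = 0) (fun _ acc acc' => acc' = acc + s i) (fun n y => y = s i * n)
    (by simp) (by intro n y; simp [mul_add]) (s j) (s k)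
  beta_reduce
  rw [← this]
  simp [hi.ne, hj.ne, hk.ne]

theorem D2.lt : D2 (fun a b => a < b) := by
  intro m i j hm hi hj
  refine good_ex (φ := fun s => ∃ e, e = s m + 1 ∧ s j = s i + e) hm
    (good_ex (φ := fun s => s (m+1) = s m + 1 ∧ s j = s i + s (m+1)) (by omega)
    (good_and (by omega) (good_succ (by omega) (by omega))
      (D3.add (m+1+1) i (m+1) j (by omega) (by omega) (by omega) (by omega))) ?_) ?_
  · intro s
    have h1 : i ≠ m + 1 := by omega
    have h2 : j ≠ m + 1 := by omega
    simp [h1, h2]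
  · intro s
    simp [hi.ne, hj.ne]
    constructor
    · intro h
      exact ⟨s j - s i - 1, by omega⟩
    · rintro ⟨x, hx⟩
      omega

theorem D3.sqadd : D3 (fun a b c => c = a * a + b) := by
  intro m i j k hm hi hj hk
  refine good_ex (φ := fun s => s m = s i * s i ∧ s k = s m + s j) hm
    (good_and (by omega) (D3.mul (m+1) i i m (by omega) (by omega) (by omega) (by omega))
      (D3.add (m+1) m j k (by omega) (by omega) (by omega) (by omega))) ?_
  intro s
  simp [hi.ne, hj.ne, hk.ne]

theorem D3.pair : D3 (fun a b c => c = Nat.pair a b) := by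
  intro m i j k hm hi hj hk
  have h1 : Good m (fun s => s i < s j ∧ s k = s j * s j + s i) :=
    good_and hm (D2.lt m i j hm hi hj) (D3.sqadd m j i k hm hj hi hk)
  have h2 : Good m (fun s => (s j < s i ∨ s j = s i) ∧ s k = s i * s i + (s i + s j)) := by
    refine good_and hm (good_or (D2.lt m j i hm hj hi) (good_eq hi hj)) ?_
    refine good_ex (φ := fun s => s m = s i + s j ∧ s k = s i * s i + s m) hm
      (good_and (by omega) (D3.add (m+1) i j m (by omega) (by omega) (by omega) (by omega))
      (D3.sqadd (m+1) i m k (by omega) (by omega) (by omega) (by omega))) ?_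
    intro s
    simp [hi.ne, hj.ne, hk.ne]
  refine (good_or h1 h2).congr ?_ ?_
  · intro s _
    unfold Nat.pair
    beta_reduce
    split_ifs with h
    · constructor
      · intro h'; exact .inl ⟨h, h'⟩
      · rintro (h' | h')
        · exact h'.2
        · omega
    · constructor
      · intro h'; exact .inr ⟨by omega, by omega⟩
      · rintro (h' | h')
        · omega
        · omega
  · intro s s' a
    simp only [a i hi, a j hj, a k hk]
    exact id

theorem D2.partrec {f : ℕ →. ℕ} (hf : Nat.Partrec f) : D2 (fun x y => y ∈ f x) := by
  induction hf with
  | zero =>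
    intro m i j hm hi hj
    refine (good_zero hm hj).congr ?_ ?_
    · intro s _; exact Part.mem_some_iff
    · intro s s' a
      simp only [a i hi, a j hj]
      exact id
  | succ =>
    intro m i j hm hi hj
    refine (good_succ hi hj).congr ?_ ?_
    · intro s _; simp
    · intro s s' a
      simp only [a i hi, a j hj]
      exact id
  | left =>
    intro m i j hm hi hj
    refine good_ex hm (D3.pair (m+1) j m i (by omega) (by omega) (by omega) (by omega)) ?_
    intro s
    simp [hi.ne, hj.ne]
    constructor
    · intro h
      exact ⟨(s i).unpair.2, by rw [h]; simp⟩
    · rintro ⟨x, h⟩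
      rw [h]; simp
  | right =>
    intro m i j hm hi hj
    refine good_ex hm (D3.pair (m+1) m j i (by omega) (by omega) (by omega) (by omega)) ?_
    intro s
    simp [hi.ne, hj.ne]
    constructor
    · intro h
      exact ⟨(s i).unpair.1, by rw [h]; simp⟩
    · rintro ⟨x, h⟩
      rw [h]; simp
  | @pair f g _ _ hf hg =>
    intro m i j hm hi hj
    refine good_ex (φ := fun s => ∃ v, s m ∈ f (s i) ∧ v ∈ g (s i) ∧ s j = Nat.pair (s m) v) hm
      (good_ex (φ := fun s => s m ∈ f (s i) ∧ s (m+1) ∈ g (s i) ∧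
          s j = Nat.pair (s m) (s (m+1))) (by omega)
        (good_and (by omega) (hf (m+1+1) i m (by omega) (by omega) (by omega))
        (good_and (by omega) (hg (m+1+1) i (m+1) (by omega) (by omega) (by omega))
          (D3.pair (m+1+1) m (m+1) j (by omega) (by omega) (by omega) (by omega)))) ?_) ?_
    · intro s
      have h1 : i ≠ m + 1 := by omega
      have h2 : j ≠ m + 1 := by omega
      simp [h1, h2]
    · intro s
      simp [hi.ne, hj.ne, Seq.seq]
      grind
  | @comp f g _ _ hf hg =>
    intro m i j hm hi hj
    refine good_ex (φ := fun s => s m ∈ g (s i) ∧ s j ∈ f (s m)) hm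
      (good_and (by omega) (hg (m+1) i m (by omega) (by omega) (by omega))
        (hf (m+1) m j (by omega) (by omega) (by omega))) ?_
    intro s
    simp [hi.ne, hj.ne]
    exact Part.mem_bind_iff
  | @prec f g _ _ hf hg =>
    have h1 : D5 (fun p q q' => q'.1 = q.1 + 1 ∧ q'.2 ∈ g (Nat.pair p (Nat.pair q.1 q.2))) := by
      intro m p x₁ x₂ y₁ y₂ hm hp hx₁ hx₂ hy₁ hy₂
      refine good_and hm (good_succ hx₁ hy₁) ?_
      refine good_ex (φ := fun s => ∃ v, s m = Nat.pair (s x₁) (s x₂) ∧ v = Nat.pair (s p) (s m)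
          ∧ s y₂ ∈ g v) hm
        (good_ex (φ := fun s => s m = Nat.pair (s x₁) (s x₂) ∧ s (m+1) = Nat.pair (s p) (s m)
          ∧ s y₂ ∈ g (s (m+1))) (by omega)
          (good_and (by omega) (D3.pair (m+1+1) x₁ x₂ m (by omega) (by omega) (by omega) (by omega))
          (good_and (by omega) (D3.pair (m+1+1) p m (m+1) (by omega) (by omega) (by omega)
            (by omega)) (hg (m+1+1) (m+1) y₂ (by omega) (by omega) (by omega)))) ?_) ?_
      · intro s
        have e1 : x₁ ≠ m + 1 := by omega
        have e2 : x₂ ≠ m + 1 := by omega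
        have e3 : p ≠ m + 1 := by omega
        have e4 : y₂ ≠ m + 1 := by omega
        simp [e1, e2, e3, e4]
      · intro s
        simp [hx₁.ne, hx₂.ne, hp.ne, hy₂.ne]
    -- registers m: a, m+1: n, m+2: zero, m+3: v
    intro m i j hm hi hj
    have g4 : Good (m+1+1+1+1) (fun s => s i = Nat.pair (s m) (s (m+1)) ∧ s (m+2) = 0 ∧
        s (m+3) ∈ f (s m) ∧ Relation.ReflTransGen (fun q q' : ℕ × ℕ => q'.1 = q.1 + 1 ∧
          q'.2 ∈ g (Nat.pair (s m) (Nat.pair q.1 q.2))) (s (m+2), s (m+3)) (s (m+1), s j)) :=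
      good_and (by omega) (D3.pair _ m (m+1) i (by omega) (by omega) (by omega) (by omega))
        (good_and (by omega) (good_zero (by omega) (by omega))
        (good_and (by omega) (hf _ m (m+3) (by omega) (by omega) (by omega))
        (h1.tc _ m (m+2) (m+3) (m+1) j (by omega) (by omega) (by omega) (by omega) (by omega)
          (by omega))))
    refine good_ex (by omega) (good_ex (by omega) (good_ex (by omega) (good_ex (by omega) g4
      (fun _ => Iff.rfl)) (fun _ => Iff.rfl)) (fun _ => Iff.rfl)) ?_
    intro s
    have e1 : i ≠ m + 1 := by omega
    have e2 : i ≠ m + 2 := by omega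
    have e3 : i ≠ m + 3 := by omega
    have e4 : j ≠ m + 1 := by omega
    have e5 : j ≠ m + 2 := by omega
    have e6 : j ≠ m + 3 := by omega
    have e7 : m ≠ m + 1 + 1 + 1 := by omega
    have e9 : m ≠ m + 1 + 1 := by omega
    simp [hi.ne, hj.ne, e1, e2, e3, e4, e5, e6, e7, e9, Nat.unpaired]
    have key := fun a => tc_rec (fun y => y ∈ f a)
      (fun n acc acc' => acc' ∈ g (Nat.pair a (Nat.pair n acc)))
      (fun n y => y ∈ (Nat.rec (f a) (fun y IH => IH.bind fun i => g (Nat.pair a (Nat.pair y i)))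
        n : Part ℕ)) (by simp) (by intro n y; simp)
    constructor
    · intro h
      obtain ⟨v, hv⟩ := (key _ _ _).2 h
      exact ⟨(s i).unpair.1, (s i).unpair.2, by simp, v, hv⟩
    · rintro ⟨a, n, h, v, h'⟩
      have := (key _ _ _).1 ⟨v, h'⟩
      rw [h]
      simpa using this
  | @rfind f _ hf =>
    have hf1 : D2 (fun x y => x ≠ 0 ∧ y = x) := by
      intro m i j hm hi hj
      have hz : D2 (fun z x => z = 0 ∧ z < x) := fun m i j hm hi hj =>
        good_and hm (good_zero hm hi) (D2.lt m i j hm hi hj)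
      refine good_and hm (good_ex hm (hz (m+1) m i (by omega) (by omega) (by omega)) ?_)
        (good_eq hi hj)
      intro s
      simp [hi.ne]
      try omega
    have h1 : D5 (fun p q q' => q'.1 = q.1 + 1 ∧ q'.2 = q.2 ∧
        ∃ w, w ∈ f (Nat.pair p q.1) ∧ w ≠ 0) := by
      intro m p x₁ x₂ y₁ y₂ hm hp hx₁ hx₂ hy₁ hy₂
      refine good_and hm (good_succ hx₁ hy₁) (good_and hm (good_eq hx₂ hy₂) ?_)
      refine good_ex (φ := fun s => ∃ v, s m = Nat.pair (s p) (s x₁) ∧ v ∈ f (s m) ∧ v ≠ 0 ∧ v = v)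
        hm
        (good_ex (φ := fun s => s m = Nat.pair (s p) (s x₁) ∧ s (m+1) ∈ f (s m) ∧ s (m+1) ≠ 0 ∧
          s (m+1) = s (m+1)) (by omega)
          (good_and (by omega) (D3.pair (m+1+1) p x₁ m (by omega) (by omega) (by omega) (by omega))
          (good_and (by omega) (hf (m+1+1) m (m+1) (by omega) (by omega) (by omega))
            (hf1 (m+1+1) (m+1) (m+1) (by omega) (by omega) (by omega)))) ?_) ?_
      · intro s
        have e1 : x₁ ≠ m + 1 := by omega
        have e3 : p ≠ m + 1 := by omega
        simp [e1, e3]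
      · intro s
        simp [hx₁.ne, hp.ne]
    -- registers m: zero, m+1: pair
    intro m i j hm hi hj
    have g2 : Good (m+1+1) (fun s => s m = 0 ∧ s (m+1) = Nat.pair (s i) (s j) ∧
        s m ∈ f (s (m+1)) ∧ Relation.ReflTransGen (fun q q' : ℕ × ℕ => q'.1 = q.1 + 1 ∧
          q'.2 = q.2 ∧ ∃ w, w ∈ f (Nat.pair (s i) q.1) ∧ w ≠ 0) (s m, s m) (s j, s m)) :=
      good_and (by omega) (good_zero (by omega) (by omega))
        (good_and (by omega) (D3.pair _ i j (m+1) (by omega) (by omega) (by omega) (by omega))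
        (good_and (by omega) (hf _ (m+1) m (by omega) (by omega) (by omega))
        (h1.tc _ i m m j m (by omega) (by omega) (by omega) (by omega) (by omega)
          (by omega))))
    refine good_ex (by omega) (good_ex (by omega) g2 (fun _ => Iff.rfl)) ?_
    intro s
    have e1 : i ≠ m + 1 := by omega
    have e4 : j ≠ m + 1 := by omega
    have key := tc_rec (fun y => y = 0)
      (fun n acc acc' => acc' = acc ∧ ∃ w, w ∈ f (Nat.pair (s i) n) ∧ w ≠ 0)
      (fun n y => y = 0 ∧ ∀ l < n, ∃ w, w ∈ f (Nat.pair (s i) l) ∧ w ≠ 0) (by simp) (by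
        intro n y
        constructor
        · rintro ⟨rfl, h⟩
          exact ⟨0, ⟨rfl, fun l hl => h l (by omega)⟩, rfl, h n (by omega)⟩
        · rintro ⟨_, ⟨rfl, h⟩, rfl, h'⟩
          refine ⟨rfl, fun l hl => ?_⟩
          rcases Nat.lt_succ_iff_lt_or_eq.1 hl with h1 | rfl
          · exact h l h1
          · exact h') (s j) 0
    simp only [exists_eq_left, true_and] at key
    simp [hi.ne, hj.ne, e1, e4] at key ⊢
    rw [key]
    refine Nat.mem_rfind.trans ?_
    simp

theorem exists_undecidable : ∃ e : RegularExpression Act, ¬ ∃ g : ℕ → Bool, Computable g ∧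
    ∀ n, g n = true ↔ ∃ s s' : St, s 0 = n ∧ s 1 = 0 ∧ Run e s s' := by
  obtain ⟨f, hfdef⟩ : ∃ f : ℕ →. ℕ, f = fun n => (Nat.Partrec.Code.ofNatCode n).eval 0 := ⟨_, rfl⟩
  have hf : Nat.Partrec f := by
    rw [← Partrec.nat_iff, hfdef]
    exact Nat.Partrec.Code.eval_part.comp (Computable.ofNat Nat.Partrec.Code) (Computable.const 0)
  have h := D2.partrec hf
  obtain ⟨_, e, he, _⟩ := good_ex (ψ := fun s => ∃ y, y ∈ f (s 0)) (by omega)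
    (h 3 0 2 (by omega) (by omega) (by omega)) (by intro s; simp)
  refine ⟨e, ?_⟩
  rintro ⟨g, hg, hgn⟩
  apply ComputablePred.halting_problem 0
  have key : ∀ n, g n = true ↔ (f n).Dom := by
    intro n
    rw [hgn, Part.dom_iff_mem]
    constructor
    · rintro ⟨s, s', rfl, h1, h2⟩
      exact (he s h1).2 ⟨s', h2⟩
    · intro h
      obtain ⟨s', hs⟩ := (he (fun i => if i = 0 then n else 0) (by simp)).1 (by simpa using h)
      exact ⟨_, s', by simp, by simp, hs⟩
  rw [ComputablePred.computable_iff]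
  refine ⟨fun c => g (Encodable.encode c), hg.comp Computable.encode, ?_⟩
  funext c
  rw [key, hfdef]
  have : Nat.Partrec.Code.ofNatCode (Encodable.encode c) = c := Denumerable.ofNat_encode c
  simp [this]

end EPat

namespace EPat
open RegularExpression

section words
variable {σ : Type} (a b : σ)

theorem mem_mul' (e f : RegularExpression σ) (w : List σ) :
    w ∈ (e * f).matches' ↔ ∃ u ∈ e.matches', ∃ v ∈ f.matches', u ++ v = w := by
  rw [matches'_mul, Language.mem_mul]

theorem mem_add' (e f : RegularExpression σ) (w : List σ) :
    w ∈ (e + f).matches' ↔ w ∈ e.matches' ∨ w ∈ f.matches' := by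
  rw [matches'_add, Language.mem_add]

theorem mem_star' (e : RegularExpression σ) (w : List σ) :
    w ∈ (RegularExpression.star e).matches' ↔
      ∃ L : List (List σ), w = L.flatten ∧ ∀ y ∈ L, y ∈ e.matches' := by
  rw [matches'_star, Language.mem_kstar]

theorem mem_char' (c : σ) (w : List σ) : w ∈ (char c).matches' ↔ w = [c] := Iff.rfl

theorem mem_one' (w : List σ) : w ∈ (1 : RegularExpression σ).matches' ↔ w = [] := Iff.rfl

theorem mem_zero' (w : List σ) : ¬ w ∈ (0 : RegularExpression σ).matches' := fun h => h

def powRE (c : σ) : ℕ → RegularExpression σ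
  | 0 => 1
  | n+1 => char c * powRE c n

theorem mem_powRE (c : σ) (n : ℕ) (w : List σ) :
    w ∈ (powRE c n).matches' ↔ w = List.replicate n c := by
  induction n generalizing w with
  | zero => simp [powRE]
  | succ n ih =>
    simp only [powRE, mem_mul', mem_char', ih]
    simp [List.replicate_succ, eq_comm]

theorem mem_starRE (c : σ) (w : List σ) :
    w ∈ (RegularExpression.star (char c)).matches' ↔ ∃ n, w = List.replicate n c := by
  rw [mem_star']
  constructor
  · rintro ⟨L, rfl, h⟩
    induction L with
    | nil => exact ⟨0, rfl⟩
    | cons y L ih =>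
      obtain ⟨n, hn⟩ := ih (fun y hy => h y (by simp [hy]))
      have : y = [c] := h y (by simp)
      exact ⟨n+1, by simp [hn, this, List.replicate_succ]⟩
  · rintro ⟨n, rfl⟩
    refine ⟨List.replicate n [c], by simp, ?_⟩
    intro y hy
    exact (List.mem_replicate.1 hy).2

/-- At least `k` copies of `c`. -/
def geRE (c : σ) (k : ℕ) : RegularExpression σ := powRE c k * RegularExpression.star (char c)

theorem mem_geRE (c : σ) (k : ℕ) (w : List σ) :
    w ∈ (geRE c k).matches' ↔ ∃ n, k ≤ n ∧ w = List.replicate n c := by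
  simp only [geRE, mem_mul', mem_powRE, mem_starRE]
  constructor
  · rintro ⟨_, rfl, _, ⟨n, rfl⟩, rfl⟩
    exact ⟨k + n, by omega, List.replicate_append_replicate⟩
  · rintro ⟨n, hn, rfl⟩
    refine ⟨_, rfl, _, ⟨n - k, rfl⟩, ?_⟩
    rw [← List.replicate_add]
    congr 1
    omega

abbrev Tok := ℕ × ℕ

def flat (T : List Tok) : List σ :=
  T.flatMap fun t => List.replicate (t.1+1) a ++ List.replicate (t.2+1) b

@[simp] theorem flat_nil : flat a b [] = [] := rfl

@[simp] theorem flat_cons (t : Tok) (T : List Tok) : flat a b (t :: T) =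
    List.replicate (t.1+1) a ++ (List.replicate (t.2+1) b ++ flat a b T) := by
  simp [flat]

@[simp] theorem flat_append (S T : List Tok) :
    flat a b (S ++ T) = flat a b S ++ flat a b T := by
  simp [flat]

variable {a b}

theorem rep_inj {c : σ} {m n : ℕ} {X Y : List σ} (hX : X.head? ≠ some c) (hY : Y.head? ≠ some c)
    (h : List.replicate m c ++ X = List.replicate n c ++ Y) : m = n ∧ X = Y := by
  induction m generalizing n with
  | zero =>
    cases n with
    | zero => exact ⟨rfl, by simpa using h⟩
    | succ n =>
      simp [List.replicate_succ] at h
      simp [h] at hX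
  | succ m ih =>
    cases n with
    | zero =>
      simp [List.replicate_succ] at h
      simp [← h] at hY
    | succ n =>
      simp only [List.replicate_succ, List.cons_append, List.cons.injEq, true_and] at h
      obtain ⟨h1, h2⟩ := ih h
      exact ⟨by omega, h2⟩

theorem flat_head (hab : a ≠ b) (T : List Tok) : (flat a b T).head? ≠ some b := by
  cases T with
  | nil => simp
  | cons t T => simp [List.replicate_succ, hab]

theorem flat_parse (hab : a ≠ b) (T S : List Tok) (m : ℕ) (y : List σ)
    (h : flat a b T = flat a b S ++ (List.replicate (m+1) a ++ b :: y)) :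
    ∃ d T', T = S ++ (m, d) :: T' := by
  induction S generalizing T with
  | nil =>
    cases T with
    | nil => simp [List.replicate_succ] at h
    | cons t T =>
      obtain ⟨c, d⟩ := t
      simp only [flat_cons, flat_nil, List.nil_append] at h
      obtain ⟨h1, -⟩ := rep_inj (by simp [List.replicate_succ, hab.symm]) (by simp [hab.symm]) h
      obtain rfl : c = m := by omega
      exact ⟨d, T, rfl⟩
  | cons s S ih =>
    obtain ⟨c', d'⟩ := s
    cases T with
    | nil => simp [List.replicate_succ] at h
    | cons t T =>
      obtain ⟨c, d⟩ := t
      simp only [flat_cons, List.append_assoc] at h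
      obtain ⟨h1, h2⟩ := rep_inj (by simp [List.replicate_succ, hab.symm])
        (by simp [List.replicate_succ, hab.symm]) h
      obtain ⟨h3, h4⟩ := rep_inj (flat_head hab T) (by
        rcases S with _ | ⟨s, S⟩ <;> simp [List.replicate_succ, hab]) h2
      obtain ⟨d'', T', rfl⟩ := ih T h4
      obtain rfl : c = c' := by omega
      obtain rfl : d = d' := by omega
      exact ⟨d'', T', rfl⟩

variable (a b)

def seqRE : List ℕ → RegularExpression σ
  | [] => 1
  | d :: ds => geRE a 1 * (powRE b (d+1) * seqRE ds)

theorem mem_seqRE (ds : List ℕ) (w : List σ) :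
    w ∈ (seqRE a b ds).matches' ↔ ∃ S : List Tok, S.map Prod.snd = ds ∧ w = flat a b S := by
  induction ds generalizing w with
  | nil => simp [seqRE]
  | cons d ds ih =>
    simp only [seqRE, mem_mul', mem_geRE, mem_powRE, ih]
    constructor
    · rintro ⟨_, ⟨n, hn, rfl⟩, _, ⟨_, rfl, _, ⟨S, rfl, rfl⟩, rfl⟩, rfl⟩
      refine ⟨(n-1, d) :: S, rfl, ?_⟩
      simp [Nat.sub_add_cancel hn]
    · rintro ⟨S, hS, rfl⟩
      rcases S with _ | ⟨⟨c, d'⟩, S⟩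
      · simp at hS
      · simp only [List.map_cons, List.cons.injEq] at hS
        obtain ⟨rfl, rfl⟩ := hS
        exact ⟨_, ⟨c+1, by omega, rfl⟩, _, ⟨_, rfl, _, ⟨S, rfl, rfl⟩, rfl⟩, by simp⟩

/-- All token sequences. -/
def allRE : RegularExpression σ := RegularExpression.star (geRE a 1 * geRE b 1)

theorem mem_allRE (w : List σ) :
    w ∈ (allRE a b).matches' ↔ ∃ T : List Tok, w = flat a b T := by
  rw [allRE, mem_star']
  constructor
  · rintro ⟨L, rfl, h⟩
    induction L with
    | nil => exact ⟨[], rfl⟩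
    | cons y L ih =>
      obtain ⟨T, hT⟩ := ih (fun y hy => h y (by simp [hy]))
      have := h y (by simp)
      simp only [mem_mul', mem_geRE] at this
      obtain ⟨_, ⟨n, hn, rfl⟩, _, ⟨m, hm, rfl⟩, rfl⟩ := this
      exact ⟨(n-1, m-1) :: T, by simp [hT, Nat.sub_add_cancel hn, Nat.sub_add_cancel hm]⟩
  · rintro ⟨T, rfl⟩
    refine ⟨T.map fun t => List.replicate (t.1+1) a ++ List.replicate (t.2+1) b, ?_, ?_⟩
    · simp [flat, List.flatMap_def]
    · intro y hy
      obtain ⟨t, _, rfl⟩ := List.mem_map.1 hy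
      simp only [mem_mul', mem_geRE]
      exact ⟨_, ⟨_, by omega, rfl⟩, _, ⟨_, by omega, rfl⟩, rfl⟩

def sumRE : List (RegularExpression σ) → RegularExpression σ
  | [] => 0
  | e :: l => e + sumRE l

theorem mem_sumRE (l : List (RegularExpression σ)) (w : List σ) :
    w ∈ (sumRE l).matches' ↔ ∃ e ∈ l, w ∈ e.matches' := by
  induction l with
  | nil => simp [sumRE]
  | cons e l ih =>
    rw [sumRE, mem_add', ih]
    simp

/-- `K` registers; the list of separators of a record. -/
def dOf (K : ℕ) (c : Act) : List ℕ := List.replicate (K-1) 0 ++ [Encodable.encode c + 1]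

def trans (K : ℕ) : RegularExpression Act → RegularExpression σ
  | .zero => 0
  | .epsilon => 1
  | .char c => seqRE a b (dOf K c)
  | .plus e f => trans K e + trans K f
  | .comp e f => trans K e * trans K f
  | .star e => RegularExpression.star (trans K e)

theorem mem_trans (K : ℕ) (e : RegularExpression Act) (w : List σ) :
    w ∈ (trans a b K e).matches' ↔ ∃ l ∈ e.matches', ∃ T : List Tok,
      T.map Prod.snd = l.flatMap (dOf K) ∧ w = flat a b T := by
  induction e generalizing w with
  | zero =>
    constructor
    · intro h; exact (mem_zero' _ h).elim
    · rintro ⟨l, hl, _⟩; exact (mem_zero' _ hl).elim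
  | epsilon =>
    constructor
    · intro h
      have : w = [] := h
      exact ⟨[], rfl, [], rfl, this⟩
    · rintro ⟨l, hl, T, hT, rfl⟩
      have : l = [] := hl
      subst this
      simp at hT
      subst hT
      rfl
  | char c =>
    simp only [trans, mem_seqRE, mem_char']
    simp
  | plus e f ihe ihf =>
    rw [trans, plus_def, mem_add', ihe, ihf]
    simp only [mem_add', or_and_right, exists_or]
  | comp e f ihe ihf =>
    rw [trans, comp_def, mem_mul']
    constructor
    · rintro ⟨u, hu, v, hv, rfl⟩
      obtain ⟨l, hl, T, hT, rfl⟩ := (ihe u).1 hu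
      obtain ⟨l', hl', T', hT', rfl⟩ := (ihf v).1 hv
      exact ⟨l ++ l', (mem_mul' _ _ _).2 ⟨l, hl, l', hl', rfl⟩, T ++ T', by simp [hT, hT'],
        by simp⟩
    · rintro ⟨l, hl, T, hT, rfl⟩
      obtain ⟨l₁, h₁, l₂, h₂, rfl⟩ := (mem_mul' _ _ _).1 hl
      rw [List.flatMap_append, List.map_eq_append_iff] at hT
      obtain ⟨T₁, T₂, rfl, hT₁, hT₂⟩ := hT
      exact ⟨_, (ihe _).2 ⟨l₁, h₁, T₁, hT₁, rfl⟩, _, (ihf _).2 ⟨l₂, h₂, T₂, hT₂, rfl⟩, by simp⟩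
  | star e ih =>
    rw [trans, mem_star']
    constructor
    · rintro ⟨L, rfl, h⟩
      induction L with
      | nil => exact ⟨[], (mem_star' _ _).2 ⟨[], rfl, by simp⟩, [], rfl, rfl⟩
      | cons y L ihL =>
        obtain ⟨l, hl, T, hT, h1⟩ := ihL (fun y hy => h y (by simp [hy]))
        obtain ⟨l', hl', T', hT', h2⟩ := (ih y).1 (h y (by simp))
        obtain ⟨M, rfl, hM⟩ := (mem_star' _ _).1 hl
        refine ⟨l' ++ M.flatten, (mem_star' _ _).2 ⟨l' :: M, rfl, ?_⟩, T' ++ T, ?_, ?_⟩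
        · intro z hz
          rcases List.mem_cons.1 hz with rfl | hz
          · exact hl'
          · exact hM z hz
        · simp only [List.map_append, List.flatMap_append, hT, hT']
        · simp [h1, h2]
    · rintro ⟨l, hl, T, hT, rfl⟩
      obtain ⟨M, rfl, hM⟩ := (mem_star' _ _).1 hl
      clear hl
      induction M generalizing T with
      | nil =>
        simp at hT
        exact ⟨[], by simp [hT], by simp⟩
      | cons y M ihM =>
        rw [List.flatten_cons, List.flatMap_append, List.map_eq_append_iff] at hT
        obtain ⟨T₁, T₂, rfl, hT₁, hT₂⟩ := hT
        obtain ⟨L, h1, h2⟩ := ihM T₂ (fun z hz => hM z (by simp [hz])) hT₂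
        refine ⟨flat a b T₁ :: L, by simp [h1], ?_⟩
        intro z hz
        rcases List.mem_cons.1 hz with rfl | hz
        · exact (ih _).2 ⟨y, hM y (by simp), T₁, hT₁, rfl⟩
        · exact h2 z hz

/-- The equalities `s' j = s i + d` to be checked for an action. -/
def checks (K : ℕ) (c : Act) : List (ℕ × ℕ × Bool) :=
  (c.2.1, c.2.2.1, c.2.2.2) ::
    ((List.range K).filter (fun l => l ≠ c.1)).map (fun l => (l, l, false))

/-- separators between register `i` of a record and register `j` of the next one -/
def gap (K : ℕ) (c : Act) (i j : ℕ) : List ℕ :=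
  List.replicate (K-1-i) 0 ++ (Encodable.encode c + 1) :: List.replicate j 0

def gapRE : List ℕ → RegularExpression σ
  | [] => 0
  | d :: ds => powRE b (d+1) * seqRE a b ds

theorem mem_gapRE (ds : List ℕ) (w : List σ) :
    w ∈ (gapRE a b ds).matches' ↔ ∃ d, ∃ S : List Tok, d :: S.map Prod.snd = ds ∧
      w = List.replicate (d+1) b ++ flat a b S := by
  cases ds with
  | nil => simp [gapRE]
  | cons d ds =>
    simp only [gapRE, mem_mul', mem_powRE, mem_seqRE]
    constructor
    · rintro ⟨_, rfl, _, ⟨S, rfl, rfl⟩, rfl⟩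
      exact ⟨d, S, rfl, rfl⟩
    · rintro ⟨d', S, h, rfl⟩
      simp only [List.cons.injEq] at h
      obtain ⟨rfl, rfl⟩ := h
      exact ⟨_, rfl, _, ⟨S, rfl, rfl⟩, rfl⟩

def vRE (K : ℕ) (A : List Act) : RegularExpression σ :=
  sumRE (A.flatMap fun c => (checks K c).map fun q =>
    gapRE a b (gap K c q.1 q.2.1) * geRE a (q.2.2.toNat + 1) +
    geRE a (1 - q.2.2.toNat) * gapRE a b (gap K c q.1 q.2.1))

/-- The token list violates one of the checks. -/
def Bad (K : ℕ) (A : List Act) (T : List Tok) : Prop :=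
  ∃ c ∈ A, ∃ q ∈ checks K c, ∃ T₁ x d S x' d' T₃,
    T = T₁ ++ (x, d) :: (S ++ (x', d') :: T₃) ∧ d :: S.map Prod.snd = gap K c q.1 q.2.1 ∧
    x' ≠ x + q.2.2.toNat

variable {a b}

theorem bad_iff (hab : a ≠ b) (K : ℕ) (A : List Act) (T : List Tok) :
    Bad K A T ↔ ∃ u ∈ (allRE a b).matches', ∃ z ∈ (geRE a 1).matches',
      ∃ v ∈ (vRE a b K A).matches', ∃ x ∈ (geRE b 1 * allRE a b).matches',
      u ++ (z ++ (v ++ (z ++ x))) = flat a b T := by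
  simp only [vRE, mem_sumRE, List.mem_flatMap, List.mem_map, mem_allRE, mem_geRE, mem_mul']
  constructor
  · rintro ⟨c, hc, q, hq, T₁, x, d, S, x', d', T₃, rfl, hgap, hne⟩
    have hX : ∃ a_1, (∃ n, 1 ≤ n ∧ a_1 = List.replicate n b) ∧ ∃ b_1, (∃ T, b_1 = flat a b T) ∧
        a_1 ++ b_1 = List.replicate (d'+1) b ++ flat a b T₃ :=
      ⟨_, ⟨d'+1, by omega, rfl⟩, _, ⟨T₃, rfl⟩, rfl⟩
    rcases Nat.lt_or_ge x' (x + q.2.2.toNat) with h | h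
    · -- second block too short
      have hq1 : q.2.2.toNat ≤ 1 := Bool.toNat_le _
      refine ⟨_, ⟨T₁, rfl⟩, _, ⟨x'+1, by omega, rfl⟩,
        List.replicate (x - x') a ++ (List.replicate (d+1) b ++ flat a b S),
        ⟨_, ⟨c, hc, q, hq, rfl⟩, ?_⟩, _, hX, ?_⟩
      · rw [mem_add', mem_mul', mem_mul']
        right
        exact ⟨_, (mem_geRE _ _ _).2 ⟨x - x', by omega, rfl⟩, _,
          (mem_gapRE _ _ _ _).2 ⟨d, S, hgap, rfl⟩, rfl⟩
      · have : List.replicate (x+1) a = List.replicate (x'+1) a ++ List.replicate (x-x') a := by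
          rw [← List.replicate_add]; congr 1; omega
        simp only [flat_append, flat_cons, List.append_assoc, this]
    · have h : x + q.2.2.toNat < x' := by omega
      refine ⟨_, ⟨T₁, rfl⟩, _, ⟨x+1, by omega, rfl⟩,
        (List.replicate (d+1) b ++ flat a b S) ++ List.replicate (x' - x) a,
        ⟨_, ⟨c, hc, q, hq, rfl⟩, ?_⟩, _, hX, ?_⟩
      · rw [mem_add', mem_mul', mem_mul']
        left
        exact ⟨_, (mem_gapRE _ _ _ _).2 ⟨d, S, hgap, rfl⟩, _,
          (mem_geRE _ _ _).2 ⟨x' - x, by omega, rfl⟩, rfl⟩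
      · have : List.replicate (x'+1) a = List.replicate (x'-x) a ++ List.replicate (x+1) a := by
          rw [← List.replicate_add]; congr 1; omega
        simp only [flat_append, flat_cons, List.append_assoc, this]
  · rintro ⟨_, ⟨T₁, rfl⟩, _, ⟨n, hn, rfl⟩, v, ⟨_, ⟨c, hc, q, hq, rfl⟩, hv⟩, _,
      ⟨_, ⟨k, hk, rfl⟩, _, ⟨T₃, rfl⟩, rfl⟩, h⟩
    obtain ⟨n, rfl⟩ : ∃ n', n = n' + 1 := ⟨n - 1, by omega⟩
    obtain ⟨k, rfl⟩ : ∃ n', k = n' + 1 := ⟨k - 1, by omega⟩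
    rw [mem_add', mem_mul', mem_mul'] at hv
    simp only [mem_gapRE, mem_geRE] at hv
    refine ⟨c, hc, q, hq, ?_⟩
    rcases hv with ⟨_, ⟨d, S, hg, rfl⟩, _, ⟨p, hp, rfl⟩, rfl⟩ |
      ⟨_, ⟨p, hp, rfl⟩, _, ⟨d, S, hg, rfl⟩, rfl⟩
    · obtain ⟨d', T', rfl⟩ := flat_parse hab T (T₁ ++ (n, d) :: S) (p + n)
        (List.replicate k b ++ flat a b T₃) (by
          rw [← h]
          have : List.replicate (p + n + 1) a = List.replicate p a ++ List.replicate (n+1) a := by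
            rw [← List.replicate_add]; congr 1
          have hk' : List.replicate (k+1) b = b :: List.replicate k b := List.replicate_succ
          simp only [flat_append, flat_cons, List.append_assoc, this, hk', List.cons_append])
      exact ⟨T₁, n, d, S, p + n, d', T', by simp, hg, by omega⟩
    · obtain ⟨d', T', rfl⟩ := flat_parse hab T (T₁ ++ (n + p, d) :: S) n
        (List.replicate k b ++ flat a b T₃) (by
          rw [← h]
          have : List.replicate (n + p + 1) a = List.replicate (n+1) a ++ List.replicate p a := by
            rw [← List.replicate_add]; congr 1; omega
          have hk' : List.replicate (k+1) b = b :: List.replicate k b := List.replicate_succ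
          simp only [flat_append, flat_cons, List.append_assoc, this, hk', List.cons_append])
      exact ⟨T₁, n + p, d, S, n, d', T', by simp, hg, by omega⟩

end words
end EPat

namespace EPat
open RegularExpression

def letters : RegularExpression Act → List Act
  | .zero => []
  | .epsilon => []
  | .char c => [c]
  | .plus e f => letters e ++ letters f
  | .comp e f => letters e ++ letters f
  | .star e => letters e

theorem mem_letters (e : RegularExpression Act) (l : List Act) (hl : l ∈ e.matches')
    (c : Act) (hc : c ∈ l) : c ∈ letters e := by
  induction e generalizing l with
  | zero => exact (mem_zero' _ hl).elim
  | epsilon =>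
    have : l = [] := hl
    subst this
    simp at hc
  | char x =>
    have : l = [x] := hl
    subst this
    simpa [letters] using hc
  | plus e f ihe ihf =>
    rw [plus_def, mem_add'] at hl
    rw [letters, List.mem_append]
    exact hl.imp (fun h => ihe l h hc) (fun h => ihf l h hc)
  | comp e f ihe ihf =>
    rw [comp_def, mem_mul'] at hl
    obtain ⟨u, hu, v, hv, rfl⟩ := hl
    rw [letters, List.mem_append]
    rw [List.mem_append] at hc
    exact hc.imp (fun h => ihe u hu h) (fun h => ihf v hv h)
  | star e ih =>
    rw [mem_star'] at hl
    obtain ⟨L, rfl, hL⟩ := hl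
    obtain ⟨y, hy, hcy⟩ := List.mem_flatten.1 hc
    exact ih y (hL y hy) hcy

theorem exists_bound (A : List Act) : ∃ K, 3 ≤ K ∧ ∀ c ∈ A, c.2.1 < K ∧ c.2.2.1 < K := by
  induction A with
  | nil => exact ⟨3, le_rfl, by simp⟩
  | cons c A ih =>
    obtain ⟨K, h3, hK⟩ := ih
    refine ⟨K + c.2.1 + c.2.2.1, by omega, ?_⟩
    intro c' hc'
    rcases List.mem_cons.1 hc' with rfl | h
    · omega
    · have := hK c' h
      omega

/-- the record of a configuration -/
def recd (K : ℕ) (p : St × Act) : List Tok :=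
  (List.range K).map fun l => (p.1 l, if l = K - 1 then Encodable.encode p.2 + 1 else 0)

theorem recd_length (K : ℕ) (p : St × Act) : (recd K p).length = K := by simp [recd]

theorem recd_get (K : ℕ) (p : St × Act) (t : ℕ) (ht : t < K) :
    (recd K p)[t]? = some (p.1 t, if t = K - 1 then Encodable.encode p.2 + 1 else 0) := by
  simp [recd, ht]

theorem dOf_length (K : ℕ) (hK : 0 < K) (c : Act) : (dOf K c).length = K := by
  simp [dOf]; omega

theorem dOf_get (K : ℕ) (c : Act) (t : ℕ) (ht : t < K) :
    (dOf K c)[t]? = some (if t = K - 1 then Encodable.encode c + 1 else 0) := by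
  unfold dOf
  by_cases h : t = K - 1
  · subst h
    simp
  · have : t < K - 1 := by omega
    rw [List.getElem?_append_left (by simpa using this)]
    simp [this, h]

theorem recd_snd (K : ℕ) (hK : 0 < K) (p : St × Act) : (recd K p).map Prod.snd = dOf K p.2 := by
  apply List.ext_getElem?
  intro t
  by_cases ht : t < K
  · rw [List.getElem?_map, recd_get K p t ht, dOf_get K _ t ht]
    rfl
  · rw [List.getElem?_eq_none, List.getElem?_eq_none]
    · rw [dOf_length K hK]; omega
    · rw [List.length_map, recd_length]; omega

theorem parse_one (K : ℕ) (hK : 0 < K) (c : Act) (T : List Tok) (h : T.map Prod.snd = dOf K c) :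
    ∃ s : St, (∀ l, K ≤ l → s l = 0) ∧ T = recd K (s, c) := by
  have hlen : T.length = K := by
    have := congrArg List.length h
    rwa [List.length_map, dOf_length K hK] at this
  refine ⟨fun l => (T.getD l (0,0)).1, ?_, ?_⟩
  · intro l hl
    simp [List.getD, List.getElem?_eq_none (l := T) (i := l) (by omega)]
  · apply List.ext_getElem?
    intro t
    by_cases ht : t < K
    · rw [recd_get K _ t ht]
      have h1 : (T.map Prod.snd)[t]? = (dOf K c)[t]? := by rw [h]
      rw [dOf_get K c t ht, List.getElem?_map] at h1
      obtain ⟨x, hx⟩ : ∃ x, T[t]? = some x := ⟨_, List.getElem?_eq_getElem (by omega)⟩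
      rw [hx] at h1
      simp only [Option.map_some, Option.some.injEq] at h1
      rw [hx]
      simp [List.getD, hx, ← h1]
    · rw [List.getElem?_eq_none, List.getElem?_eq_none]
      · rw [recd_length]; omega
      · omega

def tr (K : ℕ) (L : List (St × Act)) : List Tok := L.flatMap (recd K)

theorem tr_cons (K : ℕ) (p : St × Act) (L : List (St × Act)) :
    tr K (p :: L) = recd K p ++ tr K L := by simp [tr]

theorem tr_snd (K : ℕ) (hK : 0 < K) (L : List (St × Act)) :
    (tr K L).map Prod.snd = (L.map Prod.snd).flatMap (dOf K) := by
  induction L with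
  | nil => rfl
  | cons p L ih => rw [tr_cons, List.map_append, ih, recd_snd K hK]; simp

theorem parse_all (K : ℕ) (hK : 0 < K) (acts : List Act) (T : List Tok)
    (h : T.map Prod.snd = acts.flatMap (dOf K)) :
    ∃ L : List (St × Act), L.map Prod.snd = acts ∧ (∀ p ∈ L, ∀ l, K ≤ l → p.1 l = 0) ∧
      T = tr K L := by
  induction acts generalizing T with
  | nil =>
    refine ⟨[], rfl, by simp, ?_⟩
    simpa [tr] using h
  | cons c acts ih =>
    rw [List.flatMap_cons, List.map_eq_append_iff] at h
    obtain ⟨T₁, T₂, rfl, h1, h2⟩ := h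
    obtain ⟨s, hs, rfl⟩ := parse_one K hK c T₁ h1
    obtain ⟨L, hL, hz, rfl⟩ := ih T₂ h2
    refine ⟨(s, c) :: L, by simp [hL], ?_, (tr_cons _ _ _).symm⟩
    intro p hp
    rcases List.mem_cons.1 hp with rfl | hp
    · exact hs
    · exact hz p hp

theorem Bad.append_left {K : ℕ} {A : List Act} {T : List Tok} (h : Bad K A T) (S : List Tok) :
    Bad K A (S ++ T) := by
  obtain ⟨c, hc, q, hq, T₁, x, d, U, x', d', T₃, rfl, hgap, hne⟩ := h
  exact ⟨c, hc, q, hq, S ++ T₁, x, d, U, x', d', T₃, by simp, hgap, hne⟩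

theorem recd_split (K : ℕ) (p : St × Act) (i : ℕ) (hi : i < K) :
    ∃ d, recd K p = (recd K p).take i ++ (p.1 i, d) :: (recd K p).drop (i+1) := by
  have h := recd_get K p i hi
  refine ⟨if i = K - 1 then Encodable.encode p.2 + 1 else 0, ?_⟩
  · have hl : i < (recd K p).length := by rw [recd_length]; exact hi
    rw [List.getElem?_eq_getElem hl, Option.some.injEq] at h
    rw [← h, ← List.drop_eq_getElem_cons hl, List.take_append_drop]

theorem not_bad_two {K : ℕ} {A : List Act} (p q : St × Act) (R : List Tok)
    (hb : ¬ Bad K A (recd K p ++ (recd K q ++ R))) (hA : p.2 ∈ A) (k : ℕ × ℕ × Bool)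
    (hk : k ∈ checks K p.2) (h1 : k.1 < K) (h2 : k.2.1 < K) :
    q.1 k.2.1 = p.1 k.1 + k.2.2.toNat := by
  by_contra hne
  apply hb
  obtain ⟨d, hd⟩ := recd_split K p k.1 h1
  obtain ⟨d', hd'⟩ := recd_split K q k.2.1 h2
  refine ⟨p.2, hA, k, hk, (recd K p).take k.1, p.1 k.1, d,
    (recd K p).drop (k.1+1) ++ (recd K q).take k.2.1, q.1 k.2.1, d',
    (recd K q).drop (k.2.1+1) ++ R, ?_, ?_, hne⟩
  · conv_lhs => rw [hd, hd']
    simp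
  · have e1 : (p.1 k.1, d) :: (recd K p).drop (k.1+1) = (recd K p).drop k.1 := by
      conv_rhs => rw [hd]
      rw [List.drop_append_of_le_length (by simp [recd_length]; omega)]
      simp
    have e2 : d :: ((recd K p).drop (k.1+1) ++ (recd K q).take k.2.1).map Prod.snd =
        ((recd K p).drop k.1 ++ (recd K q).take k.2.1).map Prod.snd := by
      rw [← e1]; simp
    rw [e2, List.map_append, List.map_drop, List.map_take, recd_snd K (by omega),
      recd_snd K (by omega)]
    unfold dOf gap
    rw [List.drop_append_of_le_length (by simp; omega),
      List.take_append_of_le_length (by simp; omega)]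
    simp
    omega

theorem step_of_checks {K : ℕ} {c : Act} {s s' : St} (hs : ∀ l, K ≤ l → s l = 0)
    (hs' : ∀ l, K ≤ l → s' l = 0) (h1 : c.2.1 < K) (h2 : c.2.2.1 < K)
    (h : ∀ k ∈ checks K c, k.1 < K → k.2.1 < K → s' k.2.1 = s k.1 + k.2.2.toNat) :
    step c s s' := by
  constructor
  · intro l hl
    by_cases hlK : l < K
    · have := h (l, l, false) (by simp [checks, hl, hlK]) hlK hlK
      simpa using this
    · rw [hs l (by omega), hs' l (by omega)]
  · exact h (c.2.1, c.2.2.1, c.2.2.2) (by simp [checks]) h1 h2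

theorem checks_of_step {K : ℕ} {c : Act} {s s' : St} (h1 : c.2.1 < K) (h2 : c.2.2.1 < K)
    (h : step c s s') (k : ℕ × ℕ × Bool) (hk : k ∈ checks K c) :
    k.1 < K ∧ k.2.1 < K ∧ s' k.2.1 = s k.1 + k.2.2.toNat := by
  rcases List.mem_cons.1 hk with rfl | hk
  · exact ⟨h1, h2, h.2⟩
  · obtain ⟨l, hl, rfl⟩ := List.mem_map.1 hk
    simp only [List.mem_filter, List.mem_range, decide_eq_true_eq] at hl
    exact ⟨hl.1, hl.1, by simpa using h.1 l hl.2⟩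

def Steps : List (St × Act) → Prop
  | [] => True
  | [_] => True
  | p :: q :: L => step p.2 p.1 q.1 ∧ Steps (q :: L)

theorem steps_of_not_bad {K : ℕ} {A : List Act} (hK : ∀ c ∈ A, c.2.1 < K ∧ c.2.2.1 < K)
    (L : List (St × Act)) (hA : ∀ p ∈ L, p.2 ∈ A) (hz : ∀ p ∈ L, ∀ l, K ≤ l → p.1 l = 0)
    (hb : ¬ Bad K A (tr K L)) : Steps L := by
  induction L with
  | nil => trivial
  | cons p L ih =>
    cases L with
    | nil => trivial
    | cons q L =>
      refine ⟨?_, ih (fun x hx => hA x (by simp [hx])) (fun x hx => hz x (by simp [hx])) ?_⟩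
      · rw [tr_cons, tr_cons] at hb
        have hp := hA p (by simp)
        exact step_of_checks (hz p (by simp)) (hz q (by simp)) (hK _ hp).1 (hK _ hp).2
          (fun k hk h1 h2 => not_bad_two p q _ hb hp k hk h1 h2)
      · intro h
        apply hb
        rw [tr_cons]
        exact h.append_left _

theorem gap_get (K : ℕ) (c : Act) (i j t : ℕ) (ht : t ≤ K - 1 - i) :
    (gap K c i j)[t]? = some (if t = K - 1 - i then Encodable.encode c + 1 else 0) := by
  unfold gap
  by_cases h : t = K - 1 - i
  · subst h
    simp
  · have : t < K - 1 - i := by omega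
    rw [List.getElem?_append_left (by simpa using this)]
    simp [this, h]

theorem not_bad_of_steps {K : ℕ} {A : List Act} (hK : ∀ c ∈ A, c.2.1 < K ∧ c.2.2.1 < K)
    (L : List (St × Act)) (hL : ∀ p ∈ L, p.2 ∈ A) (hS : Steps L) : ¬ Bad K A (tr K L) := by
  rintro ⟨c, hc, k, hk, T₁, x, d, S, x', d', T₃, hT, hgap, hne⟩
  have hkb : k.1 < K ∧ k.2.1 < K := by
    have := checks_of_step (s := fun l => 0)
      (s' := fun l => 0) (hK c hc).1 (hK c hc).2
    rcases List.mem_cons.1 hk with rfl | hk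
    · exact hK c hc
    · obtain ⟨l, hl, rfl⟩ := List.mem_map.1 hk
      simp only [List.mem_filter, List.mem_range] at hl
      exact ⟨hl.1, hl.1⟩
  induction L generalizing T₁ with
  | nil => simp [tr] at hT
  | cons p L ih =>
    have hS' : Steps L := by
      cases L with
      | nil => trivial
      | cons q L => exact hS.2
    rw [tr_cons] at hT
    by_cases hm : K ≤ T₁.length
    · have e : T₁ = recd K p ++ T₁.drop K := by
        have h1 := congrArg (List.take K) hT
        rw [List.take_append_of_le_length (by rw [recd_length]),
          List.take_append_of_le_length hm, List.take_of_length_le (by rw [recd_length])] at h1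
        rw [h1, List.take_append_drop]
      rw [e, List.append_assoc, List.append_cancel_left_eq] at hT
      exact ih (fun q hq => hL q (by simp [hq])) hS' _ hT
    · have hlen : S.length = K - 1 - k.1 + k.2.1 := by
        have := congrArg List.length hgap
        simp [gap] at this
        omega
      have hG : ∀ t, t ≤ K - 1 - k.1 → ((recd K p ++ tr K L)[T₁.length + t]?).map Prod.snd =
          some (if t = K - 1 - k.1 then Encodable.encode c + 1 else 0) := by
        intro t ht
        rw [hT, List.getElem?_append_right (by omega)]
        have e2 : (x, d) :: (S ++ (x', d') :: T₃) = ((x, d) :: S) ++ (x', d') :: T₃ := rfl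
        rw [e2, List.getElem?_append_left (by simp; omega), ← List.getElem?_map]
        simp only [List.map_cons, hgap]
        rw [gap_get _ _ _ _ _ (by omega)]
        simp
      have hR : ∀ t, t < K → (recd K p ++ tr K L)[t]? =
          some (p.1 t, if t = K - 1 then Encodable.encode p.2 + 1 else 0) := by
        intro t ht
        rw [List.getElem?_append_left (by rw [recd_length]; exact ht), recd_get K p t ht]
      have hi : T₁.length = k.1 := by
        rcases Nat.lt_trichotomy T₁.length k.1 with h | h | h
        · have h1 := hG (K - 1 - k.1) le_rfl
          rw [hR _ (by omega), if_neg (by omega), if_pos rfl] at h1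
          simp at h1
        · exact h
        · have h1 := hG (K - 1 - T₁.length) (by omega)
          rw [hR _ (by omega)] at h1
          simp at h1
          split_ifs at h1 <;> omega
      have hcp : c = p.2 := by
        have h1 := hG (K - 1 - k.1) le_rfl
        rw [hR _ (by omega)] at h1
        simp only [Option.map_some, Option.some.injEq, if_true] at h1
        rw [if_pos (by omega)] at h1
        exact Encodable.encode_injective (by omega)
      have hx : x = p.1 k.1 := by
        have h1 := hR k.1 hkb.1
        rw [hT, ← hi] at h1
        simp at h1
        rw [← hi]
        exact h1.1
      have hx' : (tr K L)[k.2.1]? = some (x', d') := by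
        have h1 : (recd K p ++ tr K L)[K + k.2.1]? = some (x', d') := by
          rw [hT, List.getElem?_append_right (by omega)]
          have e2 : (x, d) :: (S ++ (x', d') :: T₃) = ((x, d) :: S) ++ (x', d') :: T₃ := rfl
          rw [e2, List.getElem?_append_right (by simp; omega)]
          have : K + k.2.1 - T₁.length - ((x, d) :: S).length = 0 := by simp; omega
          rw [this]; rfl
        rw [List.getElem?_append_right (by rw [recd_length]; omega), recd_length] at h1
        simpa using h1
      cases L with
      | nil => simp [tr] at hx'
      | cons q L =>
        rw [tr_cons, List.getElem?_append_left (by rw [recd_length]; exact hkb.2),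
          recd_get K q _ hkb.2] at hx'
        simp only [Option.some.injEq, Prod.mk.injEq] at hx'
        subst hcp
        have := checks_of_step (hK _ hc).1 (hK _ hc).2 hS.1 k hk
        apply hne
        rw [← hx'.1, hx]
        exact this.2.2

/-- attach states to an execution -/
theorem steps_of_exec (l : List Act) (c : Act) (s s' : St) (h : Exec l s s') :
    ∃ L : List (St × Act), Steps L ∧ L.map Prod.snd = l ++ [c] ∧ L.head?.map Prod.fst = some s := by
  induction l generalizing s with
  | nil => exact ⟨[(s, c)], trivial, rfl, rfl⟩
  | cons x l ih =>
    obtain ⟨s₁, h1, h2⟩ := h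
    obtain ⟨L, hS, hm, hh⟩ := ih s₁ h2
    cases L with
    | nil => simp at hh
    | cons q L =>
      refine ⟨(s, x) :: q :: L, ⟨?_, hS⟩, ?_, rfl⟩
      · simp at hh
        rw [hh]; exact h1
      · rw [List.map_cons, hm]; rfl

theorem exec_of_steps (l : List Act) (c : Act) (p : St × Act) (L : List (St × Act))
    (hS : Steps (p :: L)) (hm : (p :: L).map Prod.snd = l ++ [c]) : ∃ s', Exec l p.1 s' := by
  induction l generalizing p L with
  | nil => exact ⟨p.1, rfl⟩
  | cons x l ih =>
    cases L with
    | nil => simp at hm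
    | cons q L =>
      simp only [List.map_cons, List.cons_append, List.cons.injEq] at hm
      obtain ⟨rfl, hm⟩ := hm
      obtain ⟨s', hs'⟩ := ih q L hS.2 (by simpa using hm)
      exact ⟨s', q.1, hS.1, hs'⟩

def nop : Act := (2, 0, 0, false)

theorem trace_iff {K : ℕ} (hK3 : 3 ≤ K) {A : List Act}
    (hK : ∀ c ∈ A, c.2.1 < K ∧ c.2.2.1 < K) (hnop : nop ∈ A) (e : RegularExpression Act)
    (he : ∀ c ∈ letters e, c ∈ A) (n : ℕ) :
    (∃ l ∈ e.matches', ∃ T : List Tok,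
      ((n, 0) :: (0, 0) :: T).map Prod.snd = (nop :: (l ++ [nop])).flatMap (dOf K) ∧
      ¬ Bad K A ((n, 0) :: (0, 0) :: T)) ↔ ∃ s s' : St, s 0 = n ∧ s 1 = 0 ∧ Run e s s' := by
  constructor
  · rintro ⟨l, hl, T, hT, hb⟩
    obtain ⟨L, hm, hz, h⟩ := parse_all K (by omega) _ _ hT
    rw [h] at hb
    have hA : ∀ p ∈ L, p.2 ∈ A := by
      intro p hp
      have : p.2 ∈ nop :: (l ++ [nop]) := by
        rw [← hm]; exact List.mem_map_of_mem hp
      simp only [List.mem_cons, List.mem_append, List.not_mem_nil, or_false] at this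
      rcases this with h | h | h
      · rw [h]; exact hnop
      · exact he _ (mem_letters e l hl _ h)
      · rw [h]; exact hnop
    have hS := steps_of_not_bad hK L hA hz hb
    cases L with
    | nil => simp at hm
    | cons p L =>
      obtain ⟨s', hs'⟩ := exec_of_steps (nop :: l) nop p L hS hm
      obtain ⟨s₁, h1, h2⟩ := hs'
      have g0 : p.1 0 = n := by
        have := congrArg (fun T : List Tok => T[0]?) h
        simp only [tr_cons] at this
        rw [List.getElem?_append_left (by rw [recd_length]; omega),
          recd_get K p _ (by omega)] at this
        simp at this
        exact this.1.symm
      have g1 : p.1 1 = 0 := by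
        have := congrArg (fun T : List Tok => T[1]?) h
        simp only [tr_cons] at this
        rw [List.getElem?_append_left (by rw [recd_length]; omega),
          recd_get K p _ (by omega)] at this
        simp at this
        exact this.1.symm
      refine ⟨s₁, s', ?_, ?_, l, hl, h2⟩
      · rw [h1.1 0 (by simp [nop]), g0]
      · rw [h1.1 1 (by simp [nop]), g1]
  · rintro ⟨s, s', h0, h1, l, hl, hE⟩
    have hE' : Exec (nop :: l) s s' := ⟨s, ⟨fun _ _ => rfl, by simp [nop]⟩, hE⟩
    obtain ⟨L, hS, hm, hh⟩ := steps_of_exec _ nop _ _ hE'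
    have hA : ∀ p ∈ L, p.2 ∈ A := by
      intro p hp
      have : p.2 ∈ nop :: (l ++ [nop]) := by
        rw [← List.cons_append, ← hm]; exact List.mem_map_of_mem hp
      simp only [List.mem_cons, List.mem_append, List.not_mem_nil, or_false] at this
      rcases this with h | h | h
      · rw [h]; exact hnop
      · exact he _ (mem_letters e l hl _ h)
      · rw [h]; exact hnop
    have hb := not_bad_of_steps hK L hA hS
    have hsnd := tr_snd K (by omega) L
    rw [hm] at hsnd
    cases L with
    | nil => simp at hh
    | cons p L =>
      simp at hh
      have g0 : (tr K (p :: L))[0]? = some (n, 0) := by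
        rw [tr_cons, List.getElem?_append_left (by rw [recd_length]; omega),
          recd_get K p _ (by omega), if_neg (by omega), hh, h0]
      have g1 : (tr K (p :: L))[1]? = some (0, 0) := by
        rw [tr_cons, List.getElem?_append_left (by rw [recd_length]; omega),
          recd_get K p _ (by omega), if_neg (by omega), hh, h1]
      obtain ⟨T, hT⟩ : ∃ T, tr K (p :: L) = (n, 0) :: (0, 0) :: T := by
        rcases htr : tr K (p :: L) with _ | ⟨x, _ | ⟨y, T⟩⟩
        · simp [htr] at g0
        · simp [htr] at g1
        · simp [htr] at g0 g1
          exact ⟨T, by rw [g0, g1]⟩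
      rw [hT] at hsnd hb
      exact ⟨l, hl, T, hsnd, hb⟩

end EPat

namespace EPat
open RegularExpression

theorem applySub_map {σ : Type} (s : ℕ → List σ) (l : List ℕ) :
    applySub s (l.map Sum.inr) = l.flatMap s := by
  induction l with
  | nil => rfl
  | cons x l ih => rw [List.map_cons, applySub, ih]; rfl

theorem mem_varsOf_map {σ : Type} (l : List ℕ) (x : ℕ) :
    x ∈ varsOf (l.map Sum.inr : Pattern σ) ↔ x ∈ l := by
  simp [varsOf]

section final
variable {σ : Type} (a b : σ) (K : ℕ) (A : List Act) (e : RegularExpression Act)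

def headRE : RegularExpression σ :=
  char a * (char b * (char a * (char b *
    (seqRE a b ((dOf K nop).drop 2) * trans a b K (e * char nop)))))

def alphaPat (n : ℕ) : List ℕ := List.replicate n 0 ++ [1]
def alphaCon : RegConstraint σ := [(0, char a), (1, headRE a b K e)]
def betaPat : List ℕ := [0, 1, 2, 1, 3]
def betaCon : RegConstraint σ :=
  [(0, allRE a b), (1, geRE a 1), (2, vRE a b K A), (3, geRE b 1 * allRE a b)]

theorem mem_headRE (w : List σ) : w ∈ (headRE a b K e).matches' ↔
    ∃ l ∈ e.matches', ∃ T : List Tok,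
      T.map Prod.snd = (dOf K nop).drop 2 ++ (l ++ [nop]).flatMap (dOf K) ∧
      w = a :: b :: a :: b :: flat a b T := by
  simp only [headRE, mem_mul', mem_char', mem_seqRE, mem_trans]
  constructor
  · rintro ⟨_, rfl, _, ⟨_, rfl, _, ⟨_, rfl, _, ⟨_, rfl, _, ⟨_, ⟨S, hS, rfl⟩, _,
      ⟨_, ⟨l, hl, _, rfl, rfl⟩, T, hT, rfl⟩, rfl⟩, rfl⟩, rfl⟩, rfl⟩, rfl⟩
    exact ⟨l, hl, S ++ T, by rw [List.map_append, hS, hT], by simp⟩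
  · rintro ⟨l, hl, T, hT, rfl⟩
    rw [List.map_eq_append_iff] at hT
    obtain ⟨S, T, rfl, hS, hT⟩ := hT
    exact ⟨_, rfl, _, ⟨_, rfl, _, ⟨_, rfl, _, ⟨_, rfl, _, ⟨_, ⟨S, hS, rfl⟩, _,
      ⟨_, ⟨l, hl, _, rfl, rfl⟩, T, hT, rfl⟩, rfl⟩, rfl⟩, rfl⟩, rfl⟩, by simp⟩

theorem mem_alpha (n : ℕ) (w : List σ) :
    w ∈ LangE ((alphaPat n).map Sum.inr) (constraintOf (alphaCon a b K e)) ↔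
    ∃ v ∈ (headRE a b K e).matches', w = List.replicate n a ++ v := by
  have c0 : constraintOf (alphaCon a b K e) 0 = (char a).matches' := rfl
  have c1 : constraintOf (alphaCon a b K e) 1 = (headRE a b K e).matches' := rfl
  have hrep : ∀ m, (List.replicate m [a]).flatten = List.replicate m a := by
    intro m; simp
  constructor
  · rintro ⟨s, hs, rfl⟩
    rw [applySub_map]
    have h1 : s 1 ∈ (headRE a b K e).matches' :=
      c1 ▸ hs 1 ((mem_varsOf_map _ _).2 (by simp [alphaPat]))
    refine ⟨s 1, h1, ?_⟩
    rw [alphaPat, List.flatMap_append]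
    congr 1
    · rcases n with _ | n
      · rfl
      · have h0 : s 0 ∈ (char a).matches' :=
          c0 ▸ hs 0 ((mem_varsOf_map _ _).2 (by simp [alphaPat, List.replicate_succ]))
        have h0 : s 0 = [a] := h0
        rw [List.flatMap_def, List.map_replicate, h0, hrep]
    · simp
  · rintro ⟨v, hv, rfl⟩
    refine ⟨fun x => if x = 0 then [a] else v, ?_, ?_⟩
    · intro x hx
      rw [mem_varsOf_map] at hx
      have : x = 0 ∨ x = 1 := by
        simp [alphaPat] at hx
        omega
      rcases this with rfl | rfl
      · rw [c0]; rfl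
      · rw [c1]; exact hv
    · rw [applySub_map, alphaPat, List.flatMap_append, List.flatMap_def, List.map_replicate]
      simp

theorem mem_beta (w : List σ) :
    w ∈ LangE (betaPat.map Sum.inr) (constraintOf (betaCon a b K A)) ↔
    ∃ u ∈ (allRE a b).matches', ∃ z ∈ (geRE a 1).matches',
      ∃ v ∈ (vRE a b K A).matches', ∃ x ∈ (geRE b 1 * allRE a b).matches',
      u ++ (z ++ (v ++ (z ++ x))) = w := by
  have c0 : constraintOf (betaCon a b K A) 0 = (allRE a b).matches' := rfl
  have c1 : constraintOf (betaCon a b K A) 1 = (geRE a 1).matches' := rfl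
  have c2 : constraintOf (betaCon a b K A) 2 = (vRE a b K A).matches' := rfl
  have c3 : constraintOf (betaCon a b K A) 3 = (geRE b 1 * allRE a b).matches' := rfl
  constructor
  · rintro ⟨s, hs, rfl⟩
    rw [applySub_map]
    have h := fun x hx => hs x ((mem_varsOf_map _ _).2 hx)
    exact ⟨s 0, c0 ▸ h 0 (by simp [betaPat]), s 1, c1 ▸ h 1 (by simp [betaPat]),
      s 2, c2 ▸ h 2 (by simp [betaPat]), s 3, c3 ▸ h 3 (by simp [betaPat]), by simp [betaPat]⟩
  · rintro ⟨u, hu, z, hz, v, hv, x, hx, rfl⟩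
    refine ⟨fun i => if i = 0 then u else if i = 1 then z else if i = 2 then v else x, ?_, ?_⟩
    · intro i hi
      rw [mem_varsOf_map] at hi
      simp only [betaPat, List.mem_cons, List.not_mem_nil, or_false] at hi
      rcases hi with rfl | rfl | rfl | rfl | rfl
      · rw [c0]; exact hu
      · rw [c1]; exact hz
      · rw [c2]; exact hv
      · rw [c1]; exact hz
      · rw [c3]; exact hx
    · rw [applySub_map]
      simp [betaPat]

theorem incl_iff (hab : a ≠ b) (hK3 : 3 ≤ K)
    (hK : ∀ c ∈ A, c.2.1 < K ∧ c.2.2.1 < K) (hnop : nop ∈ A)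
    (he : ∀ c ∈ letters e, c ∈ A) (n : ℕ) :
    LangE ((alphaPat n).map Sum.inr) (constraintOf (alphaCon a b K e)) ⊆
      LangE (betaPat.map Sum.inr) (constraintOf (betaCon a b K A)) ↔
    ¬ ∃ s s' : St, s 0 = n ∧ s 1 = 0 ∧ Run e s s' := by
  have hd : dOf K nop = 0 :: 0 :: (dOf K nop).drop 2 := by
    obtain ⟨k, rfl⟩ : ∃ k, K = k + 3 := ⟨K - 3, by omega⟩
    simp [dOf, List.replicate_succ]
  have hmap : ∀ (l : List Act) (T : List Tok),
      ((n, 0) :: (0, 0) :: T).map Prod.snd = (nop :: (l ++ [nop])).flatMap (dOf K) ↔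
      T.map Prod.snd = (dOf K nop).drop 2 ++ (l ++ [nop]).flatMap (dOf K) := by
    intro l T
    rw [List.flatMap_cons, hd]
    simp
  have hflat : ∀ T : List Tok, List.replicate n a ++ a :: b :: a :: b :: flat a b T =
      flat a b ((n, 0) :: (0, 0) :: T) := by
    intro T
    simp [List.replicate_succ']
  rw [← trace_iff hK3 hK hnop e he n]
  constructor
  · rintro h ⟨l, hl, T, hT, hb⟩
    apply hb
    rw [bad_iff hab, ← mem_beta]
    apply h
    rw [mem_alpha, ← hflat]
    exact ⟨_, (mem_headRE _ _ _ _ _).2 ⟨l, hl, T, (hmap l T).1 hT, rfl⟩, rfl⟩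
  · intro h w hw
    rw [mem_alpha] at hw
    obtain ⟨v, hv, rfl⟩ := hw
    obtain ⟨l, hl, T, hT, rfl⟩ := (mem_headRE _ _ _ _ _).1 hv
    rw [hflat, mem_beta, ← bad_iff hab]
    by_contra hb
    exact h ⟨l, hl, T, (hmap l T).2 hT, hb⟩

end final

theorem computable_rep (x y : ℕ) :
    Computable (fun n : ℕ => (List.replicate n x ++ [y] : List ℕ)) := by
  apply Primrec.to_comp
  have h : Primrec (fun n : ℕ => (List.range n).map (fun _ => x)) :=
    Primrec.list_map Primrec.list_range (Primrec.const x).to₂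
  have h2 := Primrec.list_append.comp h (Primrec.const [y])
  refine h2.of_eq ?_
  intro n
  simp

theorem encode_map_inr {σ : Type} [Encodable σ] (l : List ℕ) :
    Encodable.encode (l.map Sum.inr : List (σ ⊕ ℕ)) =
      Encodable.encode (l.map (fun n => 2 * n + 1) : List ℕ) := by
  induction l with
  | nil => rfl
  | cons x l ih =>
    simp only [List.map_cons, Encodable.encode_list_cons, ih]
    rfl

/-- encoding of the inputs in terms of the code of the first pattern -/
theorem computable_pair {f : ℕ → ℕ} (hf : Computable f) (c d : ℕ) :
    Computable fun n => Nat.pair (Nat.pair (f n) c) d :=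
  (Primrec₂.natPair.to_comp.comp (Primrec₂.natPair.to_comp.comp hf (Computable.const c))
    (Computable.const d))

end EPat

theorem inclusion_EPatternRegConstraints_undecidable
    (σ : Type) [Fintype σ] [Encodable σ] (hcard : 2 ≤ Fintype.card σ) :
    (¬ ∃ f : ℕ → Bool, Computable f ∧
      ∀ inp : (Pattern σ × RegConstraint σ) × (Pattern σ × RegConstraint σ),
        (f (encodeInput inp) = true ↔
          LangE inp.1.1 (constraintOf inp.1.2) ⊆ LangE inp.2.1 (constraintOf inp.2.2))) ∧
    (¬ ∃ f : ℕ → Bool, Computable f ∧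
      ∀ inp : (TFPattern × RegConstraint σ) × (TFPattern × RegConstraint σ),
        (f (encodeTFInput inp) = true ↔
          LangE (inp.1.1.map Sum.inr) (constraintOf inp.1.2) ⊆
            LangE (inp.2.1.map Sum.inr) (constraintOf inp.2.2))) := by
  obtain ⟨e, he⟩ := EPat.exists_undecidable
  obtain ⟨a, b, hab⟩ := Fintype.exists_pair_of_one_lt_card (α := σ) (by omega)
  obtain ⟨K, hK3, hK⟩ := EPat.exists_bound (EPat.nop :: EPat.letters e)
  have key := EPat.incl_iff a b K (EPat.nop :: EPat.letters e) e hab hK3 hK (by simp)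
    (fun c hc => by simp [hc])
  constructor
  · rintro ⟨f, hf, h⟩
    apply he
    refine ⟨fun n => !(f (encodeInput
      (((EPat.alphaPat n).map Sum.inr, EPat.alphaCon a b K e),
        (EPat.betaPat.map Sum.inr, EPat.betaCon a b K (EPat.nop :: EPat.letters e))))), ?_, ?_⟩
    · refine Primrec.not.to_comp.comp (hf.comp ?_)
      refine (EPat.computable_pair (Computable.encode.comp (EPat.computable_rep 1 3))
        (Encodable.encode ((EPat.alphaCon a b K e).map fun q => (q.1, encRE q.2)))
        (Encodable.encode ((EPat.betaPat.map Sum.inr : List (σ ⊕ ℕ)),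
          (EPat.betaCon a b K (EPat.nop :: EPat.letters e)).map fun q =>
            (q.1, encRE q.2)))).of_eq ?_
      intro n
      simp only [encodeInput, Encodable.encode_prod_val, EPat.encode_map_inr]
      simp only [EPat.alphaPat, List.map_append, List.map_replicate, List.map_cons, List.map_nil,
        Nat.mul_zero, Nat.zero_add, Nat.mul_one]
    · intro n
      rw [Bool.not_eq_true', ← Bool.not_eq_true, h, key, not_not]
  · rintro ⟨f, hf, h⟩
    apply he
    refine ⟨fun n => !(f (encodeTFInput
      ((EPat.alphaPat n, EPat.alphaCon a b K e),
        (EPat.betaPat, EPat.betaCon a b K (EPat.nop :: EPat.letters e))))), ?_, ?_⟩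
    · refine Primrec.not.to_comp.comp (hf.comp ?_)
      refine (EPat.computable_pair (Computable.encode.comp (EPat.computable_rep 0 1))
        (Encodable.encode ((EPat.alphaCon a b K e).map fun q => (q.1, encRE q.2)))
        (Encodable.encode (EPat.betaPat,
          (EPat.betaCon a b K (EPat.nop :: EPat.letters e)).map fun q =>
            (q.1, encRE q.2)))).of_eq ?_
      intro n
      simp only [encodeTFInput, Encodable.encode_prod_val, EPat.alphaPat]
    · intro n
      rw [Bool.not_eq_true', ← Bool.not_eq_true, h, key, not_not]
end

section
/- The inclusion problem for non-erasing pattern languages with regular constraints is undecidable: for every finite alphabet Σ with |Σ| ≥ 2 there is no algorithm that, given two patterns with regular constraints (α, r_α) and (β, r_β) over Σ, decides whether L_NE(α, r_α) ⊆ L_NE(β, r_β). Formally, the predicate 'L_NE(α, r_α) ⊆ L_NE(β, r_β)' on encoded input pairs is not a computable predicate; moreover this remains true when α and β are required to be terminal-free. -/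
/-- The non-erasing constrained pattern language `L_NE(p, r)`. -/
def LangNE {σ : Type} (p : Pattern σ) (r : ℕ → Set (List σ)) : Set (List σ) :=
  {w | ∃ s, Valid r p s ∧ (∀ x ∈ varsOf p, s x ≠ []) ∧ applySub s p = w}

namespace PRC

/-- Non-erasing language of a terminal-free pattern over an arbitrary variable type. -/
def Lang {Γ X : Type} (p : List X) (r : X → RegularExpression Γ) : Set (List Γ) :=
  {w | ∃ s : X → List Γ, (∀ x ∈ p, s x ∈ (r x).matches' ∧ s x ≠ []) ∧ p.flatMap s = w}

/-- Erasing language. -/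
def LangE {Γ X : Type} (p : List X) (r : X → RegularExpression Γ) : Set (List Γ) :=
  {w | ∃ s : X → List Γ, (∀ x ∈ p, s x ∈ (r x).matches') ∧ p.flatMap s = w}

/-- Finite unions of non-erasing languages. -/
def Dfb {Γ : Type} (L : Set (List Γ)) : Prop :=
  ∃ l : List (List ℕ × (ℕ → RegularExpression Γ)), ∀ w, w ∈ L ↔ ∃ q ∈ l, w ∈ Lang q.1 q.2

theorem lang_congr_map {Γ X Y : Type} (f : X → Y) (hf : Function.Injective f) (p : List X)
    (r : X → RegularExpression Γ) (r' : Y → RegularExpression Γ) (h : ∀ x, r' (f x) = r x) :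
    Lang (p.map f) r' = Lang p r := by
  ext w
  constructor
  · rintro ⟨s, hs, rfl⟩
    refine ⟨s ∘ f, fun x hx => ?_, ?_⟩
    · have := hs (f x) (List.mem_map_of_mem hx)
      rwa [h] at this
    · rw [List.flatMap_map]; rfl
  · rintro ⟨s, hs, rfl⟩
    refine ⟨Function.extend f s (fun _ => []), ?_, ?_⟩
    · intro y hy
      obtain ⟨x, hx, rfl⟩ := List.mem_map.1 hy
      rw [hf.extend_apply, h]
      exact hs x hx
    · simp only [List.flatMap_map, hf.extend_apply]

theorem exists_nat_lang {Γ X : Type} [Countable X] (p : List X) (r : X → RegularExpression Γ) :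
    ∃ (p' : List ℕ) (r' : ℕ → RegularExpression Γ), Lang p' r' = Lang p r := by
  obtain ⟨f, hf⟩ := exists_injective_nat X
  exact ⟨p.map f, Function.extend f r (fun _ => 0),
    lang_congr_map f hf p r _ fun x => hf.extend_apply _ _ _⟩

theorem dfb_lang {Γ X : Type} [Countable X] (p : List X) (r : X → RegularExpression Γ) :
    Dfb (Lang p r) := by
  obtain ⟨p', r', h⟩ := exists_nat_lang p r
  exact ⟨[(p', r')], fun w => by simp [h]⟩

theorem dfb_list {Γ ι : Type} (l : List ι) (L : ι → Set (List Γ)) (h : ∀ i ∈ l, Dfb (L i)) :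
    Dfb {w | ∃ i ∈ l, w ∈ L i} := by
  induction l with
  | nil => exact ⟨[], by simp⟩
  | cons i l ih =>
    obtain ⟨a, ha⟩ := h i (by simp)
    obtain ⟨b, hb⟩ := ih fun j hj => h j (by simp [hj])
    refine ⟨a ++ b, fun w => ?_⟩
    have := hb w
    simp only [Set.mem_ofPred_eq] at this
    simp [or_and_right, exists_or, ha, this]

theorem dfb_exists {Γ ι : Type} [Finite ι] (L : ι → Set (List Γ)) (h : ∀ i, Dfb (L i)) :
    Dfb {w | ∃ i, w ∈ L i} := by
  cases nonempty_fintype ι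
  have := dfb_list (Finset.univ : Finset ι).toList L fun i _ => h i
  simpa using this

theorem dfb_and {Γ : Type} (P : Prop) (L : Set (List Γ)) (h : P → Dfb L) :
    Dfb {w | P ∧ w ∈ L} := by
  by_cases hP : P
  · simpa [hP] using h hP
  · exact ⟨[], by simp [hP]⟩

theorem dfb_or {Γ : Type} (L L' : Set (List Γ)) (h : Dfb L) (h' : Dfb L') :
    Dfb {w | w ∈ L ∨ w ∈ L'} := by
  obtain ⟨a, ha⟩ := h
  obtain ⟨b, hb⟩ := h'
  exact ⟨a ++ b, fun w => by simp [or_and_right, exists_or, ha, hb]⟩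

open Classical in
theorem dfb_langE {Γ X : Type} [Countable X] (p : List X) (r : X → RegularExpression Γ) :
    Dfb (LangE p r) := by
  have key : LangE p r = {w | ∃ S : ↥(p.toFinset.powerset), w ∈
      {w | (∀ x ∈ S.1, [] ∈ (r x).matches') ∧ w ∈ Lang (p.filter (fun x => x ∉ S.1)) r}} := by
    ext w
    have hfl : ∀ (s : X → List Γ) (q : List X) (S : Finset X), (∀ x ∈ S, s x = []) →
        (q.filter (fun x => x ∉ S)).flatMap s = q.flatMap s := by
      intro s q S hS
      induction q with
      | nil => rfl
      | cons a q ih =>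
        by_cases ha : a ∈ S
        · simpa [ha, hS a ha] using ih
        · simpa [ha] using ih
    constructor
    · rintro ⟨s, hs, rfl⟩
      refine ⟨⟨p.toFinset.filter (fun x => s x = []), by simp⟩, ?_, s, ?_, ?_⟩
      · intro x hx
        simp only [Finset.mem_filter, List.mem_toFinset] at hx
        exact hx.2 ▸ hs x hx.1
      · intro x hx
        simp only [Finset.mem_filter, List.mem_toFinset, List.mem_filter, decide_eq_true_eq] at hx
        exact ⟨hs x hx.1, fun h => hx.2 ⟨hx.1, h⟩⟩
      · apply hfl
        simp
    · rintro ⟨⟨S, hS⟩, h1, s, hs, rfl⟩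
      simp only at h1 hs
      refine ⟨fun x => if x ∈ S then [] else s x, ?_, ?_⟩
      · intro x hx
        by_cases h : x ∈ S
        · simpa [h] using h1 x h
        · simpa [h] using (hs x (by simp [h, hx])).1
      · rw [← hfl _ p S (by simp +contextual)]
        apply List.flatMap_congr
        intro x hx
        simp only [List.mem_filter, decide_eq_true_eq] at hx
        simp [hx.2]
  rw [key]
  exact dfb_exists _ fun S => dfb_and _ _ fun _ => dfb_lang _ _

/-- A regular expression for all words over a given subset of a finite alphabet. -/
theorem exists_alph {Γ : Type} [Finite Γ] (S : Γ → Prop) :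
    ∃ e : RegularExpression Γ, ∀ w, w ∈ e.matches' ↔ ∀ c ∈ w, S c := by
  classical
  cases nonempty_fintype Γ
  have h1 : ∀ l : List Γ, ∃ e : RegularExpression Γ, ∀ w, w ∈ e.matches' ↔ ∃ c ∈ l, w = [c] := by
    intro l
    induction l with
    | nil => exact ⟨0, fun w => by simp [Language.notMem_zero]⟩
    | cons a l ih =>
      obtain ⟨e, he⟩ := ih
      refine ⟨.char a + e, fun w => ?_⟩
      rw [RegularExpression.matches'_add, Language.mem_add, he, RegularExpression.matches'_char]
      simp only [List.mem_cons, exists_eq_or_imp]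
      exact Iff.rfl
  obtain ⟨e, he⟩ := h1 (Finset.univ.filter S).toList
  refine ⟨e.star, fun w => ?_⟩
  rw [RegularExpression.matches'_star, Language.mem_kstar]
  simp only [he]
  constructor
  · rintro ⟨L, rfl, hL⟩ c hc
    obtain ⟨y, hy, hcy⟩ := List.mem_flatten.1 hc
    obtain ⟨d, hd, rfl⟩ := hL y hy
    simp only [List.mem_singleton] at hcy
    subst hcy
    simpa using hd
  · intro h
    refine ⟨w.map (fun c => [c]), ?_, ?_⟩
    · induction w with
      | nil => rfl
      | cons a w ih => simp [← ih (fun c hc => h c (by simp [hc]))]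
    · intro y hy
      obtain ⟨c, hc, rfl⟩ := List.mem_map.1 hy
      exact ⟨c, by simpa using h c hc, rfl⟩

/-- The regular expression of a word. -/
def wordRE {Γ : Type} : List Γ → RegularExpression Γ
  | [] => .epsilon
  | a :: w => .comp (.char a) (wordRE w)

theorem mem_char {Γ : Type} (a : Γ) (v : List Γ) :
    v ∈ (RegularExpression.char a).matches' ↔ v = [a] := Iff.rfl

theorem mem_wordRE {Γ : Type} (w v : List Γ) : v ∈ (wordRE w).matches' ↔ v = w := by
  induction w generalizing v with
  | nil => exact Iff.rfl
  | cons a w ih =>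
    rw [wordRE, RegularExpression.comp_def, RegularExpression.matches'_mul, Language.mem_mul]
    simp only [ih, mem_char]
    simp [eq_comm]

/-- Substituting words for letters in a regular expression. -/
def subRE {Γ Δ : Type} (h : Γ → List Δ) : RegularExpression Γ → RegularExpression Δ
  | .zero => .zero
  | .epsilon => .epsilon
  | .char a => wordRE (h a)
  | .plus e f => .plus (subRE h e) (subRE h f)
  | .comp e f => .comp (subRE h e) (subRE h f)
  | .star e => .star (subRE h e)

theorem mem_subRE {Γ Δ : Type} (h : Γ → List Δ) (e : RegularExpression Γ) (v : List Δ) :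
    v ∈ (subRE h e).matches' ↔ ∃ w ∈ e.matches', v = w.flatMap h := by
  induction e generalizing v with
  | zero => simp [subRE, Language.notMem_zero]
  | epsilon => simp [subRE, Language.mem_one]
  | char a => simp [subRE, mem_wordRE, mem_char, -RegularExpression.matches']
  | plus e f ihe ihf =>
    simp only [subRE, RegularExpression.plus_def, RegularExpression.matches'_add, Language.mem_add,
      ihe, ihf, or_and_right, exists_or]
  | comp e f ihe ihf =>
    simp only [subRE, RegularExpression.comp_def, RegularExpression.matches'_mul, Language.mem_mul,
      ihe, ihf]
    constructor
    · rintro ⟨_, ⟨a, ha, rfl⟩, _, ⟨b, hb, rfl⟩, rfl⟩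
      exact ⟨a ++ b, ⟨a, ha, b, hb, rfl⟩, by simp⟩
    · rintro ⟨_, ⟨a, ha, b, hb, rfl⟩, rfl⟩
      exact ⟨_, ⟨a, ha, rfl⟩, _, ⟨b, hb, rfl⟩, by simp⟩
  | star e ih =>
    simp only [subRE, RegularExpression.matches'_star, Language.mem_kstar, ih]
    constructor
    · rintro ⟨L, rfl, hL⟩
      have : ∃ M : List (List Γ), (∀ y ∈ M, y ∈ e.matches') ∧
          L = M.map (fun w => w.flatMap h) := by
        induction L with
        | nil => exact ⟨[], by simp⟩
        | cons y L ih2 =>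
          obtain ⟨M, hM, rfl⟩ := ih2 fun z hz => hL z (by simp [hz])
          obtain ⟨w, hw, rfl⟩ := hL y (by simp)
          exact ⟨w :: M, by simpa using ⟨hw, hM⟩, by simp⟩
      obtain ⟨M, hM, rfl⟩ := this
      refine ⟨M.flatten, ⟨M, rfl, hM⟩, ?_⟩
      clear hM hL
      induction M with
      | nil => rfl
      | cons y M ih2 => simp [ih2]
    · rintro ⟨_, ⟨M, rfl, hM⟩, rfl⟩
      refine ⟨M.map (fun w => w.flatMap h), ?_, ?_⟩
      · clear hM
        induction M with
        | nil => rfl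
        | cons y M ih2 => simp [ih2]
      · intro y hy
        obtain ⟨w, hw, rfl⟩ := List.mem_map.1 hy
        exact ⟨w, hM w hw, rfl⟩

/-- Coding transfers languages. -/
theorem lang_sub {Γ Δ X : Type} (h : Γ → List Δ)
    (hne : ∀ a, h a ≠ []) (p : List X) (r : X → RegularExpression Γ) (v : List Δ) :
    v ∈ Lang p (fun x => subRE h (r x)) ↔ ∃ w ∈ Lang p r, v = w.flatMap h := by
  constructor
  · rintro ⟨s, hs, rfl⟩
    have : ∀ x, ∃ t, x ∈ p → t ∈ (r x).matches' ∧ s x = t.flatMap h := by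
      intro x
      by_cases hx : x ∈ p
      · obtain ⟨t, ht⟩ := (mem_subRE _ _ _).1 (hs x hx).1
        exact ⟨t, fun _ => ht⟩
      · exact ⟨[], fun h => absurd h hx⟩
    choose t ht using this
    refine ⟨p.flatMap t, ⟨t, fun x hx => ⟨(ht x hx).1, fun h0 => (hs x hx).2 ?_⟩, rfl⟩, ?_⟩
    · rw [(ht x hx).2, h0]; rfl
    · rw [List.flatMap_assoc]
      exact List.flatMap_congr fun x hx => (ht x hx).2
  · rintro ⟨_, ⟨t, ht, rfl⟩, rfl⟩
    refine ⟨fun x => (t x).flatMap h, fun x hx => ⟨(mem_subRE _ _ _).2 ⟨_, (ht x hx).1, rfl⟩, ?_⟩,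
      by rw [List.flatMap_assoc]⟩
    have := (ht x hx).2
    cases e : t x with
    | nil => exact absurd e this
    | cons a l => simpa [e] using fun h0 => absurd h0 (hne a)

end PRC


namespace PRC

theorem split_unique {Γ : Type} (a : Γ) (u u' x x' : List Γ) (hu : a ∉ u) (hu' : a ∉ u')
    (h : u ++ a :: x = u' ++ a :: x') : u = u' ∧ x = x' := by
  induction u generalizing u' with
  | nil =>
    cases u' with
    | nil => simpa using h
    | cons b u' =>
      simp only [List.nil_append, List.cons_append, List.cons.injEq] at h
      exact absurd (by simp [h.1]) hu'
  | cons b u ih =>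
    cases u' with
    | nil =>
      simp only [List.nil_append, List.cons_append, List.cons.injEq] at h
      exact absurd (by simp [h.1]) hu
    | cons b' u' =>
      simp only [List.cons_append, List.cons.injEq] at h
      have := ih u' (fun h => hu (by simp [h])) (fun h => hu' (by simp [h])) h.2
      exact ⟨by rw [h.1, this.1], this.2⟩

/-- Extended alphabet for the union gadget. -/
inductive G1 (Γ : Type) where
  | base (g : Γ)
  | sep
  | dum
  | str

/-- Variables of the union gadget. -/
inductive XV (k : ℕ) where
  | pre
  | suf
  | sep
  | y (i : Fin k)
  | v (i : Fin k) (x : ℕ)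

instance (k : ℕ) : Countable (XV k) := by
  have hinj : Function.Injective (fun t : XV k => match t with
    | .pre => (0, 0, 0)
    | .suf => (1, 0, 0)
    | .sep => (2, 0, 0)
    | .y i => (3, i.1, 0)
    | .v i x => ((4, i.1, x) : ℕ × ℕ × ℕ)) := by
    intro s t h
    cases s <;> cases t <;> simp_all [Fin.ext_iff]
  exact hinj.countable

/-- Joining blocks by separators. -/
def J {Γ : Type} (L : List (List (G1 Γ))) : List (G1 Γ) := L.flatMap (fun b => b ++ [G1.sep])

theorem J_append {Γ : Type} (L M : List (List (G1 Γ))) : J (L ++ M) = J L ++ J M := by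
  simp [J]

theorem J_inj {Γ : Type} (L M : List (List (G1 Γ))) (hL : ∀ b ∈ L, G1.sep ∉ b)
    (hM : ∀ b ∈ M, G1.sep ∉ b) (h : J L = J M) : L = M := by
  induction L generalizing M with
  | nil =>
    cases M with
    | nil => rfl
    | cons b M => simp [J] at h
  | cons a L ih =>
    cases M with
    | nil => simp [J] at h
    | cons b M =>
      have h' : a ++ G1.sep :: J L = b ++ G1.sep :: J M := by simpa [J] using h
      obtain ⟨rfl, h2⟩ := split_unique _ _ _ _ _ (hL a (by simp)) (hM b (by simp)) h'
      rw [ih M (fun c hc => hL c (by simp [hc])) (fun c hc => hM c (by simp [hc])) h2]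

/-- The constraint of the union gadget. -/
def gr {Γ : Type} {k : ℕ} (q : Fin k → List ℕ × (ℕ → RegularExpression Γ)) (N : ℕ) :
    XV k → RegularExpression (G1 Γ)
  | .pre => .star (wordRE (List.replicate N G1.dum ++ [G1.sep]))
  | .suf => .star (wordRE (List.replicate N G1.dum ++ [G1.sep]))
  | .sep => .char .sep
  | .y _ => .plus (.char .str) (.star (.char .dum))
  | .v i x => .plus (((q i).2 x).map G1.base) (.star (.char .dum))

/-- The pattern of the union gadget. -/
def gp {Γ : Type} {k : ℕ} (q : Fin k → List ℕ × (ℕ → RegularExpression Γ)) : List (XV k) :=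
  .pre :: ((List.finRange k).flatMap (fun i => .y i :: (q i).1.map (.v i) ++ [.sep]) ++ [.suf])

theorem mem_dumstar {Γ : Type} (w : List (G1 Γ)) :
    w ∈ (RegularExpression.star (.char (G1.dum : G1 Γ))).matches' ↔
      ∃ n, w = List.replicate n G1.dum := by
  rw [RegularExpression.matches'_star, Language.mem_kstar]
  constructor
  · rintro ⟨L, rfl, hL⟩
    refine ⟨L.length, ?_⟩
    induction L with
    | nil => rfl
    | cons a L ih =>
      have h1 := (mem_char _ _).1 (hL a (by simp))
      rw [List.flatten_cons, ih fun y hy => hL y (by simp [hy]), h1]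
      rfl
  · rintro ⟨n, rfl⟩
    refine ⟨List.replicate n [G1.dum], by simp, fun y hy => ?_⟩
    rw [List.eq_of_mem_replicate hy]
    rfl

theorem mem_prestar {Γ : Type} (D : List (G1 Γ)) (w : List (G1 Γ)) :
    w ∈ (RegularExpression.star (wordRE (D ++ [G1.sep]))).matches' ↔
      ∃ n, w = J (List.replicate n D) := by
  rw [RegularExpression.matches'_star, Language.mem_kstar]
  simp only [mem_wordRE]
  constructor
  · rintro ⟨L, rfl, hL⟩
    refine ⟨L.length, ?_⟩
    rw [List.eq_replicate_of_mem hL]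
    simp [J, List.flatMap]
  · rintro ⟨n, rfl⟩
    refine ⟨List.replicate n (D ++ [G1.sep]), by simp [J, List.flatMap], fun y hy => ?_⟩
    rw [List.eq_of_mem_replicate hy]

theorem mem_mapbase {Γ : Type} (e : RegularExpression Γ) (w : List (G1 Γ)) :
    w ∈ (e.map G1.base).matches' ↔ ∃ u ∈ e.matches', u.map G1.base = w := by
  rw [RegularExpression.matches'_map]
  exact Iff.rfl

theorem gp_flatMap {Γ : Type} {k : ℕ} (q : Fin k → List ℕ × (ℕ → RegularExpression Γ))
    (s : XV k → List (G1 Γ)) (hsep : ∀ _i : Fin k, s .sep = [.sep]) :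
    (gp q).flatMap s = s .pre ++ J ((List.finRange k).map
      (fun i => s (.y i) ++ (q i).1.flatMap (fun x => s (.v i x)))) ++ s .suf := by
  have : ∀ l : List (Fin k), (l.flatMap (fun i => XV.y i :: (q i).1.map (.v i) ++ [.sep])).flatMap s
      = J (l.map (fun i => s (.y i) ++ (q i).1.flatMap (fun x => s (.v i x)))) := by
    intro l
    induction l with
    | nil => rfl
    | cons i l ih =>
      rw [List.flatMap_cons, List.flatMap_append, ih]
      simp [J, List.flatMap_map, hsep i]
  rw [gp, List.flatMap_cons, List.flatMap_append, this]
  simp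

theorem J_replicate_ne {Γ : Type} (D : List (G1 Γ)) (n : ℕ) (h : J (List.replicate n D) ≠ []) :
    1 ≤ n := by
  rcases n with _ | n
  · exact absurd rfl h
  · omega

/-- Candidate words for the gadget. -/
def gw {Γ : Type} (k N : ℕ) (w : List Γ) : List (G1 Γ) :=
  J (List.replicate k (List.replicate N .dum) ++ [.str :: w.map .base] ++
    List.replicate k (List.replicate N .dum))

theorem gadget_iff {Γ : Type} {k : ℕ} (q : Fin k → List ℕ × (ℕ → RegularExpression Γ)) (N : ℕ)
    (hN : ∀ i, (q i).1.length < N) (w : List Γ) :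
    gw k N w ∈ Lang (gp q) (gr q N) ↔ ∃ i, w ∈ Lang (q i).1 (q i).2 := by
  constructor
  · rintro ⟨s, hs, he⟩
    have hpre := hs .pre (by simp [gp])
    have hsuf := hs .suf (by simp [gp])
    obtain ⟨j, hj⟩ := (mem_prestar _ _).1 hpre.1
    obtain ⟨j', hj'⟩ := (mem_prestar _ _).1 hsuf.1
    have hj1 : 1 ≤ j := J_replicate_ne _ _ (hj ▸ hpre.2)
    have hj1' : 1 ≤ j' := J_replicate_ne _ _ (hj' ▸ hsuf.2)
    have hy : ∀ i, s (.y i) ∈ (gr q N (.y i)).matches' ∧ s (.y i) ≠ [] := fun i =>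
      hs _ (by simp only [gp]; simp)
    have hv : ∀ i, ∀ x ∈ (q i).1, s (.v i x) ∈ (gr q N (.v i x)).matches' ∧ s (.v i x) ≠ [] :=
      fun i x hx => hs _ (by simp only [gp]; simp [hx])
    have hyf : ∀ i, G1.sep ∉ s (.y i) := by
      intro i
      rcases (hy i).1 with h | h
      · rw [(mem_char _ _).1 h]; simp
      · obtain ⟨n, hn⟩ := (mem_dumstar _).1 h
        rw [hn]; simp
    have hvf : ∀ i, ∀ x ∈ (q i).1, G1.sep ∉ s (.v i x) := by
      intro i x hx
      rcases (hv i x hx).1 with h | h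
      · obtain ⟨u, _, hu⟩ := (mem_mapbase _ _).1 h
        rw [← hu]; simp
      · obtain ⟨n, hn⟩ := (mem_dumstar _).1 h
        rw [hn]; simp
    have hsep : ∀ _i : Fin k, s .sep = [.sep] := fun i =>
      (mem_char _ _).1 (hs .sep (by
        simp only [gp]; simp; exact ⟨i⟩)).1
    rw [gp_flatMap q s hsep, hj, hj', ← J_append, ← J_append, gw] at he
    have hD : G1.sep ∉ List.replicate N (G1.dum : G1 Γ) := by simp
    have heq := J_inj _ _ ?_ ?_ he
    · have hlen := congrArg List.length heq
      simp only [List.length_append, List.length_replicate, List.length_map, List.length_finRange,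
        List.length_singleton] at hlen
      have hg := congrArg (fun l => l[k]?) heq
      beta_reduce at hg
      rw [List.getElem?_append_left (by simp; omega), List.getElem?_append_right (by simp; omega),
        List.getElem?_append_left (by simp), List.getElem?_append_right (by simp)] at hg
      simp only [List.length_replicate, List.getElem?_map] at hg
      rw [List.getElem?_eq_getElem (by simp; omega)] at hg
      simp only [List.getElem_finRange, Fin.cast_mk, Option.map_some, Nat.sub_self,
        List.getElem?_cons_zero, Option.some.injEq] at hg
      generalize (⟨k - j, _⟩ : Fin k) = i at hg
      refine ⟨i, ?_⟩
      have hy1 : s (.y i) = [.str] := by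
        rcases (hy i).1 with h | h
        · exact (mem_char _ _).1 h
        · obtain ⟨n, hn⟩ := (mem_dumstar _).1 h
          rcases n with _ | n
          · exact absurd hn (hy i).2
          · rw [hn] at hg
            simp [List.replicate_succ] at hg
      rw [hy1] at hg
      simp only [List.cons_append, List.nil_append, List.cons.injEq, true_and] at hg
      have hdum : G1.dum ∉ (q i).1.flatMap (fun x => s (.v i x)) := by
        rw [hg]; simp
      have : ∀ x, ∃ u, x ∈ (q i).1 → u ∈ ((q i).2 x).matches' ∧ u.map G1.base = s (.v i x) := by
        intro x
        by_cases hx : x ∈ (q i).1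
        · rcases (hv i x hx).1 with h | h
          · obtain ⟨u, hu⟩ := (mem_mapbase _ _).1 h
            exact ⟨u, fun _ => hu⟩
          · obtain ⟨n, hn⟩ := (mem_dumstar _).1 h
            rcases n with _ | n
            · exact absurd hn (hv i x hx).2
            · exact absurd (List.mem_flatMap.2 ⟨x, hx, by rw [hn]; simp⟩) hdum
        · exact ⟨[], fun h => absurd h hx⟩
      choose u hu using this
      refine ⟨u, fun x hx => ⟨(hu x hx).1, fun h0 => (hv i x hx).2 ?_⟩, ?_⟩
      · rw [← (hu x hx).2, h0]; rfl
      · have hinj : Function.Injective (List.map (G1.base : Γ → G1 Γ)) :=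
          List.map_injective_iff.2 fun a b h => by injection h
        apply hinj
        rw [← hg, List.map_flatMap]
        exact List.flatMap_congr fun x hx => (hu x hx).2
    · intro b hb
      simp only [List.mem_append, List.mem_map] at hb
      rcases hb with (hb | ⟨i, _, rfl⟩) | hb
      · rw [List.eq_of_mem_replicate hb]; exact hD
      · simp only [List.mem_append, List.mem_flatMap, not_or, not_exists, not_and]
        exact ⟨hyf i, hvf i⟩
      · rw [List.eq_of_mem_replicate hb]; exact hD
    · intro b hb
      simp only [List.mem_append, List.mem_singleton] at hb
      rcases hb with (hb | rfl) | hb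
      · rw [List.eq_of_mem_replicate hb]; exact hD
      · simp
      · rw [List.eq_of_mem_replicate hb]; exact hD
  · rintro ⟨i, t, ht, rfl⟩
    set D : List (G1 Γ) := List.replicate N .dum with hD
    let s : XV k → List (G1 Γ) := fun z => match z with
      | .pre => J (List.replicate (k - i.1) D)
      | .suf => J (List.replicate (i.1 + 1) D)
      | .sep => [.sep]
      | .y m => if m = i then [.str] else List.replicate (N - (q m).1.length) .dum
      | .v m x => if m = i then (t x).map .base else [.dum]
    have hne : ∀ n, J (List.replicate (n + 1) D) ≠ [] := by
      intro n; simp [J, List.replicate_succ]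
    refine ⟨s, ?_, ?_⟩
    · intro x hx
      cases x with
      | pre =>
        refine ⟨(mem_prestar _ _).2 ⟨_, rfl⟩, ?_⟩
        have : k - i.1 = (k - i.1 - 1) + 1 := by omega
        change J (List.replicate (k - i.1) D) ≠ []
        rw [this]
        exact hne _
      | suf => exact ⟨(mem_prestar _ _).2 ⟨_, rfl⟩, hne _⟩
      | sep => exact ⟨rfl, by simp [s]⟩
      | y m =>
        by_cases hm : m = i
        · simp only [s, hm, if_true]
          exact ⟨Or.inl rfl, by simp⟩
        · simp only [s, hm, if_false]
          exact ⟨Or.inr ((mem_dumstar _).2 ⟨_, rfl⟩), by simpa using Nat.sub_ne_zero_of_lt (hN m)⟩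
      | v m x =>
        by_cases hm : m = i
        · subst hm
          have hx' : x ∈ (q m).1 := by
            simp only [gp] at hx
            simpa using hx
          simp only [s, if_true]
          exact ⟨Or.inl ((mem_mapbase _ _).2 ⟨_, (ht x hx').1, rfl⟩), by simpa using (ht x hx').2⟩
        · simp only [s, hm, if_false]
          exact ⟨Or.inr ((mem_dumstar _).2 ⟨1, rfl⟩), by simp⟩
    · rw [gp_flatMap q s (fun _ => rfl)]
      change J _ ++ J _ ++ J _ = _
      rw [← J_append, ← J_append, gw, ← hD]
      congr 1
      have hblk : (List.finRange k).map
          (fun m => s (.y m) ++ (q m).1.flatMap (fun x => s (.v m x))) =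
          List.replicate i.1 D ++ [.str :: ((q i).1.flatMap t).map .base] ++
            List.replicate (k - i.1 - 1) D := by
        have hother : ∀ m, m ≠ i → s (.y m) ++ (q m).1.flatMap (fun x => s (.v m x)) = D := by
          intro m hm
          have : (q m).1.flatMap (fun _ => [(G1.dum : G1 Γ)]) =
              List.replicate (q m).1.length .dum := by
            induction (q m).1 with
            | nil => rfl
            | cons a l ih => rw [List.flatMap_cons, ih]; rfl
          simp only [s, hm, if_false, this, List.replicate_append_replicate, hD]
          congr 1
          have := hN m
          omega
        have hself : s (.y i) ++ (q i).1.flatMap (fun x => s (.v i x)) =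
            .str :: ((q i).1.flatMap t).map .base := by
          simp [s, List.map_flatMap]
        apply List.ext_getElem
        · simp; omega
        · intro n h1 h2
          simp only [List.getElem_map, List.getElem_finRange, Fin.cast_mk]
          simp only [List.length_map, List.length_finRange] at h1
          rcases lt_trichotomy n i.1 with h | h | h
          · rw [hother _ (by intro h'; rw [Fin.ext_iff] at h'; simp at h'; omega)]
            rw [List.getElem_append_left (by simp; omega), List.getElem_append_left (by simpa)]
            simp
          · subst h
            rw [hself]
            rw [List.getElem_append_left (by simp), List.getElem_append_right (by simp)]
            simp
          · rw [hother _ (by intro h'; rw [Fin.ext_iff] at h'; simp at h'; omega)]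
            rw [List.getElem_append_right (by simp; omega)]
            simp
      rw [hblk]
      have h1 : List.replicate k D = List.replicate (k - i.1) D ++ List.replicate i.1 D := by
        rw [List.replicate_append_replicate]; congr 1; omega
      have h2 : List.replicate k D = List.replicate (k - i.1 - 1) D ++ List.replicate (i.1 + 1) D := by
        rw [List.replicate_append_replicate]; congr 1; omega
      conv_rhs => rw [h2]
      conv_rhs => lhs; lhs; rw [← h2, h1]
      simp only [List.append_assoc]

/-- The union gadget. -/
theorem gadget {Γ : Type} (L : Set (List Γ)) (hL : Dfb L) :
    ∃ (A B : RegularExpression (G1 Γ)) (p : List ℕ) (r : ℕ → RegularExpression (G1 Γ)),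
      ∀ R : RegularExpression Γ,
        (∀ v ∈ (A * R.map G1.base * B).matches', v ∈ Lang p r) ↔ ∀ w ∈ R.matches', w ∈ L := by
  obtain ⟨l, hl⟩ := hL
  let k := l.length
  let q : Fin k → List ℕ × (ℕ → RegularExpression Γ) := fun i => l[i]
  obtain ⟨N, hN⟩ : ∃ N, ∀ i, (q i).1.length < N := by
    obtain ⟨M, hM⟩ := (Set.finite_range fun i => (q i).1.length).bddAbove
    exact ⟨M + 1, fun i => Nat.lt_succ_of_le (hM ⟨i, rfl⟩)⟩
  obtain ⟨p, r, hpr⟩ := exists_nat_lang (gp q) (gr q N)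
  let Dk : List (G1 Γ) := J (List.replicate k (List.replicate N .dum))
  have hgw : ∀ w : List Γ, gw k N w = Dk ++ [.str] ++ w.map .base ++ (.sep :: Dk) := by
    intro w
    rw [gw, J_append, J_append]
    simp [J, Dk]
  refine ⟨wordRE (Dk ++ [.str]), wordRE (.sep :: Dk), p, r, fun R => ?_⟩
  have hm : ∀ v, v ∈ (wordRE (Dk ++ [G1.str]) * R.map G1.base * wordRE (G1.sep :: Dk)).matches' ↔
      ∃ w ∈ R.matches', v = gw k N w := by
    intro v
    simp only [RegularExpression.matches'_mul, Language.mem_mul, mem_wordRE, mem_mapbase, hgw]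
    constructor
    · rintro ⟨_, ⟨_, rfl, _, ⟨u, hu, rfl⟩, rfl⟩, _, rfl, rfl⟩
      exact ⟨u, hu, rfl⟩
    · rintro ⟨u, hu, rfl⟩
      exact ⟨_, ⟨_, rfl, _, ⟨u, hu, rfl⟩, rfl⟩, _, rfl, rfl⟩
  simp only [hm, hpr, hl]
  constructor
  · intro h w hw
    obtain ⟨i, hi⟩ := (gadget_iff q N hN w).1 (h _ ⟨w, hw, rfl⟩)
    exact ⟨q i, by simp [q], hi⟩
  · rintro h _ ⟨w, hw, rfl⟩
    obtain ⟨a, ha, hwa⟩ := h w hw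
    obtain ⟨i, hi, rfl⟩ := List.getElem_of_mem ha
    exact (gadget_iff q N hN w).2 ⟨⟨i, hi⟩, hwa⟩

end PRC


namespace PRC

/-- Patterns with letters and four word variables. -/
abbrev Pat (Γ : Type) := List (Γ ⊕ Fin 4)

/-- Applying a valuation. -/
def ap {Γ : Type} (x : Fin 4 → List Γ) (P : Pat Γ) : List Γ :=
  P.flatMap (Sum.elim (fun a => [a]) x)

/-- Valuations respecting alphabets. -/
def Val {Γ : Type} (S : Fin 4 → Γ → Prop) (x : Fin 4 → List Γ) : Prop := ∀ v, ∀ c ∈ x v, S v c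

/-- Two words mismatch at some position. -/
def Mis {Γ : Type} (u s : List Γ) : Prop :=
  ∃ (m : List Γ) (c d : Γ) (u' s' : List Γ), c ≠ d ∧ u = m ++ d :: u' ∧ s = m ++ c :: s'

/-- Words containing an error with respect to a rule. -/
def Err {Γ : Type} (S : Fin 4 → Γ → Prop) (P Q : Pat Γ) : Set (List Γ) :=
  {w | ∃ x, Val S x ∧ ∃ z s, w = z ++ ap x P ++ s ∧ Mis (ap x Q) s}

theorem ap_append {Γ : Type} (x : Fin 4 → List Γ) (P Q : Pat Γ) :
    ap x (P ++ Q) = ap x P ++ ap x Q := by simp [ap]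

theorem ap_cons {Γ : Type} (x : Fin 4 → List Γ) (a) (Q : Pat Γ) :
    ap x (a :: Q) = Sum.elim (fun a => [a]) x a ++ ap x Q := by simp [ap]

theorem mis_cons {Γ : Type} (a : Γ) (u s : List Γ) (h : Mis u s) : Mis (a :: u) (a :: s) := by
  obtain ⟨m, c, d, u', s', h1, rfl, rfl⟩ := h
  exact ⟨a :: m, c, d, u', s', h1, rfl, rfl⟩

theorem mis_append {Γ : Type} (a : List Γ) (u s : List Γ) : Mis (a ++ u) (a ++ s) ↔ Mis u s := by
  constructor
  · induction a with
    | nil => exact id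
    | cons b a ih =>
      rintro ⟨m, c, d, u', s', h1, h2, h3⟩
      apply ih
      cases m with
      | nil =>
        simp only [List.cons_append, List.nil_append, List.cons.injEq] at h2 h3
        exact absurd (h3.1.symm.trans h2.1) h1
      | cons e m =>
        simp only [List.cons_append, List.cons.injEq] at h2 h3
        exact ⟨m, c, d, u', s', h1, h2.2, h3.2⟩
  · intro h
    induction a with
    | nil => exact h
    | cons b a ih => exact mis_cons _ _ _ ih

theorem mis_or {Γ : Type} (u s : List Γ) : Mis u s ∨ u <+: s ∨ s <+: u := by
  induction u generalizing s with
  | nil => simp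
  | cons a u ih =>
    cases s with
    | nil => simp
    | cons b s =>
      by_cases h : a = b
      · subst h
        rcases ih s with h | h | h
        · exact Or.inl (mis_cons _ _ _ h)
        · exact Or.inr (Or.inl (by simpa using h))
        · exact Or.inr (Or.inr (by simpa using h))
      · exact Or.inl ⟨[], b, a, u, s, Ne.symm h, rfl, rfl⟩

theorem pre_total {Γ : Type} {a b c : List Γ} (h1 : a <+: c) (h2 : b <+: c) :
    a <+: b ∨ b <+: a :=
  (le_total a.length b.length).imp (List.prefix_of_prefix_length_le h1 h2)
    (List.prefix_of_prefix_length_le h2 h1)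

theorem not_mis_of_pre {Γ : Type} (u s : List Γ) (h : u <+: s) : ¬ Mis u s := by
  obtain ⟨t, rfl⟩ := h
  intro h
  have := (mis_append u [] t).1 (by simpa using h)
  obtain ⟨m, c, d, u', s', _, h2, _⟩ := this
  simp at h2

theorem not_mis_nil {Γ : Type} (u : List Γ) : ¬ Mis u [] := by
  rintro ⟨m, c, d, u', s', _, _, h2⟩
  simp at h2

theorem mis_split {Γ : Type} (x : Fin 4 → List Γ) (Q : Pat Γ) (s : List Γ) :
    Mis (ap x Q) s ↔
      (∃ Q1 d Q2 c s', Q = Q1 ++ Sum.inl d :: Q2 ∧ c ≠ d ∧ s = ap x Q1 ++ c :: s') ∨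
      (∃ Q1 v Q2 d c a b s', Q = Q1 ++ Sum.inr v :: Q2 ∧ c ≠ d ∧ x v = a ++ d :: b ∧
        s = ap x Q1 ++ a ++ c :: s') := by
  constructor
  · intro h
    induction Q generalizing s with
    | nil =>
      obtain ⟨m, c, d, u', s', _, h2, _⟩ := h
      simp [ap] at h2
    | cons t Q ih =>
      rw [ap_cons] at h
      rcases mis_or (Sum.elim (fun a => [a]) x t) s with hm | hm
      · obtain ⟨m, c, d, u', s', h1, h2, rfl⟩ := hm
        cases t with
        | inl e =>
          left
          cases m with
          | nil =>
            simp only [Sum.elim_inl, List.nil_append, List.cons.injEq] at h2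
            exact ⟨[], e, Q, c, s', rfl, by rw [h2.1]; exact h1, rfl⟩
          | cons f m => simp at h2
        | inr v =>
          right
          exact ⟨[], v, Q, d, c, m, u', s', rfl, h1, h2, rfl⟩
      · have : Sum.elim (fun a => [a]) x t <+: s := by
          rcases hm with hm | hm
          · exact hm
          · exfalso
            obtain ⟨r, hr⟩ := hm
            rw [← hr, List.append_assoc] at h
            have := (mis_append s (r ++ ap x Q) []).1 (by simpa using h)
            exact not_mis_nil _ this
        obtain ⟨s1, rfl⟩ := this
        rw [mis_append] at h
        rcases ih s1 h with ⟨Q1, d, Q2, c, s', rfl, h1, rfl⟩ |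
            ⟨Q1, v, Q2, d, c, a, b, s', rfl, h1, h2, rfl⟩
        · exact Or.inl ⟨t :: Q1, d, Q2, c, s', rfl, h1, by simp [ap_cons]⟩
        · exact Or.inr ⟨t :: Q1, v, Q2, d, c, a, b, s', rfl, h1, h2, by simp [ap_cons]⟩
  · rintro (⟨Q1, d, Q2, c, s', rfl, h1, rfl⟩ | ⟨Q1, v, Q2, d, c, a, b, s', rfl, h1, h2, rfl⟩)
    · rw [ap_append, mis_append, ap_cons]
      exact ⟨[], c, d, _, _, h1, rfl, rfl⟩
    · rw [ap_append, List.append_assoc, mis_append, ap_cons, Sum.elim_inr, h2, List.append_assoc,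
        mis_append]
      exact ⟨[], c, d, _, _, h1, rfl, rfl⟩

/-- Variables of error patterns. -/
abbrev EX (Γ : Type) := Γ ⊕ (Fin 4 ⊕ Fin 4)

theorem langE_all {Γ X : Type} (p : List X) (r : X → RegularExpression Γ)
    (hr : ∀ x, ∃ u, u ∈ (r x).matches') (w : List Γ) :
    w ∈ LangE p r ↔ ∃ s : X → List Γ, (∀ x, s x ∈ (r x).matches') ∧ p.flatMap s = w := by
  constructor
  · rintro ⟨s, hs, rfl⟩
    classical
    choose u hu using hr
    refine ⟨fun x => if x ∈ p then s x else u x, fun x => ?_, ?_⟩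
    · by_cases h : x ∈ p
      · simpa [h] using hs x h
      · simpa [h] using hu x
    · exact List.flatMap_congr fun x hx => by simp [hx]
  · rintro ⟨s, hs, rfl⟩
    exact ⟨s, fun x _ => hs x, rfl⟩

theorem dfb_errC {Γ : Type} [Finite Γ] (S : Fin 4 → Γ → Prop) (P Q1 : Pat Γ) (c : Γ) :
    Dfb {w | ∃ x, Val S x ∧ ∃ z s', w = z ++ ap x P ++ (ap x Q1 ++ c :: s')} := by
  choose al hal using fun v => exists_alph (S v)
  obtain ⟨un, hun⟩ := exists_alph (fun _ : Γ => True)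
  let em : Γ ⊕ Fin 4 → EX Γ := Sum.map id Sum.inl
  let r : EX Γ → RegularExpression Γ := Sum.elim .char (Sum.elim al (fun _ => un))
  have key := dfb_langE ([Sum.inr (Sum.inr 0)] ++ P.map em ++
    (Q1.map em ++ [Sum.inl c, Sum.inr (Sum.inr 1)])) r
  convert key using 1
  ext w
  constructor
  · rintro ⟨x, hx, z, s', rfl⟩
    refine ⟨Sum.elim (fun a => [a]) (Sum.elim x ![z, s', [], []]), ?_, ?_⟩
    · rintro (a | v | v) _
      · rfl
      · exact (hal v _).2 (hx v)
      · exact (hun _).2 (by simp)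
    · have : ∀ P : Pat Γ, (P.map em).flatMap
          (Sum.elim (fun a => [a]) (Sum.elim x ![z, s', [], []])) = ap x P := by
        intro P
        rw [List.flatMap_map, ap]
        apply List.flatMap_congr
        rintro (a | v) _ <;> rfl
      simp only [List.flatMap_append, this]
      simp
  · intro hw
    rw [langE_all] at hw
    · obtain ⟨s, hs, rfl⟩ := hw
      have hs1 : ∀ a, s (.inl a) = [a] := fun a => hs (.inl a)
      have hap : ∀ R : Pat Γ, (R.map em).flatMap s = ap (fun v => s (.inr (.inl v))) R := by
        intro R
        rw [List.flatMap_map, ap]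
        apply List.flatMap_congr
        rintro (a | v) ht
        · exact hs1 a
        · rfl
      refine ⟨fun v => s (.inr (.inl v)), fun v => (hal v _).1 (hs (.inr (.inl v))),
        s (.inr (.inr 0)), s (.inr (.inr 1)), ?_⟩
      simp only [List.flatMap_append, hap]
      simp [hs1]
    · rintro (a | v | v)
      · exact ⟨[a], rfl⟩
      · exact ⟨[], (hal v _).2 (by simp)⟩
      · exact ⟨[], (hun _).2 (by simp)⟩

theorem dfb_errV {Γ : Type} [Finite Γ] (S : Fin 4 → Γ → Prop) (P Q1 : Pat Γ) (v : Fin 4)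
    (c d : Γ) :
    Dfb {w | ∃ x, Val S x ∧ ∃ z s' a b, x v = a ++ d :: b ∧
      w = z ++ ap x P ++ (ap x Q1 ++ a ++ c :: s')} := by
  choose al hal using fun v => exists_alph (S v)
  obtain ⟨un, hun⟩ := exists_alph (fun _ : Γ => True)
  let em : Γ ⊕ Fin 4 → List (EX Γ) := Sum.elim (fun a => [.inl a])
    (fun u => if u = v then [.inr (.inr 2), .inl d, .inr (.inr 3)] else [.inr (.inl u)])
  let r : EX Γ → RegularExpression Γ := Sum.elim .char (Sum.elim al ![un, un, al v, al v])
  have key := dfb_and (S v d) _ fun _ => dfb_langE ([Sum.inr (Sum.inr 0)] ++ P.flatMap em ++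
    (Q1.flatMap em ++ [Sum.inr (Sum.inr 2)] ++ [Sum.inl c, Sum.inr (Sum.inr 1)])) r
  convert key using 1
  ext w
  constructor
  · rintro ⟨x, hx, z, s', a, b, hab, rfl⟩
    have hxv := hx v
    rw [hab] at hxv
    refine ⟨hxv d (by simp), Sum.elim (fun a => [a]) (Sum.elim x ![z, s', a, b]), ?_, ?_⟩
    · rintro (e | u | u) _
      · rfl
      · exact (hal u _).2 (hx u)
      · fin_cases u
        · exact (hun _).2 (by simp)
        · exact (hun _).2 (by simp)
        · exact (hal v _).2 fun e he => hxv e (List.mem_append_left _ he)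
        · exact (hal v _).2 fun e he => hxv e (List.mem_append_right _ (List.mem_cons_of_mem _ he))
    · have : ∀ P : Pat Γ, (P.flatMap em).flatMap
          (Sum.elim (fun a => [a]) (Sum.elim x ![z, s', a, b])) = ap x P := by
        intro P
        rw [List.flatMap_assoc, ap]
        apply List.flatMap_congr
        rintro (e | u) _
        · rfl
        · by_cases hu : u = v
          · subst hu
            simp [em, hab]
          · simp [em, hu]
      simp only [List.flatMap_append, this]
      simp
  · rintro ⟨hd, hw⟩
    rw [langE_all] at hw
    · obtain ⟨s, hs, rfl⟩ := hw
      have hs1 : ∀ a, s (.inl a) = [a] := fun a => hs (.inl a)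
      have h2 := (hal v _).1 (hs (.inr (.inr 2)))
      have h3 := (hal v _).1 (hs (.inr (.inr 3)))
      let x : Fin 4 → List Γ := fun u => if u = v then
        s (.inr (.inr 2)) ++ d :: s (.inr (.inr 3)) else s (.inr (.inl u))
      have hap : ∀ R : Pat Γ, (R.flatMap em).flatMap s = ap x R := by
        intro R
        rw [List.flatMap_assoc, ap]
        apply List.flatMap_congr
        rintro (a | u) ht
        · simpa [em] using hs1 a
        · by_cases hu : u = v
          · simp [em, hu, x, hs1]
          · simp [em, hu, x]
      refine ⟨x, fun u => ?_,
        s (.inr (.inr 0)), s (.inr (.inr 1)), s (.inr (.inr 2)), s (.inr (.inr 3)), by simp [x], ?_⟩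
      · by_cases hu : u = v
        · subst hu
          intro e he
          simp only [x, if_true, List.mem_append, List.mem_cons] at he
          rcases he with he | rfl | he
          · exact h2 e he
          · exact hd
          · exact h3 e he
        · simp only [x, hu, if_false]
          exact (hal u _).1 (hs (.inr (.inl u)))
      simp only [List.flatMap_append, hap]
      simp [hs1]
    · rintro (a | u | u)
      · exact ⟨[a], rfl⟩
      · exact ⟨[], (hal u _).2 (by simp)⟩
      · refine ⟨[], ?_⟩
        fin_cases u
        · exact (hun _).2 (by simp)
        · exact (hun _).2 (by simp)
        · exact (hal v _).2 (by simp)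
        · exact (hal v _).2 (by simp)

theorem dfb_err {Γ : Type} [Finite Γ] (S : Fin 4 → Γ → Prop) (P Q : Pat Γ) :
    Dfb (Err S P Q) := by
  have k1 := dfb_exists (ι := Fin (Q.length + 1)) _ fun j => dfb_exists (ι := Γ) _ fun d =>
    dfb_exists (ι := Γ) _ fun c => dfb_and (c ≠ d ∧ ∃ Q2, Q = Q.take j ++ Sum.inl d :: Q2) _ fun _ =>
      dfb_errC S P (Q.take j) c
  have k2 := dfb_exists (ι := Fin (Q.length + 1)) _ fun j => dfb_exists (ι := Γ) _ fun d =>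
    dfb_exists (ι := Γ) _ fun c => dfb_exists (ι := Fin 4) _ fun v =>
      dfb_and (c ≠ d ∧ ∃ Q2, Q = Q.take j ++ Sum.inr v :: Q2) _ fun _ =>
      dfb_errV S P (Q.take j) v c d
  convert dfb_or _ _ k1 k2 using 1
  ext w
  constructor
  · rintro ⟨x, hx, z, s, rfl, hm⟩
    rcases (mis_split x Q s).1 hm with ⟨Q1, d, Q2, c, s', h0, h1, rfl⟩ |
            ⟨Q1, v, Q2, d, c, a, b, s', h0, h1, h2, rfl⟩
    · have ht : Q.take Q1.length = Q1 := by rw [h0]; simp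
      have hlt : Q1.length < Q.length + 1 := by rw [h0]; simp
      refine Or.inl ⟨⟨Q1.length, hlt⟩, d, c, ⟨h1, Q2, ?_⟩, ?_⟩
      · simpa only [ht] using h0
      · exact ⟨x, hx, z, s', by simp only [ht]⟩
    · have ht : Q.take Q1.length = Q1 := by rw [h0]; simp
      have hlt : Q1.length < Q.length + 1 := by rw [h0]; simp
      refine Or.inr ⟨⟨Q1.length, hlt⟩, d, c, v, ⟨h1, Q2, ?_⟩, ?_⟩
      · simpa only [ht] using h0
      · exact ⟨x, hx, z, s', a, b, h2, by simp only [ht]⟩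
  · rintro (⟨j, d, c, ⟨h1, Q2, h0⟩, x, hx, z, s', rfl⟩ |
      ⟨j, d, c, v, ⟨h1, Q2, h0⟩, x, hx, z, s', a, b, h2, rfl⟩)
    · exact ⟨x, hx, z, _, rfl, (mis_split x Q _).2 (Or.inl ⟨_, d, Q2, c, s', h0, h1, rfl⟩)⟩
    · exact ⟨x, hx, z, _, rfl, (mis_split x Q _).2 (Or.inr ⟨_, v, Q2, d, c, a, b, s', h0, h1, h2,
        rfl⟩)⟩

end PRC


namespace PRC

/-- A rewriting presentation of a deterministic machine. -/
structure Sys (Γ : Type) (C : Type) where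
  S : Fin 4 → Γ → Prop
  step : C → C
  enc : C → List Γ
  fin : C
  hash : Γ
  fl : Γ
  rules : Set (Pat Γ × Pat Γ)
  hash_enc : ∀ c, hash ∉ enc c
  enc_fin : enc fin = [fl]
  fl_enc : ∀ c, c ≠ fin → fl ∉ enc c
  ex : ∀ c, c ≠ fin → ∃ R ∈ rules, ∃ x, Val S x ∧ ap x R.1 = enc c ∧ ap x R.2 = enc (step c)
  det : ∀ R ∈ rules, ∀ x, Val S x → ∀ c, ap x R.1 = enc c → ap x R.2 = enc (step c)
  hash_lhs : ∀ R ∈ rules, ∀ x, Val S x → hash ∉ ap x R.1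

namespace Sys

variable {Γ C : Type} (M : Sys Γ C)

/-- All errors. -/
def ErrAll : Set (List Γ) :=
  {w | ∃ R ∈ M.rules, w ∈ Err M.S (Sum.inl M.hash :: R.1 ++ [Sum.inl M.hash])
    (R.2 ++ [Sum.inl M.hash])}

/-- Correct histories. -/
inductive Hist : C → List Γ → Prop
  | fin : Hist M.fin (M.enc M.fin ++ [M.hash])
  | step (c : C) (w : List Γ) : Hist (M.step c) w → Hist c (M.enc c ++ M.hash :: w)

theorem hist_pre {c : C} {w : List Γ} (h : M.Hist c w) : ∃ s, w = M.enc c ++ M.hash :: s := by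
  cases h with
  | fin => exact ⟨[], rfl⟩
  | step c w h => exact ⟨w, rfl⟩

theorem hist_suf {c : C} {w : List Γ} (h : M.Hist c w) :
    ∃ s, w = s ++ [M.fl, M.hash] := by
  induction h with
  | fin => exact ⟨[], by simp [M.enc_fin]⟩
  | step c w h ih =>
    obtain ⟨s, rfl⟩ := ih
    exact ⟨M.enc c ++ M.hash :: s, by simp⟩

theorem hist_split {c : C} {w : List Γ} (h : M.Hist c w) (z t s : List Γ) (ht : M.hash ∉ t)
    (hw : M.hash :: w = z ++ M.hash :: (t ++ M.hash :: s)) :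
    ∃ c', t = M.enc c' ∧ (s = [] ∨ M.Hist (M.step c') s) := by
  induction h generalizing z with
  | fin =>
    cases z with
    | nil =>
      simp only [List.nil_append, List.cons.injEq, true_and] at hw
      have := split_unique M.hash _ _ _ _ (M.hash_enc _) ht hw
      exact ⟨_, this.1.symm, Or.inl this.2.symm⟩
    | cons a z =>
      simp only [List.cons_append, List.cons.injEq] at hw
      classical
      have h3 : List.count M.hash (M.enc M.fin) = 0 := List.count_eq_zero.2 (M.hash_enc _)
      have h4 := congrArg (List.count M.hash) hw.2
      simp [List.count_append, h3] at h4
      omega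
  | step c w h ih =>
    cases z with
    | nil =>
      simp only [List.nil_append, List.cons.injEq, true_and] at hw
      have := split_unique M.hash _ _ _ _ (M.hash_enc _) ht hw
      refine ⟨c, this.1.symm, Or.inr ?_⟩
      rw [← this.2]; exact h
    | cons a z =>
      simp only [List.cons_append, List.cons.injEq] at hw
      have hm : M.hash :: w <:+ z ++ M.hash :: (t ++ M.hash :: s) := ⟨_, hw.2⟩
      obtain ⟨y, hy⟩ := hm
      -- the first hash of the right side
      have hz : ∃ z1, z = M.enc c ++ z1 := by
        have hp1 : M.enc c <+: z ++ M.hash :: (t ++ M.hash :: s) := ⟨_, hw.2⟩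
        have hp2 : z <+: z ++ M.hash :: (t ++ M.hash :: s) := ⟨_, rfl⟩
        rcases pre_total hp1 hp2 with ⟨k, hk⟩ | ⟨k, hk⟩
        · exact ⟨k, hk.symm⟩
        · cases k with
          | nil => exact ⟨[], by simpa using hk⟩
          | cons b k =>
            exfalso
            rw [← hk] at hw
            have h5 := hw.2
            rw [List.append_assoc, List.append_cancel_left_eq] at h5
            simp only [List.cons_append, List.cons.injEq] at h5
            apply M.hash_enc c
            rw [← hk, h5.1]; simp
      obtain ⟨z1, rfl⟩ := hz
      have h5 := hw.2
      rw [List.append_assoc, List.append_cancel_left_eq] at h5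
      exact ih z1 h5

theorem hist_not_err {c : C} {w : List Γ} (h : M.Hist c w) : M.hash :: w ∉ M.ErrAll := by
  rintro ⟨R, hR, x, hx, z, s, hw, hm⟩
  simp only [ap_append, ap_cons] at hw hm
  obtain ⟨c', h1, h2⟩ := M.hist_split h z (ap x R.1) s (M.hash_lhs R hR x hx)
    (by simpa [ap] using hw)
  rcases h2 with rfl | h2
  · exact not_mis_nil _ hm
  · obtain ⟨s', rfl⟩ := M.hist_pre h2
    have := M.det R hR x hx c' h1
    refine not_mis_of_pre _ _ ?_ hm
    rw [this]
    exact ⟨s', by simp [ap]⟩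

theorem hist_of_halts (n : ℕ) (c : C) (h : M.step^[n] c = M.fin) : ∃ w, M.Hist c w := by
  induction n generalizing c with
  | zero => exact ⟨_, by cases h; exact Hist.fin⟩
  | succ n ih =>
    obtain ⟨w, hw⟩ := ih (M.step c) h
    exact ⟨_, Hist.step c w hw⟩

theorem main (c0 : C) (h0 : c0 ≠ M.fin) :
    (∀ z : List Γ, M.hash :: (M.enc c0 ++ M.hash :: (z ++ [M.fl, M.hash])) ∈ M.ErrAll) ↔
      ¬ ∃ n, M.step^[n] c0 = M.fin := by
  constructor
  · rintro h ⟨n, hn⟩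
    cases n with
    | zero => exact h0 hn
    | succ n =>
      obtain ⟨w, hw⟩ := M.hist_of_halts n (M.step c0) hn
      obtain ⟨z, rfl⟩ := M.hist_suf hw
      exact M.hist_not_err (Hist.step _ _ hw) (h z)
  · intro hn z
    by_contra hc
    have key : ∀ j, ∃ y s, M.hash :: (M.enc c0 ++ M.hash :: (z ++ [M.fl, M.hash])) =
        y ++ M.hash :: (M.enc (M.step^[j] c0) ++ M.hash :: (s ++ [M.fl, M.hash])) ∧
          j ≤ y.length := by
      intro j
      induction j with
      | zero => exact ⟨[], z, rfl, le_rfl⟩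
      | succ j ih =>
        obtain ⟨y, s, h1, h2⟩ := ih
        have hne : M.step^[j] c0 ≠ M.fin := fun h => hn ⟨j, h⟩
        have hne' : M.step^[j + 1] c0 ≠ M.fin := fun h => hn ⟨j + 1, h⟩
        rw [Function.iterate_succ_apply'] at hne' ⊢
        set c := M.step^[j] c0
        obtain ⟨R, hR, x, hx, ha, hb⟩ := M.ex c hne
        have hnm : ¬ Mis (M.enc (M.step c) ++ [M.hash]) (s ++ [M.fl, M.hash]) := by
          intro hm
          apply hc
          refine ⟨R, hR, x, hx, y, s ++ [M.fl, M.hash], ?_, ?_⟩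
          · rw [h1, List.cons_append, ap_cons, ap_append, ha]
            simp [ap]
          · rw [ap_append, hb]
            simpa [ap] using hm
        have hpre : ∃ s', s ++ [M.fl, M.hash] =
            M.enc (M.step c) ++ M.hash :: (s' ++ [M.fl, M.hash]) := by
          rcases (mis_or _ _).resolve_left hnm with ⟨k, hk⟩ | ⟨k, hk⟩
          · have hfl := M.fl_enc _ hne'
            have hp1 : M.enc (M.step c) <+: s ++ [M.fl, M.hash] := ⟨M.hash :: k, by rw [← hk]; simp⟩
            have hp2 : s <+: s ++ [M.fl, M.hash] := ⟨_, rfl⟩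
            rcases pre_total hp1 hp2 with ⟨l, hl⟩ | ⟨l, hl⟩
            · rw [← hl] at hk ⊢
              simp only [List.append_assoc, List.append_cancel_left_eq] at hk ⊢
              cases l with
              | nil =>
                simp only [List.nil_append, List.cons_append, List.cons.injEq] at hk
                exfalso
                apply M.hash_enc M.fin
                rw [M.enc_fin, hk.1]; simp
              | cons b l =>
                simp only [List.nil_append, List.cons_append, List.cons.injEq] at hk
                exact ⟨l, by rw [hk.1]; simp⟩
            · cases l with
              | nil =>
                simp only [List.append_nil] at hl
                rw [← hl] at hk
                simp only [List.append_assoc, List.append_cancel_left_eq] at hk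
                simp only [List.nil_append, List.cons_append, List.cons.injEq] at hk
                exfalso
                apply M.hash_enc M.fin
                rw [M.enc_fin, hk.1]; simp
              | cons b l =>
                exfalso
                rw [← hl] at hk
                simp only [List.append_assoc, List.append_cancel_left_eq] at hk
                simp only [List.cons_append, List.cons.injEq] at hk
                apply hfl
                rw [← hl, hk.1]; simp
          · exfalso
            have hfl := M.fl_enc _ hne'
            have : M.fl ∈ M.enc (M.step c) ++ [M.hash] := by rw [← hk]; simp
            simp only [List.mem_append, List.mem_singleton] at this
            rcases this with h | h
            · exact hfl h
            · apply M.hash_enc M.fin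
              rw [M.enc_fin, h]; simp
        obtain ⟨s', hs'⟩ := hpre
        refine ⟨y ++ M.hash :: M.enc c, s', ?_, ?_⟩
        · rw [h1, hs']; simp
        · simp; omega
    obtain ⟨y, s, h1, h2⟩ := key
      (M.hash :: (M.enc c0 ++ M.hash :: (z ++ [M.fl, M.hash]))).length
    have := congrArg List.length h1
    rw [List.length_append] at this
    simp only [List.length_cons] at this h2
    omega

end Sys
end PRC


namespace PRC

open Turing

/-- Flattened code instructions. -/
inductive Instr (Λ : Type)
  | zero'
  | succ
  | tail
  | cons (f g : Λ)
  | comp (f g : Λ)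
  | case (f g : Λ)
  | fix (f : Λ)

/-- Denotation of an instruction. -/
def Instr.toCode {Λ : Type} (den : Λ → ToPartrec.Code) : Instr Λ → ToPartrec.Code
  | .zero' => .zero'
  | .succ => .succ
  | .tail => .tail
  | .cons f g => .cons (den f) (den g)
  | .comp f g => .comp (den f) (den g)
  | .case f g => .case (den f) (den g)
  | .fix f => .fix (den f)

/-- Relabelling. -/
def Instr.mp {Λ Λ' : Type} (e : Λ → Λ') : Instr Λ → Instr Λ'
  | .zero' => .zero'
  | .succ => .succ
  | .tail => .tail
  | .cons f g => .cons (e f) (e g)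
  | .comp f g => .comp (e f) (e g)
  | .case f g => .case (e f) (e g)
  | .fix f => .fix (e f)

theorem Instr.mp_toCode {Λ Λ' : Type} (e : Λ → Λ') (den : Λ' → ToPartrec.Code) (I : Instr Λ) :
    (I.mp e).toCode den = I.toCode (den ∘ e) := by
  cases I <;> rfl

/-- The property of being flattenable. -/
def Flat (c : ToPartrec.Code) : Prop :=
  ∃ (Λ : Type) (_ : Finite Λ) (instr : Λ → Instr Λ) (den : Λ → ToPartrec.Code) (i0 : Λ),
    den i0 = c ∧ ∀ i, den i = (instr i).toCode den

theorem flat_atom (I : Instr Empty) (c : ToPartrec.Code)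
    (h : I.toCode (fun e => e.elim) = c) : Flat c := by
  refine ⟨Unit, inferInstance, fun _ => I.mp (fun e => e.elim), fun _ => c, (), rfl, fun i => ?_⟩
  rw [Instr.mp_toCode]
  change c = _
  rw [← h]
  exact congrArg (fun d => Instr.toCode d I) (funext fun e => e.elim)

theorem flat_bin (f g c : ToPartrec.Code) (hf : Flat f) (hg : Flat g) (I : Instr Bool)
    (h : I.toCode (fun b => cond b f g) = c) : Flat c := by
  obtain ⟨Λ1, _, in1, d1, i1, h1, h1'⟩ := hf
  obtain ⟨Λ2, _, in2, d2, i2, h2, h2'⟩ := hg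
  refine ⟨Option (Λ1 ⊕ Λ2), inferInstance,
    fun o => match o with
      | none => I.mp (fun b => cond b (some (.inl i1)) (some (.inr i2)))
      | some (.inl i) => (in1 i).mp (fun i => some (.inl i))
      | some (.inr i) => (in2 i).mp (fun i => some (.inr i)),
    fun o => match o with
      | none => c
      | some (.inl i) => d1 i
      | some (.inr i) => d2 i, none, rfl, ?_⟩
  rintro (_ | i | i)
  · simp only [Instr.mp_toCode]
    rw [← h]
    congr 1
    funext b
    cases b <;> simp [h1, h2]
  · simp only [Instr.mp_toCode]
    exact h1' i
  · simp only [Instr.mp_toCode]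
    exact h2' i

theorem flat (c : ToPartrec.Code) : Flat c := by
  induction c with
  | zero' => exact flat_atom .zero' _ rfl
  | succ => exact flat_atom .succ _ rfl
  | tail => exact flat_atom .tail _ rfl
  | cons f g hf hg => exact flat_bin f g _ hf hg (.cons true false) rfl
  | comp f g hf hg => exact flat_bin f g _ hf hg (.comp true false) rfl
  | case f g hf hg => exact flat_bin f g _ hf hg (.case true false) rfl
  | fix f hf => exact flat_bin f f _ hf hf (.fix true) rfl

/-- Continuations. -/
inductive Cont (Λ : Type)
  | halt
  | cons1 (i : Λ) (v : List ℕ) (k : Cont Λ)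
  | cons2 (v : List ℕ) (k : Cont Λ)
  | comp (i : Λ) (k : Cont Λ)
  | fix (i : Λ) (k : Cont Λ)

/-- Configurations. -/
inductive Cfg (Λ : Type)
  | N (i : Λ) (k : Cont Λ) (v : List ℕ)
  | R (k : Cont Λ) (v : List ℕ)
  | F

/-- Step function. -/
def stp {Λ : Type} (instr : Λ → Instr Λ) : Cfg Λ → Cfg Λ
  | .F => .F
  | .N i k v =>
    match instr i with
    | .zero' => .R k (0 :: v)
    | .succ => .R k [v.headI.succ]
    | .tail => .R k v.tail
    | .cons f g => .N f (.cons1 g v k) v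
    | .comp f g => .N g (.comp f k) v
    | .case f g =>
      match v with
      | [] => .N f k []
      | 0 :: t => .N f k t
      | (n + 1) :: t => .N g k (n :: t)
    | .fix f => .N f (.fix i k) v
  | .R k v =>
    match k with
    | .halt => .F
    | .cons1 g w k => .N g (.cons2 v k) w
    | .cons2 w k => .R k (w.headI :: v)
    | .comp f k => .N f k v
    | .fix i k =>
      match v with
      | [] => .R k []
      | 0 :: t => .R k t
      | (_ + 1) :: t => .N i k t

/-- Reachability. -/
def Rch {Λ : Type} (instr : Λ → Instr Λ) (a b : Cfg Λ) : Prop := ∃ n, (stp instr)^[n] a = b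

theorem Rch.trans {Λ : Type} {instr : Λ → Instr Λ} {a b c : Cfg Λ} (h1 : Rch instr a b)
    (h2 : Rch instr b c) : Rch instr a c := by
  obtain ⟨n, rfl⟩ := h1
  obtain ⟨m, rfl⟩ := h2
  exact ⟨m + n, Function.iterate_add_apply _ _ _ _⟩

theorem Rch.head {Λ : Type} {instr : Λ → Instr Λ} {a c : Cfg Λ}
    (h2 : Rch instr (stp instr a) c) : Rch instr a c := by
  obtain ⟨m, rfl⟩ := h2
  exact ⟨m + 1, rfl⟩

theorem Rch.refl {Λ : Type} {instr : Λ → Instr Λ} {a : Cfg Λ} : Rch instr a a := ⟨0, rfl⟩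

theorem eval_rch {Λ : Type} {instr : Λ → Instr Λ} {den : Λ → ToPartrec.Code}
    (hd : ∀ i, den i = (instr i).toCode den) (c : ToPartrec.Code) :
    ∀ i, den i = c → ∀ v v' k, v' ∈ c.eval v → Rch instr (.N i k v) (.R k v') := by
  induction c with
  | zero' =>
    intro i hi v v' k hv
    rw [hd] at hi
    cases h : instr i <;> rw [h] at hi <;> simp [Instr.toCode] at hi
    simp at hv
    subst hv
    exact Rch.head (by simpa [stp, h] using Rch.refl)
  | succ =>
    intro i hi v v' k hv
    rw [hd] at hi
    cases h : instr i <;> rw [h] at hi <;> simp [Instr.toCode] at hi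
    simp at hv
    subst hv
    exact Rch.head (by simpa [stp, h] using Rch.refl)
  | tail =>
    intro i hi v v' k hv
    rw [hd] at hi
    cases h : instr i <;> rw [h] at hi <;> simp [Instr.toCode] at hi
    simp at hv
    subst hv
    exact Rch.head (by simpa [stp, h] using Rch.refl)
  | cons f g hf hg =>
    intro i hi v v' k hv
    rw [hd] at hi
    cases h : instr i <;> rw [h] at hi <;> simp [Instr.toCode] at hi
    rename_i fi gi
    simp at hv
    obtain ⟨n, hn, ns, hns, rfl⟩ := hv
    refine Rch.head ?_
    simp only [stp, h]
    refine (hf fi hi.1 v n _ hn).trans (Rch.head ?_)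
    simp only [stp]
    refine (hg gi hi.2 v ns _ hns).trans (Rch.head ?_)
    exact Rch.refl
  | comp f g hf hg =>
    intro i hi v v' k hv
    rw [hd] at hi
    cases h : instr i <;> rw [h] at hi <;> simp [Instr.toCode] at hi
    rename_i fi gi
    rw [ToPartrec.Code.comp_eval] at hv
    obtain ⟨n, hn, hns⟩ := Part.mem_bind_iff.1 hv
    refine Rch.head ?_
    simp only [stp, h]
    refine (hg gi hi.2 v n _ hn).trans (Rch.head ?_)
    simp only [stp]
    exact hf fi hi.1 _ _ _ hns
  | case f g hf hg =>
    intro i hi v v' k hv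
    rw [hd] at hi
    cases h : instr i <;> rw [h] at hi <;> simp [Instr.toCode] at hi
    rename_i fi gi
    refine Rch.head ?_
    rcases v with _ | ⟨_ | n, t⟩
    · simp only [stp, h]
      exact hf fi hi.1 _ _ _ (by simpa using hv)
    · simp only [stp, h]
      exact hf fi hi.1 _ _ _ (by simpa using hv)
    · simp only [stp, h]
      exact hg gi hi.2 _ _ _ (by simpa using hv)
  | fix f hf =>
    intro i hi v v' k hv
    rw [hd] at hi
    cases h : instr i <;> rw [h] at hi <;> simp [Instr.toCode] at hi
    rename_i fi
    rw [ToPartrec.Code.fix_eval] at hv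
    refine PFun.fixInduction' (C := fun v => Rch instr (.N i k v) (.R k v')) hv ?_ ?_
    · intro a ha
      simp only [Part.mem_map_iff] at ha
      obtain ⟨b, hb, hb'⟩ := ha
      refine Rch.head ?_
      simp only [stp, h]
      refine (hf fi hi a b _ hb).trans (Rch.head ?_)
      rcases b with _ | ⟨_ | n, t⟩ <;> simp at hb' <;> subst hb' <;> exact Rch.refl
    · intro a a' _ ha ih
      simp only [Part.mem_map_iff] at ha
      obtain ⟨b, hb, hb'⟩ := ha
      refine Rch.head ?_
      simp only [stp, h]
      refine (hf fi hi a b _ hb).trans (Rch.head ?_)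
      rcases b with _ | ⟨_ | n, t⟩ <;> simp at hb'
      subst hb'
      exact ih

theorem rch_eval {Λ : Type} {instr : Λ → Instr Λ} {den : Λ → ToPartrec.Code}
    (hd : ∀ i, den i = (instr i).toCode den) (n : ℕ) :
    ∀ i k v, (stp instr)^[n] (.N i k v) = .F →
      ∃ v' ∈ (den i).eval v, ∃ m < n, (stp instr)^[m] (.R k v') = .F := by
  induction n using Nat.strong_induction_on with
  | _ n ih =>
    intro i k v hn
    rcases n with _ | n
    · simp at hn
    rw [Function.iterate_succ_apply] at hn
    cases h : instr i with
    | zero' =>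
      simp only [stp, h] at hn
      exact ⟨_, by rw [hd, h]; simp [Instr.toCode], n, by omega, hn⟩
    | succ =>
      simp only [stp, h] at hn
      exact ⟨_, by rw [hd, h]; simp [Instr.toCode], n, by omega, hn⟩
    | tail =>
      simp only [stp, h] at hn
      exact ⟨_, by rw [hd, h]; simp [Instr.toCode], n, by omega, hn⟩
    | cons f g =>
      simp only [stp, h] at hn
      obtain ⟨v1, hv1, m, hm, h1⟩ := ih n (by omega) _ _ _ hn
      rcases m with _ | m
      · simp at h1
      rw [Function.iterate_succ_apply] at h1
      simp only [stp] at h1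
      obtain ⟨v2, hv2, m', hm', h2⟩ := ih m (by omega) _ _ _ h1
      rcases m' with _ | m'
      · simp at h2
      rw [Function.iterate_succ_apply] at h2
      simp only [stp] at h2
      refine ⟨_, ?_, m', by omega, h2⟩
      rw [hd, h]
      simp only [Instr.toCode, ToPartrec.Code.cons_eval]
      simp
      exact ⟨v1, hv1, hv2, rfl⟩
    | comp f g =>
      simp only [stp, h] at hn
      obtain ⟨v1, hv1, m, hm, h1⟩ := ih n (by omega) _ _ _ hn
      rcases m with _ | m
      · simp at h1
      rw [Function.iterate_succ_apply] at h1
      simp only [stp] at h1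
      obtain ⟨v2, hv2, m', hm', h2⟩ := ih m (by omega) _ _ _ h1
      refine ⟨_, ?_, m', by omega, h2⟩
      rw [hd, h]
      simp only [Instr.toCode, ToPartrec.Code.comp_eval]
      exact Part.mem_bind_iff.2 ⟨v1, hv1, hv2⟩
    | case f g =>
      rcases v with _ | ⟨_ | a, t⟩ <;> simp only [stp, h] at hn <;>
      · obtain ⟨v1, hv1, m, hm, h1⟩ := ih n (by omega) _ _ _ hn
        refine ⟨_, ?_, m, by omega, h1⟩
        rw [hd, h]
        simpa [Instr.toCode] using hv1
    | fix f =>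
      simp only [stp, h] at hn
      obtain ⟨v1, hv1, m, hm, h1⟩ := ih n (by omega) _ _ _ hn
      rcases m with _ | m
      · simp at h1
      rw [Function.iterate_succ_apply] at h1
      have he : ∀ v, (den i).eval v = ((den f).fix).eval v := by
        intro v; rw [hd, h]; rfl
      rcases v1 with _ | ⟨_ | a, t⟩ <;> simp only [stp] at h1
      · refine ⟨_, ?_, m, by omega, h1⟩
        rw [he, ToPartrec.Code.fix_eval]
        refine PFun.mem_fix_iff.2 (Or.inl ?_)
        simp only [Part.mem_map_iff]
        exact ⟨_, hv1, rfl⟩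
      · refine ⟨_, ?_, m, by omega, h1⟩
        rw [he, ToPartrec.Code.fix_eval]
        refine PFun.mem_fix_iff.2 (Or.inl ?_)
        simp only [Part.mem_map_iff]
        exact ⟨_, hv1, rfl⟩
      · obtain ⟨v2, hv2, m', hm', h2⟩ := ih m (by omega) _ _ _ h1
        refine ⟨_, ?_, m', by omega, h2⟩
        rw [he, ToPartrec.Code.fix_eval]
        refine PFun.mem_fix_iff.2 (Or.inr ?_)
        rw [he, ToPartrec.Code.fix_eval] at hv2
        refine ⟨_, ?_, hv2⟩
        simp only [Part.mem_map_iff]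
        exact ⟨_, hv1, rfl⟩

theorem halts_iff {Λ : Type} {instr : Λ → Instr Λ} {den : Λ → ToPartrec.Code}
    (hd : ∀ i, den i = (instr i).toCode den) (i : Λ) (v : List ℕ) :
    (∃ n, (stp instr)^[n] (.N i .halt v) = .F) ↔ ((den i).eval v).Dom := by
  constructor
  · rintro ⟨n, hn⟩
    obtain ⟨v', hv, _⟩ := rch_eval hd n _ _ _ hn
    exact Part.dom_iff_mem.2 ⟨v', hv⟩
  · intro h
    obtain ⟨v', hv⟩ := Part.dom_iff_mem.1 h
    exact (eval_rch hd _ i rfl v v' .halt hv).trans (Rch.head Rch.refl)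

/-- The code for which halting on `[n]` is undecidable. -/
theorem exists_hard : ∃ c : ToPartrec.Code, ¬ ComputablePred fun n : ℕ => (c.eval [n]).Dom := by
  have hp : Partrec fun m : ℕ => Nat.Partrec.Code.eval (Denumerable.ofNat Nat.Partrec.Code m) 0 :=
    Nat.Partrec.Code.eval_part.comp (Computable.ofNat _) (Computable.const 0)
  have hp' : Nat.Partrec' fun v : List.Vector ℕ 1 =>
      Nat.Partrec.Code.eval (Denumerable.ofNat Nat.Partrec.Code v.head) 0 :=
    Nat.Partrec'.part_iff.2 (hp.comp (Primrec.vector_head.to_comp))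
  obtain ⟨c, hc⟩ := ToPartrec.Code.exists_code hp'
  refine ⟨c, fun h => ComputablePred.halting_problem 0 ?_⟩
  have : ∀ m : ℕ, (c.eval [m]).Dom ↔
      (Nat.Partrec.Code.eval (Denumerable.ofNat Nat.Partrec.Code m) 0).Dom := by
    intro m
    have := hc (m ::ᵥ List.Vector.nil)
    have e : (m ::ᵥ List.Vector.nil : List.Vector ℕ 1).1 = [m] := rfl
    rw [e] at this
    rw [this]
    simp
  obtain ⟨f, hf, hfe⟩ := ComputablePred.computable_iff.1 h
  refine ComputablePred.computable_iff.2
    ⟨fun c => f (Encodable.encode c), hf.comp Computable.encode, funext fun d => ?_⟩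
  have h1 := congrFun hfe (Encodable.encode d)
  simp only [this, Denumerable.ofNat_encode] at h1
  exact h1

end PRC


namespace PRC

/-- Letters of configuration words. -/
inductive G0 (Λ : Type)
  | one | comma | bar | hash | R | C2 | H | F
  | N (i : Λ)
  | C1 (i : Λ)
  | CC (i : Λ)
  | CF (i : Λ)

instance {Λ : Type} [Finite Λ] : Finite (G0 Λ) := by
  let f : G0 Λ → Fin 12 × Option Λ := fun
    | .one => (0, none) | .comma => (1, none) | .bar => (2, none) | .hash => (3, none)
    | .R => (4, none) | .C2 => (5, none) | .H => (6, none) | .F => (7, none)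
    | .N i => (8, some i) | .C1 i => (9, some i) | .CC i => (10, some i) | .CF i => (11, some i)
  refine Finite.of_injective f ?_
  intro a b h
  cases a <;> cases b <;> simp_all [f]

variable {Λ : Type}

/-- Encoding of vectors. -/
def encV (v : List ℕ) : List (G0 Λ) := v.flatMap fun n => List.replicate n .one ++ [.comma]

/-- Encoding of continuations. -/
def encK : Cont Λ → List (G0 Λ)
  | .halt => [.H]
  | .cons1 i v k => .C1 i :: (encV v ++ .bar :: encK k)
  | .cons2 v k => .C2 :: (encV v ++ .bar :: encK k)
  | .comp i k => .CC i :: encK k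
  | .fix i k => .CF i :: encK k

/-- Encoding of configurations. -/
def encC : Cfg Λ → List (G0 Λ)
  | .N i k v => .N i :: (encV v ++ .bar :: encK k)
  | .R k v => .R :: (encV v ++ .bar :: encK k)
  | .F => [.F]

/-- Alphabets of the four variables. -/
def alp : Fin 4 → G0 Λ → Prop
  | 0, c => c ≠ .hash
  | 1, c => c = .one ∨ c = .comma
  | 2, c => c = .one ∨ c = .comma
  | 3, c => c = .one

theorem encV_cons (n : ℕ) (v : List ℕ) :
    (encV (n :: v) : List (G0 Λ)) = List.replicate n .one ++ .comma :: encV v := by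
  simp [encV]

theorem encV_zero (v : List ℕ) :
    (encV (0 :: v) : List (G0 Λ)) = .comma :: encV v := by
  simp [encV]

theorem encV_succ (n : ℕ) (v : List ℕ) :
    (encV ((n + 1) :: v) : List (G0 Λ)) = .one :: encV (n :: v) := by
  simp [encV, List.replicate_succ]

theorem encV_nil : (encV [] : List (G0 Λ)) = [] := rfl

theorem encV_alp (v : List ℕ) : ∀ c ∈ (encV v : List (G0 Λ)), c = .one ∨ c = .comma := by
  intro c hc
  simp only [encV, List.mem_flatMap, List.mem_append, List.mem_replicate, List.mem_singleton] at hc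
  tauto

theorem encK_alp (k : Cont Λ) : ∀ c ∈ encK k, c ≠ .hash ∧ c ≠ .F := by
  have hv : ∀ v, ∀ c ∈ (encV v : List (G0 Λ)), c ≠ .hash ∧ c ≠ .F := by
    intro v c hc
    rcases encV_alp v c hc with rfl | rfl <;> simp
  induction k with
  | halt => simp [encK]
  | cons1 i v k ih =>
    intro c hc
    simp only [encK, List.mem_cons, List.mem_append] at hc
    rcases hc with rfl | hc | rfl | hc
    · simp
    · exact hv v c hc
    · simp
    · exact ih c hc
  | cons2 v k ih =>
    intro c hc
    simp only [encK, List.mem_cons, List.mem_append] at hc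
    rcases hc with rfl | hc | rfl | hc
    · simp
    · exact hv v c hc
    · simp
    · exact ih c hc
  | comp i k ih =>
    intro c hc
    simp only [encK, List.mem_cons] at hc
    rcases hc with rfl | hc
    · simp
    · exact ih c hc
  | fix i k ih =>
    intro c hc
    simp only [encK, List.mem_cons] at hc
    rcases hc with rfl | hc
    · simp
    · exact ih c hc

theorem encC_hash (c : Cfg Λ) : G0.hash ∉ encC c := by
  intro h
  cases c with
  | F => simp [encC] at h
  | N i k v =>
    simp only [encC, List.mem_cons, List.mem_append, reduceCtorEq, false_or] at h
    rcases h with h | h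
    · simpa using encV_alp v _ h
    · exact (encK_alp k _ h).1 rfl
  | R k v =>
    simp only [encC, List.mem_cons, List.mem_append, reduceCtorEq, false_or] at h
    rcases h with h | h
    · simpa using encV_alp v _ h
    · exact (encK_alp k _ h).1 rfl

theorem encC_F (c : Cfg Λ) (hc : c ≠ .F) : G0.F ∉ encC c := by
  intro h
  cases c with
  | F => exact hc rfl
  | N i k v =>
    simp only [encC, List.mem_cons, List.mem_append, reduceCtorEq, false_or] at h
    rcases h with h | h
    · simpa using encV_alp v _ h
    · exact (encK_alp k _ h).2 rfl
  | R k v =>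
    simp only [encC, List.mem_cons, List.mem_append, reduceCtorEq, false_or] at h
    rcases h with h | h
    · simpa using encV_alp v _ h
    · exact (encK_alp k _ h).2 rfl

/-- Shorthand for letters in patterns. -/
abbrev lt (a : G0 Λ) : G0 Λ ⊕ Fin 4 := Sum.inl a
/-- Variable for continuations. -/
abbrev vK : G0 Λ ⊕ Fin 4 := Sum.inr 0
/-- First vector variable. -/
abbrev vX : G0 Λ ⊕ Fin 4 := Sum.inr 1
/-- Second vector variable. -/
abbrev vY : G0 Λ ⊕ Fin 4 := Sum.inr 2
/-- Number variable. -/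
abbrev vU : G0 Λ ⊕ Fin 4 := Sum.inr 3

/-- Rules for an instruction. -/
def rulesN (i : Λ) : Instr Λ → List (Pat (G0 Λ) × Pat (G0 Λ))
  | .zero' => [([lt (.N i), vX, lt .bar, vK], [lt .R, lt .comma, vX, lt .bar, vK])]
  | .succ => [([lt (.N i), vU, lt .comma, vX, lt .bar, vK],
        [lt .R, lt .one, vU, lt .comma, lt .bar, vK]),
      ([lt (.N i), lt .bar, vK], [lt .R, lt .one, lt .comma, lt .bar, vK])]
  | .tail => [([lt (.N i), vU, lt .comma, vX, lt .bar, vK], [lt .R, vX, lt .bar, vK]),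
      ([lt (.N i), lt .bar, vK], [lt .R, lt .bar, vK])]
  | .cons f g => [([lt (.N i), vX, lt .bar, vK],
      [lt (.N f), vX, lt .bar, lt (.C1 g), vX, lt .bar, vK])]
  | .comp f g => [([lt (.N i), vX, lt .bar, vK], [lt (.N g), vX, lt .bar, lt (.CC f), vK])]
  | .case f g => [([lt (.N i), lt .comma, vX, lt .bar, vK], [lt (.N f), vX, lt .bar, vK]),
      ([lt (.N i), lt .one, vX, lt .bar, vK], [lt (.N g), vX, lt .bar, vK]),
      ([lt (.N i), lt .bar, vK], [lt (.N f), lt .bar, vK])]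
  | .fix f => [([lt (.N i), vX, lt .bar, vK], [lt (.N f), vX, lt .bar, lt (.CF i), vK])]

/-- Rules in return mode. -/
def rulesR (i : Λ) : List (Pat (G0 Λ) × Pat (G0 Λ)) :=
  [([lt .R, vY, lt .bar, lt (.C1 i), vX, lt .bar, vK],
      [lt (.N i), vX, lt .bar, lt .C2, vY, lt .bar, vK]),
    ([lt .R, vY, lt .bar, lt .C2, vU, lt .comma, vX, lt .bar, vK],
      [lt .R, vU, lt .comma, vY, lt .bar, vK]),
    ([lt .R, vY, lt .bar, lt .C2, lt .bar, vK], [lt .R, lt .comma, vY, lt .bar, vK]),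
    ([lt .R, vY, lt .bar, lt (.CC i), vK], [lt (.N i), vY, lt .bar, vK]),
    ([lt .R, lt .comma, vX, lt .bar, lt (.CF i), vK], [lt .R, vX, lt .bar, vK]),
    ([lt .R, lt .bar, lt (.CF i), vK], [lt .R, lt .bar, vK]),
    ([lt .R, lt .one, vU, lt .comma, vX, lt .bar, lt (.CF i), vK], [lt (.N i), vX, lt .bar, vK]),
    ([lt .R, vX, lt .bar, lt .H], [lt .F])]

theorem invN (i : Λ) (a : List (G0 Λ)) (c : Cfg Λ) (h : .N i :: a = encC c) :
    ∃ k v, c = .N i k v ∧ a = encV v ++ .bar :: encK k := by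
  cases c <;> simp_all [encC]

theorem invR (a : List (G0 Λ)) (c : Cfg Λ) (h : .R :: a = encC c) :
    ∃ k v, c = .R k v ∧ a = encV v ++ .bar :: encK k := by
  cases c <;> simp_all [encC]

theorem invC1 (i : Λ) (a : List (G0 Λ)) (c : Cont Λ) (h : .C1 i :: a = encK c) :
    ∃ v k, c = .cons1 i v k ∧ a = encV v ++ .bar :: encK k := by
  cases c <;> simp_all [encK]

theorem invC2 (a : List (G0 Λ)) (c : Cont Λ) (h : .C2 :: a = encK c) :
    ∃ v k, c = .cons2 v k ∧ a = encV v ++ .bar :: encK k := by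
  cases c <;> simp_all [encK]

theorem invCC (i : Λ) (a : List (G0 Λ)) (c : Cont Λ) (h : .CC i :: a = encK c) :
    ∃ k, c = .comp i k ∧ a = encK k := by
  cases c <;> simp_all [encK]

theorem invCF (i : Λ) (a : List (G0 Λ)) (c : Cont Λ) (h : .CF i :: a = encK c) :
    ∃ k, c = .fix i k ∧ a = encK k := by
  cases c <;> simp_all [encK]

theorem invH (a : List (G0 Λ)) (c : Cont Λ) (h : .H :: a = encK c) : c = .halt := by
  cases c <;> simp_all [encK]

theorem invBar (x a b : List (G0 Λ)) (v : List ℕ) (hx : ∀ c ∈ x, c = .one ∨ c = .comma)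
    (h : x ++ .bar :: a = encV v ++ .bar :: b) : x = encV v ∧ a = b :=
  split_unique .bar _ _ _ _ (fun hb => by simpa using hx _ hb)
    (fun hb => by simpa using encV_alp v _ hb) h

theorem invU (u a : List (G0 Λ)) (v : List ℕ) (hu : ∀ c ∈ u, c = .one)
    (h : u ++ .comma :: a = encV v) :
    ∃ n t, v = n :: t ∧ u = List.replicate n .one ∧ a = encV t := by
  cases v with
  | nil => simp [encV] at h
  | cons n t =>
    rw [encV_cons] at h
    obtain ⟨h1, h2⟩ := split_unique G0.comma u (List.replicate n .one) _ _
      (fun hb => by simpa using hu _ hb) (fun hb => by simp at hb) h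
    exact ⟨n, t, rfl, h1, h2⟩

theorem invOne (a : List (G0 Λ)) (v : List ℕ) (h : .one :: a = encV v) :
    ∃ n t, v = (n + 1) :: t ∧ a = encV (n :: t) := by
  rcases v with _ | ⟨_ | n, t⟩
  · simp [encV] at h
  · simp [encV] at h
  · rw [encV_succ] at h
    exact ⟨n, t, rfl, (List.cons.inj h).2⟩

theorem invComma (a : List (G0 Λ)) (v : List ℕ) (h : .comma :: a = encV v) :
    ∃ t, v = 0 :: t ∧ a = encV t := by
  rcases v with _ | ⟨_ | n, t⟩
  · simp [encV] at h
  · rw [encV_zero] at h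
    exact ⟨t, rfl, (List.cons.inj h).2⟩
  · rw [encV_succ] at h
    simp at h

theorem invNil (v : List ℕ) (h : ([] : List (G0 Λ)) = encV v) : v = [] := by
  rcases v with _ | ⟨n, t⟩
  · rfl
  · simp [encV] at h

/-- The rules as a set. -/
def ruleSet (instr : Λ → Instr Λ) : Set (Pat (G0 Λ) × Pat (G0 Λ)) :=
  {R | ∃ i, R ∈ rulesN i (instr i) ++ rulesR i}

theorem detN (instr : Λ → Instr Λ) (i : Λ) (R : Pat (G0 Λ) × Pat (G0 Λ))
    (hR : R ∈ rulesN i (instr i)) (x : Fin 4 → List (G0 Λ)) (hx : Val alp x) (c : Cfg Λ)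
    (h : ap x R.1 = encC c) : ap x R.2 = encC (stp instr c) := by
  have h1 : ∀ c ∈ x 1, c = .one ∨ c = .comma := hx 1
  have h3 : ∀ c ∈ x 3, c = .one := hx 3
  have h31 : ∀ c ∈ x 3 ++ .comma :: x 1, c = .one ∨ c = .comma := by
    intro c hc
    simp only [List.mem_append, List.mem_cons] at hc
    rcases hc with hc | hc | hc
    · exact Or.inl (h3 c hc)
    · exact Or.inr hc
    · exact h1 c hc
  have hc1 : ∀ c ∈ .comma :: x 1, c = G0.one ∨ c = .comma := by
    intro c hc
    rcases List.mem_cons.1 hc with hc | hc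
    · exact Or.inr hc
    · exact h1 c hc
  have ho1 : ∀ c ∈ .one :: x 1, c = G0.one ∨ c = .comma := by
    intro c hc
    rcases List.mem_cons.1 hc with hc | hc
    · exact Or.inl hc
    · exact h1 c hc
  cases hI : instr i with
  | zero' =>
    simp only [hI, rulesN, List.mem_singleton] at hR
    subst hR
    obtain ⟨k, v, rfl, h5⟩ := invN i _ c (by simpa [ap] using h)
    obtain ⟨ha, hb⟩ := invBar (x 1) _ _ _ h1 (by simpa using h5)
    simp [ap, stp, hI, encC, encV_zero, ha, hb]
  | succ =>
    simp only [hI, rulesN, List.mem_cons, List.not_mem_nil, or_false] at hR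
    rcases hR with rfl | rfl
    · obtain ⟨k, v, rfl, h5⟩ := invN i _ c (by simpa [ap] using h)
      obtain ⟨ha, hb⟩ := invBar (x 3 ++ .comma :: x 1) _ _ _ h31 (by simpa using h5)
      obtain ⟨n, t, rfl, hu, ht⟩ := invU _ _ _ h3 ha
      simp [ap, stp, hI, encC, encV_succ, encV_cons, encV_nil, hu, hb]
    · obtain ⟨k, v, rfl, h5⟩ := invN i _ c (by simpa [ap] using h)
      obtain ⟨ha, hb⟩ := invBar [] _ _ _ (by simp) (by simpa using h5)
      obtain rfl := invNil _ ha
      simp [ap, stp, hI, encC, encV_succ, encV_cons, encV_nil, hb]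
  | tail =>
    simp only [hI, rulesN, List.mem_cons, List.not_mem_nil, or_false] at hR
    rcases hR with rfl | rfl
    · obtain ⟨k, v, rfl, h5⟩ := invN i _ c (by simpa [ap] using h)
      obtain ⟨ha, hb⟩ := invBar (x 3 ++ .comma :: x 1) _ _ _ h31 (by simpa using h5)
      obtain ⟨n, t, rfl, hu, ht⟩ := invU _ _ _ h3 ha
      simp [ap, stp, hI, encC, ht, hb]
    · obtain ⟨k, v, rfl, h5⟩ := invN i _ c (by simpa [ap] using h)
      obtain ⟨ha, hb⟩ := invBar [] _ _ _ (by simp) (by simpa using h5)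
      obtain rfl := invNil _ ha
      simp [ap, stp, hI, encC, encV_nil, hb]
  | cons f g =>
    simp only [hI, rulesN, List.mem_singleton] at hR
    subst hR
    obtain ⟨k, v, rfl, h5⟩ := invN i _ c (by simpa [ap] using h)
    obtain ⟨ha, hb⟩ := invBar (x 1) _ _ _ h1 (by simpa using h5)
    simp [ap, stp, hI, encC, encK, ha, hb]
  | comp f g =>
    simp only [hI, rulesN, List.mem_singleton] at hR
    subst hR
    obtain ⟨k, v, rfl, h5⟩ := invN i _ c (by simpa [ap] using h)
    obtain ⟨ha, hb⟩ := invBar (x 1) _ _ _ h1 (by simpa using h5)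
    simp [ap, stp, hI, encC, encK, ha, hb]
  | case f g =>
    simp only [hI, rulesN, List.mem_cons, List.not_mem_nil, or_false] at hR
    rcases hR with rfl | rfl | rfl
    · obtain ⟨k, v, rfl, h5⟩ := invN i _ c (by simpa [ap] using h)
      obtain ⟨ha, hb⟩ := invBar (.comma :: x 1) _ _ _ hc1 (by simpa using h5)
      obtain ⟨t, rfl, ht⟩ := invComma _ _ ha
      simp [ap, stp, hI, encC, ht, hb]
    · obtain ⟨k, v, rfl, h5⟩ := invN i _ c (by simpa [ap] using h)
      obtain ⟨ha, hb⟩ := invBar (.one :: x 1) _ _ _ ho1 (by simpa using h5)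
      obtain ⟨n, t, rfl, ht⟩ := invOne _ _ ha
      simp [ap, stp, hI, encC, ht, hb]
    · obtain ⟨k, v, rfl, h5⟩ := invN i _ c (by simpa [ap] using h)
      obtain ⟨ha, hb⟩ := invBar [] _ _ _ (by simp) (by simpa using h5)
      obtain rfl := invNil _ ha
      simp [ap, stp, hI, encC, encV_nil, hb]
  | fix f =>
    simp only [hI, rulesN, List.mem_singleton] at hR
    subst hR
    obtain ⟨k, v, rfl, h5⟩ := invN i _ c (by simpa [ap] using h)
    obtain ⟨ha, hb⟩ := invBar (x 1) _ _ _ h1 (by simpa using h5)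
    simp [ap, stp, hI, encC, encK, ha, hb]

theorem detR (instr : Λ → Instr Λ) (i : Λ) (R : Pat (G0 Λ) × Pat (G0 Λ))
    (hR : R ∈ rulesR i) (x : Fin 4 → List (G0 Λ)) (hx : Val alp x) (c : Cfg Λ)
    (h : ap x R.1 = encC c) : ap x R.2 = encC (stp instr c) := by
  have h1 : ∀ c ∈ x 1, c = .one ∨ c = .comma := hx 1
  have h2 : ∀ c ∈ x 2, c = .one ∨ c = .comma := hx 2
  have h3 : ∀ c ∈ x 3, c = .one := hx 3
  have h31 : ∀ c ∈ x 3 ++ .comma :: x 1, c = .one ∨ c = .comma := by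
    intro c hc
    simp only [List.mem_append, List.mem_cons] at hc
    rcases hc with hc | hc | hc
    · exact Or.inl (h3 c hc)
    · exact Or.inr hc
    · exact h1 c hc
  have hc1 : ∀ c ∈ .comma :: x 1, c = G0.one ∨ c = .comma := by
    intro c hc
    rcases List.mem_cons.1 hc with hc | hc
    · exact Or.inr hc
    · exact h1 c hc
  have ho31 : ∀ c ∈ .one :: (x 3 ++ .comma :: x 1), c = G0.one ∨ c = .comma := by
    intro c hc
    rcases List.mem_cons.1 hc with hc | hc
    · exact Or.inl hc
    · exact h31 c hc
  simp only [rulesR, List.mem_cons, List.not_mem_nil, or_false] at hR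
  rcases hR with rfl | rfl | rfl | rfl | rfl | rfl | rfl | rfl
  · obtain ⟨k, v, rfl, h5⟩ := invR _ c (by simpa [ap] using h)
    obtain ⟨ha, hb⟩ := invBar (x 2) _ _ _ h2 (by simpa using h5)
    obtain ⟨w, k, rfl, h6⟩ := invC1 _ _ _ hb
    obtain ⟨hc, hd⟩ := invBar (x 1) _ _ _ h1 (by simpa using h6)
    simp [ap, stp, encC, encK, ha, hc, hd]
  · obtain ⟨k, v, rfl, h5⟩ := invR _ c (by simpa [ap] using h)
    obtain ⟨ha, hb⟩ := invBar (x 2) _ _ _ h2 (by simpa using h5)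
    obtain ⟨w, k, rfl, h6⟩ := invC2 _ _ hb
    obtain ⟨hc, hd⟩ := invBar (x 3 ++ .comma :: x 1) _ _ _ h31 (by simpa using h6)
    obtain ⟨n, t, rfl, hu, ht⟩ := invU _ _ _ h3 hc
    simp [ap, stp, encC, encV_cons, ha, hu, hd]
  · obtain ⟨k, v, rfl, h5⟩ := invR _ c (by simpa [ap] using h)
    obtain ⟨ha, hb⟩ := invBar (x 2) _ _ _ h2 (by simpa using h5)
    obtain ⟨w, k, rfl, h6⟩ := invC2 _ _ hb
    obtain ⟨hc, hd⟩ := invBar [] _ _ _ (by simp) (by simpa using h6)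
    obtain rfl := invNil _ hc
    simp [ap, stp, encC, encV_cons, ha, hd]
  · obtain ⟨k, v, rfl, h5⟩ := invR _ c (by simpa [ap] using h)
    obtain ⟨ha, hb⟩ := invBar (x 2) _ _ _ h2 (by simpa using h5)
    obtain ⟨k, rfl, h6⟩ := invCC _ _ _ hb
    simp [ap, stp, encC, ha, h6]
  · obtain ⟨k, v, rfl, h5⟩ := invR _ c (by simpa [ap] using h)
    obtain ⟨ha, hb⟩ := invBar (.comma :: x 1) _ _ _ hc1 (by simpa using h5)
    obtain ⟨k, rfl, h6⟩ := invCF _ _ _ hb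
    obtain ⟨t, rfl, ht⟩ := invComma _ _ ha
    simp [ap, stp, encC, ht, h6]
  · obtain ⟨k, v, rfl, h5⟩ := invR _ c (by simpa [ap] using h)
    obtain ⟨ha, hb⟩ := invBar [] _ _ _ (by simp) (by simpa using h5)
    obtain ⟨k, rfl, h6⟩ := invCF _ _ _ hb
    obtain rfl := invNil _ ha
    simp [ap, stp, encC, encV_nil, h6]
  · obtain ⟨k, v, rfl, h5⟩ := invR _ c (by simpa [ap] using h)
    obtain ⟨ha, hb⟩ := invBar (.one :: (x 3 ++ .comma :: x 1)) _ _ _ ho31 (by simpa using h5)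
    obtain ⟨k, rfl, h6⟩ := invCF _ _ _ hb
    obtain ⟨n, t, rfl, ht⟩ := invOne _ _ ha
    obtain ⟨n', t', he, hu, ht⟩ := invU _ _ _ h3 ht
    obtain ⟨rfl, rfl⟩ := List.cons.inj he
    simp [ap, stp, encC, ht, h6]
  · obtain ⟨k, v, rfl, h5⟩ := invR _ c (by simpa [ap] using h)
    obtain ⟨ha, hb⟩ := invBar (x 1) _ _ _ h1 (by simpa using h5)
    obtain rfl := invH _ _ hb
    simp [ap, stp, encC]

/-- Existence form for one rule. -/
def Fires (instr : Λ → Instr Λ) (c : Cfg Λ) : Prop :=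
  ∃ R ∈ ruleSet instr, ∃ x, Val alp x ∧ ap x R.1 = encC c

theorem val_mk (k x y u : List (G0 Λ)) (hk : ∀ c ∈ k, c ≠ .hash)
    (hx : ∀ c ∈ x, c = .one ∨ c = .comma) (hy : ∀ c ∈ y, c = .one ∨ c = .comma)
    (hu : ∀ c ∈ u, c = .one) : Val alp ![k, x, y, u] := by
  intro v
  fin_cases v
  · exact hk
  · exact hx
  · exact hy
  · exact hu

theorem firesN (instr : Λ → Instr Λ) (i : Λ) (k : Cont Λ) (v : List ℕ) :
    Fires instr (.N i k v) := by
  have hk : ∀ c ∈ encK k, c ≠ .hash := fun c hc => (encK_alp k c hc).1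
  have hr : ∀ n, ∀ c ∈ List.replicate n (G0.one : G0 Λ), c = .one :=
    fun n c hc => (List.mem_replicate.1 hc).2
  cases hI : instr i with
  | zero' =>
    refine ⟨_, ⟨i, List.mem_append_left _ (by simp only [hI, rulesN]; exact List.mem_cons_self)⟩,
      _, val_mk (encK k) (encV v) [] [] hk (encV_alp v) (by simp) (by simp), ?_⟩
    simp [ap, encC]
  | succ =>
    rcases v with _ | ⟨n, t⟩
    · refine ⟨_, ⟨i, List.mem_append_left _ (by
          simp only [hI, rulesN]; exact List.mem_cons_of_mem _ List.mem_cons_self)⟩,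
        _, val_mk (encK k) [] [] [] hk (by simp) (by simp) (by simp), ?_⟩
      simp [ap, encC, encV_nil]
    · refine ⟨_, ⟨i, List.mem_append_left _ (by simp only [hI, rulesN]; exact List.mem_cons_self)⟩,
        _, val_mk (encK k) (encV t) [] (List.replicate n .one) hk (encV_alp t) (by simp) (hr n), ?_⟩
      simp [ap, encC, encV_cons]
  | tail =>
    rcases v with _ | ⟨n, t⟩
    · refine ⟨_, ⟨i, List.mem_append_left _ (by
          simp only [hI, rulesN]; exact List.mem_cons_of_mem _ List.mem_cons_self)⟩,
        _, val_mk (encK k) [] [] [] hk (by simp) (by simp) (by simp), ?_⟩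
      simp [ap, encC, encV_nil]
    · refine ⟨_, ⟨i, List.mem_append_left _ (by simp only [hI, rulesN]; exact List.mem_cons_self)⟩,
        _, val_mk (encK k) (encV t) [] (List.replicate n .one) hk (encV_alp t) (by simp) (hr n), ?_⟩
      simp [ap, encC, encV_cons]
  | cons f g =>
    refine ⟨_, ⟨i, List.mem_append_left _ (by simp only [hI, rulesN]; exact List.mem_cons_self)⟩,
      _, val_mk (encK k) (encV v) [] [] hk (encV_alp v) (by simp) (by simp), ?_⟩
    simp [ap, encC]
  | comp f g =>
    refine ⟨_, ⟨i, List.mem_append_left _ (by simp only [hI, rulesN]; exact List.mem_cons_self)⟩,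
      _, val_mk (encK k) (encV v) [] [] hk (encV_alp v) (by simp) (by simp), ?_⟩
    simp [ap, encC]
  | case f g =>
    rcases v with _ | ⟨_ | n, t⟩
    · refine ⟨_, ⟨i, List.mem_append_left _ (by
          simp only [hI, rulesN]
          exact List.mem_cons_of_mem _ (List.mem_cons_of_mem _ List.mem_cons_self))⟩,
        _, val_mk (encK k) [] [] [] hk (by simp) (by simp) (by simp), ?_⟩
      simp [ap, encC, encV_nil]
    · refine ⟨_, ⟨i, List.mem_append_left _ (by simp only [hI, rulesN]; exact List.mem_cons_self)⟩,
        _, val_mk (encK k) (encV t) [] [] hk (encV_alp t) (by simp) (by simp), ?_⟩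
      simp [ap, encC, encV_zero]
    · refine ⟨_, ⟨i, List.mem_append_left _ (by
          simp only [hI, rulesN]; exact List.mem_cons_of_mem _ List.mem_cons_self)⟩,
        _, val_mk (encK k) (encV (n :: t)) [] [] hk (encV_alp _) (by simp) (by simp), ?_⟩
      simp [ap, encC, encV_succ]
  | fix f =>
    refine ⟨_, ⟨i, List.mem_append_left _ (by simp only [hI, rulesN]; exact List.mem_cons_self)⟩,
      _, val_mk (encK k) (encV v) [] [] hk (encV_alp v) (by simp) (by simp), ?_⟩
    simp [ap, encC]

theorem rulesR_mem (instr : Λ → Instr Λ) (i : Λ) (j : ℕ) (hj : j < 8) :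
    (rulesR i)[j]'hj ∈ ruleSet instr :=
  ⟨i, List.mem_append_right _ (List.getElem_mem _)⟩

theorem firesR (instr : Λ → Instr Λ) (i0 : Λ) (k : Cont Λ) (v : List ℕ) :
    Fires instr (.R k v) := by
  have hK : ∀ k : Cont Λ, ∀ c ∈ encK k, c ≠ .hash := fun k c hc => (encK_alp k c hc).1
  have hr : ∀ n, ∀ c ∈ List.replicate n (G0.one : G0 Λ), c = .one :=
    fun n c hc => (List.mem_replicate.1 hc).2
  cases k with
  | halt =>
    refine ⟨_, rulesR_mem instr i0 7 (by omega), _, val_mk [] (encV v) [] [] (by simp)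
      (encV_alp v) (by simp) (by simp), ?_⟩
    simp [rulesR, ap, encC, encK]
  | cons1 i w k =>
    refine ⟨_, rulesR_mem instr i 0 (by omega), _, val_mk (encK k) (encV w) (encV v) [] (hK k)
      (encV_alp w) (encV_alp v) (by simp), ?_⟩
    simp [rulesR, ap, encC, encK]
  | cons2 w k =>
    rcases w with _ | ⟨n, t⟩
    · refine ⟨_, rulesR_mem instr i0 2 (by omega), _, val_mk (encK k) [] (encV v) [] (hK k)
        (by simp) (encV_alp v) (by simp), ?_⟩
      simp [rulesR, ap, encC, encK, encV_nil]
    · refine ⟨_, rulesR_mem instr i0 1 (by omega), _, val_mk (encK k) (encV t) (encV v)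
        (List.replicate n .one) (hK k) (encV_alp t) (encV_alp v) (hr n), ?_⟩
      simp [rulesR, ap, encC, encK, encV_cons]
  | comp i k =>
    refine ⟨_, rulesR_mem instr i 3 (by omega), _, val_mk (encK k) [] (encV v) [] (hK k)
      (by simp) (encV_alp v) (by simp), ?_⟩
    simp [rulesR, ap, encC, encK]
  | fix i k =>
    rcases v with _ | ⟨_ | n, t⟩
    · refine ⟨_, rulesR_mem instr i 5 (by omega), _, val_mk (encK k) [] [] [] (hK k)
        (by simp) (by simp) (by simp), ?_⟩
      simp [rulesR, ap, encC, encK, encV_nil]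
    · refine ⟨_, rulesR_mem instr i 4 (by omega), _, val_mk (encK k) (encV t) [] [] (hK k)
        (encV_alp t) (by simp) (by simp), ?_⟩
      simp [rulesR, ap, encC, encK, encV_zero]
    · refine ⟨_, rulesR_mem instr i 6 (by omega), _, val_mk (encK k) (encV t) []
        (List.replicate n .one) (hK k) (encV_alp t) (by simp) (hr n), ?_⟩
      simp [rulesR, ap, encC, encK, encV_cons, List.replicate_succ]

theorem detAll (instr : Λ → Instr Λ) (R : Pat (G0 Λ) × Pat (G0 Λ))
    (hR : R ∈ ruleSet instr) (x : Fin 4 → List (G0 Λ)) (hx : Val alp x) (c : Cfg Λ)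
    (h : ap x R.1 = encC c) : ap x R.2 = encC (stp instr c) := by
  obtain ⟨i, hi⟩ := hR
  rcases List.mem_append.1 hi with hi | hi
  · exact detN instr i R hi x hx c h
  · exact detR instr i R hi x hx c h

theorem hash_ap (x : Fin 4 → List (G0 Λ)) (hx : Val alp x) (P : Pat (G0 Λ))
    (hP : Sum.inl G0.hash ∉ P) : G0.hash ∉ ap x P := by
  intro h
  simp only [ap, List.mem_flatMap] at h
  obtain ⟨a | v, ha, h⟩ := h
  · simp only [Sum.elim_inl, List.mem_singleton] at h
    subst h
    exact hP ha
  · have := hx v _ h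
    fin_cases v <;> simp [alp] at this

/-- The system of a flattened program. -/
def mkSys (instr : Λ → Instr Λ) (i0 : Λ) : Sys (G0 Λ) (Cfg Λ) where
  S := alp
  step := stp instr
  enc := encC
  fin := .F
  hash := .hash
  fl := .F
  rules := ruleSet instr
  hash_enc := encC_hash
  enc_fin := rfl
  fl_enc := encC_F
  ex := by
    intro c hc
    have : Fires instr c := by
      cases c with
      | F => exact absurd rfl hc
      | N i k v => exact firesN instr i k v
      | R k v => exact firesR instr i0 k v
    obtain ⟨R, hR, x, hx, h⟩ := this
    exact ⟨R, hR, x, hx, h, detAll instr R hR x hx c h⟩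
  det := detAll instr
  hash_lhs := by
    rintro R ⟨i, hi⟩ x hx
    refine hash_ap x hx _ ?_
    rcases List.mem_append.1 hi with hi | hi
    · cases hI : instr i <;> simp only [hI, rulesN, List.mem_cons, List.not_mem_nil, or_false] at hi
      all_goals first
        | (subst hi; simp)
        | (rcases hi with rfl | rfl <;> simp)
        | (rcases hi with rfl | rfl | rfl <;> simp)
    · simp only [rulesR, List.mem_cons, List.not_mem_nil, or_false] at hi
      rcases hi with rfl | rfl | rfl | rfl | rfl | rfl | rfl | rfl <;> simp

theorem dfb_errAll [Finite Λ] (instr : Λ → Instr Λ) (i0 : Λ) : Dfb (mkSys instr i0).ErrAll := by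
  have := dfb_exists (ι := Λ) _ fun i => dfb_list (rulesN i (instr i) ++ rulesR i) _ fun R _ =>
    dfb_err (Γ := G0 Λ) alp (Sum.inl G0.hash :: R.1 ++ [Sum.inl G0.hash]) (R.2 ++ [Sum.inl G0.hash])
  convert this using 1
  ext w
  constructor
  · rintro ⟨R, ⟨i, hi⟩, hw⟩
    exact ⟨i, R, hi, hw⟩
  · rintro ⟨i, R, hi, hw⟩
    exact ⟨R, ⟨i, hi⟩, hw⟩

end PRC


namespace PRC

theorem lang_eq {σ : Type} (p : List ℕ) (r : ℕ → RegularExpression σ) :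
    LangNE (p.map Sum.inr) (constraintOf (p.map fun x => (x, r x))) = Lang p r := by
  have hl : ∀ (p : List ℕ) x, x ∈ p → (p.map fun x => (x, r x)).lookup x = some (r x) := by
    intro p x hx
    induction p with
    | nil => simp at hx
    | cons y p ih =>
      by_cases h : x = y
      · subst h; simp
      · have : (x == y) = false := by simpa using h
        simp only [List.map_cons, List.lookup_cons, this]
        exact ih (by simpa [h] using hx)
  have hc : ∀ x ∈ p, constraintOf (p.map fun x => (x, r x)) x = (r x).matches' := by
    intro x hx
    simp only [constraintOf, hl p x hx]
    rfl
  have ha : ∀ (s : ℕ → List σ) (p : List ℕ), applySub s (p.map Sum.inr) = p.flatMap s := by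
    intro s p
    induction p with
    | nil => rfl
    | cons x p ih => simp [applySub, ih]
  have hv : ∀ x, x ∈ varsOf (p.map Sum.inr : Pattern σ) ↔ x ∈ p := by
    intro x
    simp [varsOf]
  ext w
  constructor
  · rintro ⟨s, h1, h2, rfl⟩
    refine ⟨s, fun x hx => ⟨?_, h2 x ((hv x).2 hx)⟩, (ha s p).symm⟩
    have := h1 x ((hv x).2 hx)
    rwa [hc x hx] at this
  · rintro ⟨s, h1, rfl⟩
    refine ⟨s, fun x hx => ?_, fun x hx => (h1 x ((hv x).1 hx)).2, ha s p⟩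
    rw [hc x ((hv x).1 hx)]
    exact (h1 x ((hv x).1 hx)).1

theorem flatMap_inj {Γ Δ : Type} (i : Γ → ℕ) (hi : Function.Injective i) (a b : Δ) (hab : a ≠ b) :
    Function.Injective fun w : List Γ => w.flatMap fun c => List.replicate (i c) a ++ [b] := by
  intro w
  induction w with
  | nil =>
    intro v h
    cases v with
    | nil => rfl
    | cons d v => simp at h
  | cons c w ih =>
    intro v h
    cases v with
    | nil => simp at h
    | cons d v =>
      simp only [List.flatMap_cons, List.append_assoc, List.singleton_append] at h
      obtain ⟨h1, h2⟩ := split_unique b _ _ _ _ (fun hb => hab (List.mem_replicate.1 hb).2.symm)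
        (fun hb => hab (List.mem_replicate.1 hb).2.symm) h
      have h3 := congrArg List.length h1
      simp only [List.length_replicate] at h3
      rw [hi h3, ih h2]

/-- Unary powers. -/
def pw {Γ : Type} (a : Γ) : ℕ → RegularExpression Γ
  | 0 => .epsilon
  | n + 1 => .comp (.char a) (pw a n)

theorem mem_pw {Γ : Type} (a : Γ) (n : ℕ) (v : List Γ) :
    v ∈ (pw a n).matches' ↔ v = List.replicate n a := by
  have : pw a n = wordRE (List.replicate n a) := by
    induction n with
    | zero => rfl
    | succ n ih => rw [pw, ih]; rfl
  rw [this, mem_wordRE]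

/-- Candidate histories. -/
def cand {Λ : Type} (i0 : Λ) (un : RegularExpression (G0 Λ)) (n : ℕ) : RegularExpression (G0 Λ) :=
  .comp (wordRE [.hash, .N i0]) (.comp (pw .one n)
    (.comp (wordRE [.comma, .bar, .H, .hash]) (.comp un (wordRE [.F, .hash]))))

theorem mem_comp {Γ : Type} (e f : RegularExpression Γ) (v : List Γ) :
    v ∈ (RegularExpression.comp e f).matches' ↔ ∃ a ∈ e.matches', ∃ b ∈ f.matches', a ++ b = v := by
  rw [RegularExpression.comp_def, RegularExpression.matches'_mul, Language.mem_mul]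

theorem mem_cand {Λ : Type} (i0 : Λ) (un : RegularExpression (G0 Λ)) (hun : ∀ w, w ∈ un.matches')
    (n : ℕ) (v : List (G0 Λ)) : v ∈ (cand i0 un n).matches' ↔
      ∃ z, v = .hash :: (encC (.N i0 .halt [n]) ++ .hash :: (z ++ [.F, .hash])) := by
  simp only [cand, mem_comp, mem_wordRE, mem_pw]
  constructor
  · rintro ⟨_, rfl, _, ⟨_, rfl, _, ⟨_, rfl, _, ⟨z, _, _, rfl, rfl⟩, rfl⟩, rfl⟩, rfl⟩
    exact ⟨z, by simp [encC, encK, encV]⟩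
  · rintro ⟨z, rfl⟩
    exact ⟨_, rfl, _, ⟨_, rfl, _, ⟨_, rfl, _, ⟨z, hun z, _, rfl, rfl⟩, rfl⟩, rfl⟩,
      by simp [encC, encK, encV]⟩

instance {Γ : Type} [Finite Γ] : Finite (G1 Γ) := by
  let f : G1 Γ → Fin 4 × Option Γ := fun
    | .base g => (0, some g) | .sep => (1, none) | .dum => (2, none) | .str => (3, none)
  refine Finite.of_injective f ?_
  intro a b h
  cases a <;> cases b <;> simp_all [f]

theorem core (σ : Type) [Encodable σ] (a b : σ) (hab : a ≠ b) :
    ∃ (ρ : ℕ → RegularExpression σ) (p : List ℕ) (rb : RegConstraint σ),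
      Primrec (fun n => encRE (ρ n)) ∧
      ¬ ComputablePred fun n : ℕ => LangNE ([0].map Sum.inr) (constraintOf [(0, ρ n)]) ⊆
        LangNE (p.map Sum.inr) (constraintOf rb) := by
  obtain ⟨c, hc⟩ := exists_hard
  obtain ⟨Λ, _, instr, den, i0, hi0, hd⟩ := flat c
  obtain ⟨A, B, p, r, hg⟩ := gadget _ (dfb_errAll instr i0)
  obtain ⟨un, hun⟩ := exists_alph (fun _ : G0 Λ => True)
  obtain ⟨i, hi⟩ := exists_injective_nat (G1 (G0 Λ))
  let h : G1 (G0 Λ) → List σ := fun c => List.replicate (i c) a ++ [b]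
  have hinj : Function.Injective fun w : List (G1 (G0 Λ)) => w.flatMap h := flatMap_inj i hi a b hab
  have hne : ∀ c, h c ≠ [] := fun c => by simp [h]
  let ρ : ℕ → RegularExpression σ := fun n =>
    subRE h (A * (cand i0 un n).map G1.base * B)
  refine ⟨ρ, p, p.map fun x => (x, subRE h (r x)), ?_, ?_⟩
  · let E : ℕ → ℕ := fun n => encRE (subRE h ((pw G0.one n).map G1.base))
    have hE : Primrec E := by
      have hE2 : ∀ n, E (n + 1) = Nat.pair 4 (Nat.pair (encRE (wordRE (h (.base .one)))) (E n)) :=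
        fun n => rfl
      have : Primrec fun n => Nat.rec (motive := fun _ => ℕ) (E 0)
          (fun _ y => Nat.pair 4 (Nat.pair (encRE (wordRE (h (.base .one)))) y)) n := by
        refine Primrec.nat_rec₁ (f := fun _ y =>
          Nat.pair 4 (Nat.pair (encRE (wordRE (h (.base .one)))) y)) (E 0) ?_
        exact (Primrec₂.natPair.comp (Primrec.const _)
          (Primrec₂.natPair.comp (Primrec.const _) Primrec.snd)).to₂
      refine this.of_eq fun n => ?_
      induction n with
      | zero => rfl
      | succ n ih => rw [hE2, ← ih]
    have hr : ∀ n, encRE (ρ n) = Nat.pair 4 (Nat.pair (Nat.pair 4 (Nat.pair (encRE (subRE h A))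
        (Nat.pair 4 (Nat.pair (encRE (subRE h ((wordRE [.hash, .N i0]).map G1.base)))
          (Nat.pair 4 (Nat.pair (E n)
            (encRE (subRE h ((RegularExpression.comp (wordRE [.comma, .bar, .H, .hash])
              (.comp un (wordRE [.F, .hash]))).map G1.base)))))))))
        (encRE (subRE h B))) := fun n => rfl
    have hk : ∀ (k : ℕ) (f : ℕ → ℕ), Primrec f → Primrec fun n => Nat.pair k (f n) :=
      fun k f hf => Primrec₂.natPair.comp (Primrec.const k) hf
    have hk' : ∀ (k : ℕ) (f : ℕ → ℕ), Primrec f → Primrec fun n => Nat.pair (f n) k :=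
      fun k f hf => Primrec₂.natPair.comp hf (Primrec.const k)
    simp only [hr]
    exact hk _ _ (hk' _ _ (hk _ _ (hk _ _ (hk _ _ (hk _ _ (hk _ _ (hk' _ _ hE)))))))
  · intro hcomp
    apply hc
    have hcompl := hcomp.not
    refine hcompl.of_eq fun n => ?_
    rw [← hi0, ← halts_iff hd]
    have hm := (mkSys instr i0).main (.N i0 .halt [n]) (by simp [mkSys])
    have e1 : LangNE ([0].map Sum.inr) (constraintOf [(0, ρ n)]) = Lang [0] (fun _ => ρ n) :=
      lang_eq [0] (fun _ => ρ n)
    rw [e1, lang_eq p (fun x => subRE h (r x))]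
    rw [not_iff_comm]
    refine hm.symm.trans ?_
    have hne' : [] ∉ (ρ n).matches' := by
      intro h0
      obtain ⟨w, hw, hw0⟩ := (mem_subRE _ _ _).1 h0
      have : w = [] := hinj hw0.symm
      subst this
      rw [RegularExpression.matches'_mul, RegularExpression.matches'_mul, Language.mem_mul] at hw
      obtain ⟨x, hx, y, hy, hxy⟩ := hw
      rw [Language.mem_mul] at hx
      obtain ⟨x1, hx1, x2, hx2, rfl⟩ := hx
      simp only [List.append_eq_nil_iff] at hxy
      rw [RegularExpression.matches'_map, hxy.1.2] at hx2
      obtain ⟨t, ht, ht0⟩ := hx2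
      obtain ⟨z, rfl⟩ := (mem_cand i0 un (fun w => (hun w).2 (by simp)) n t).1 ht
      simp at ht0
    have e2 : Lang [0] (fun _ => ρ n) ⊆ Lang p (fun x => subRE h (r x)) ↔
        ∀ v ∈ (A * (cand i0 un n).map G1.base * B).matches', v ∈ Lang p r := by
      constructor
      · intro hs v hv
        have hv2 : v.flatMap h ∈ (ρ n).matches' := (mem_subRE _ _ _).2 ⟨v, hv, rfl⟩
        have := hs (a := v.flatMap h) ⟨fun _ => v.flatMap h, fun _ _ =>
          ⟨hv2, fun h0 => hne' (h0 ▸ hv2)⟩, by simp⟩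
        obtain ⟨w, hw, hw2⟩ := (lang_sub h hne p r _).1 this
        rwa [hinj hw2]
      · rintro hs _ ⟨s, hs1, rfl⟩
        obtain ⟨v, hv, hv2⟩ := (mem_subRE _ _ _).1 (hs1 0 (by simp)).1
        exact (lang_sub h hne p r _).2 ⟨v, hs v hv, by simpa using hv2⟩
    rw [e2, hg]
    constructor
    · intro h1 w hw
      obtain ⟨z, rfl⟩ := (mem_cand i0 un (fun w => (hun w).2 (by simp)) n w).1 hw
      exact h1 z
    · intro h1 z
      exact h1 _ ((mem_cand i0 un (fun w => (hun w).2 (by simp)) n _).2 ⟨z, rfl⟩)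

end PRC

/-- The inclusion problem for non-erasing pattern languages with regular constraints is
undecidable for every finite alphabet of size at least 2, also when restricted to
terminal-free patterns. -/
theorem inclusion_NEPatternRegConstraints_undecidable
    (σ : Type) [Fintype σ] [Encodable σ] (hcard : 2 ≤ Fintype.card σ) :
    (¬ ∃ f : ℕ → Bool, Computable f ∧
      ∀ inp : (Pattern σ × RegConstraint σ) × (Pattern σ × RegConstraint σ),
        (f (encodeInput inp) = true ↔
          LangNE inp.1.1 (constraintOf inp.1.2) ⊆ LangNE inp.2.1 (constraintOf inp.2.2))) ∧
    (¬ ∃ f : ℕ → Bool, Computable f ∧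
      ∀ inp : (TFPattern × RegConstraint σ) × (TFPattern × RegConstraint σ),
        (f (encodeTFInput inp) = true ↔
          LangNE (inp.1.1.map Sum.inr) (constraintOf inp.1.2) ⊆
            LangNE (inp.2.1.map Sum.inr) (constraintOf inp.2.2))) := by
  obtain ⟨a, b, hab⟩ := Fintype.one_lt_card_iff.1 (by omega : 1 < Fintype.card σ)
  obtain ⟨ρ, p, rb, hE, hn⟩ := PRC.core σ a b hab
  have hP : ∀ k l : ℕ, Computable fun n =>
      Nat.pair (Nat.pair k (Nat.succ (Nat.pair (Nat.pair 0 (encRE (ρ n))) 0))) l := by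
    intro k l
    refine Primrec.to_comp ?_
    exact Primrec₂.natPair.comp (Primrec₂.natPair.comp (Primrec.const _)
      (Primrec.succ.comp (Primrec₂.natPair.comp
        (Primrec₂.natPair.comp (Primrec.const _) hE) (Primrec.const _)))) (Primrec.const _)
  constructor
  · rintro ⟨f, hf, h⟩
    apply hn
    refine ComputablePred.computable_iff.2 ⟨fun n => f (encodeInput (([0].map Sum.inr, [(0, ρ n)]),
      (p.map Sum.inr, rb))), ?_, funext fun n =>
        propext (h (([0].map Sum.inr, [(0, ρ n)]), (p.map Sum.inr, rb))).symm⟩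
    exact hf.comp ((hP (Encodable.encode ([0].map Sum.inr : Pattern σ)) (Encodable.encode
      ((p.map Sum.inr : Pattern σ), rb.map fun q => (q.1, encRE q.2)))).of_eq fun n => by
        simp [encodeInput])
  · rintro ⟨f, hf, h⟩
    apply hn
    refine ComputablePred.computable_iff.2 ⟨fun n => f (encodeTFInput (([0], [(0, ρ n)]),
      (p, rb))), ?_, funext fun n =>
        propext (h (([0], [(0, ρ n)]), (p, rb))).symm⟩
    exact hf.comp ((hP (Encodable.encode [0]) (Encodable.encode
      (p, rb.map fun q => (q.1, encRE q.2)))).of_eq fun n => by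
        simp [encodeTFInput])
end
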